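/- arXiv:2205.05210 — 5 statements merged into one kernel-verified Lean document; each statement's English description precedes it below -/
import Mathlib

section
/- Let λ > 0, θ > 0, and −1 < α < 1, −1 < β < 1. The Hilbert-type operator H_λ, which sends an entire function f(z) = Σ_{k≥0} a_k z^k to H_λ(f)(z) = Σ_{n≥0} [ (1/√(n!)) Σ_{k≥0} a_k √(k!) / ((k+n)^λ + 1) ] z^n, is bounded from F²_{θ,α} to F²_{θ,β} — that is, there exists a constant C > 0 such that for every sequence a : ℕ → ℂ with Σ_{k≥0} (k+θ)^α |a_k|² k! < ∞ one has Σ_{n≥0} (n+θ)^β | Σ_{k≥0} a_k √(k!) / ((k+n)^λ + 1) |² ≤ C · Σ_{k≥0} (k+θ)^α |a_k|² k! — if and only if λ ≥ 1 + (β−α)/2. -/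
/-!
With `c k = a k * √(k!)`, the question is whether the matrix `1 / ((k + n) ^ lam + 1)` maps the
`ℓ²` space with weight `(k + θ) ^ α` boundedly to the one with weight `(n + θ) ^ β`.

*Sufficiency.* Put `q = 1 + (β - α) / 2 > 0`, `x = k + θ`, `y = n + θ`. If `q ≤ lam`, the matrix is
dominated by a multiple of `(x + y) ^ (-q)` (`kernel_le`). After the weights are absorbed this is a
kernel homogeneous of degree `-1`, and the Schur test with weights `x ^ (-1/2)`, `y ^ (-1/2)`
applies. Both sums it requires have the form
`∑ₖ (x + y) ^ (-q) * x ^ (s - 1) ≤ D * y ^ (s - q)` with `0 < s < q` (`schur_sum`), for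
`s = (1 - α) / 2` and `s = (1 + β) / 2`; this is where `α < 1` and `-1 < β` enter.

*Necessity.* The indicator of `[N, 2N)` has image of size `N ^ (1 - lam)` on `[N, 2N)`, and
comparing norms forces `β + 2 - 2 * lam - α ≤ 0`. However, for small `lam` the outer series of a
nonnegative test sequence diverges, and its `tsum` is then `0`, so the hypothesis is empty there.
Sequences with `∑ c k = 0` avoid this: their images are `O(n ^ (-lam - 1))`, which is square
summable against `n ^ β` since `β < 1` (`finite_test`). The mass `N` of the block is therefore
cancelled by a block of height `-1 / L` on `[LN, 2LN)`. For a large fixed `L` this changes the image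
on `[N, 2N)` by at most a fixed fraction and, as `α < 1`, costs no more norm than the first block.
-/

/-! ### Power sums and the Schur weights -/

/-- A Bernoulli-type inequality valid for every exponent `s > 0`; it follows from
`exp u ≥ 1 + u` and `log ((x + 1) / x) ≥ 1 / (x + 1)`. It makes `(k + θ) ^ s` and
`(k + θ) ^ (-s)` telescoping majorants for the two power sums below. -/
lemma rpow_add_one_ge {x s : ℝ} (hx : 0 < x) (hs : 0 < s) :
    x ^ s * (1 + s / (x + 1)) ≤ (x + 1) ^ s := by
  have h1 : x + 1 = x * ((x + 1) / x) := by field_simp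
  have h2 : 0 < (x + 1) / x := by positivity
  have h3 : 1 / (x + 1) ≤ Real.log ((x + 1) / x) := by
    have := Real.one_sub_inv_le_log_of_pos h2
    have h4 : 1 - ((x + 1) / x)⁻¹ = 1 / (x + 1) := by field_simp; ring
    linarith
  have h5 : 1 + s / (x + 1) ≤ ((x + 1) / x) ^ s := by
    rw [Real.rpow_def_of_pos h2]
    have := Real.add_one_le_exp (Real.log ((x + 1) / x) * s)
    have h6 : s / (x + 1) = 1 / (x + 1) * s := by ring
    nlinarith
  calc x ^ s * (1 + s / (x + 1)) ≤ x ^ s * ((x + 1) / x) ^ s := by gcongr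
    _ = (x + 1) ^ s := by rw [← Real.mul_rpow hx.le h2.le, ← h1]

lemma sum_rpow_head {θ s : ℝ} (hθ : 0 < θ) (hs : 0 < s) (n : ℕ) :
    ∑ k ∈ Finset.range n, ((k : ℝ) + θ) ^ (s - 1) ≤ (1 + 1 / θ) / s * ((n : ℝ) + θ) ^ s := by
  induction n with
  | zero => simp; positivity
  | succ n ih =>
    rw [Finset.sum_range_succ]
    have hx : 0 < (n : ℝ) + θ := by positivity
    have h := rpow_add_one_ge hx hs
    have e : ((n + 1 : ℕ) : ℝ) + θ = (n : ℝ) + θ + 1 := by push_cast; ring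
    rw [e]
    have hxθ : θ ≤ (n : ℝ) + θ := by linarith [(Nat.cast_nonneg n : (0 : ℝ) ≤ n)]
    set x := (n : ℝ) + θ
    rw [Real.rpow_sub_one hx.ne']
    have h1 : 1 ≤ (1 + 1 / θ) * (x / (x + 1)) := by
      rw [show (1 + 1 / θ) * (x / (x + 1)) = ((θ + 1) * x) / (θ * (x + 1)) by field_simp,
        le_div_iff₀ (by positivity)]
      nlinarith
    have h2 : x ^ s / x ≤ (1 + 1 / θ) / s * (x ^ s * (s / (x + 1))) := by
      calc x ^ s / x = x ^ s / x * 1 := by ring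
        _ ≤ x ^ s / x * ((1 + 1 / θ) * (x / (x + 1))) := by gcongr
        _ = _ := by field_simp
    calc _ ≤ (1 + 1 / θ) / s * x ^ s + (1 + 1 / θ) / s * (x ^ s * (s / (x + 1))) := add_le_add ih h2
      _ = (1 + 1 / θ) / s * (x ^ s * (1 + s / (x + 1))) := by ring
      _ ≤ _ := by gcongr

lemma sum_rpow_tail {θ t : ℝ} (hθ : 0 < θ) (ht : 0 < t) (n m : ℕ) :
    ∑ j ∈ Finset.range m, (((n + j : ℕ) : ℝ) + θ) ^ (-t - 1) ≤
      (1 + 1 / θ) ^ (t + 1) / t * ((n : ℝ) + θ) ^ (-t) := by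
  suffices h : ∑ j ∈ Finset.range m, (((n + j : ℕ) : ℝ) + θ) ^ (-t - 1) ≤
      (1 + 1 / θ) ^ (t + 1) / t * (((n : ℝ) + θ) ^ (-t) - (((n + m : ℕ) : ℝ) + θ) ^ (-t)) by
    refine h.trans ?_
    gcongr
    have : 0 ≤ (((n + m : ℕ) : ℝ) + θ) ^ (-t) := by positivity
    linarith
  induction m with
  | zero => simp
  | succ m ih =>
    rw [Finset.sum_range_succ]
    have hx : 0 < ((n + m : ℕ) : ℝ) + θ := by positivity
    have h := rpow_add_one_ge hx ht
    have e : ((n + (m + 1) : ℕ) : ℝ) + θ = ((n + m : ℕ) : ℝ) + θ + 1 := by push_cast; ring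
    rw [e]
    have hxθ : θ ≤ ((n + m : ℕ) : ℝ) + θ := by
      linarith [(Nat.cast_nonneg (n + m) : (0 : ℝ) ≤ (n + m : ℕ))]
    set x := ((n + m : ℕ) : ℝ) + θ
    have hx1 : 0 < x + 1 := by linarith
    have h1 : (x + 1) ^ (t + 1) ≤ (1 + 1 / θ) ^ (t + 1) * x ^ (t + 1) := by
      rw [← Real.mul_rpow (by positivity) hx.le]
      gcongr
      have : 1 ≤ 1 / θ * x := by rw [one_div, inv_mul_eq_div, le_div_iff₀ hθ]; linarith
      linarith
    have h2 : t * (x + 1) ^ (-t - 1) ≤ x ^ (-t) - (x + 1) ^ (-t) := by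
      rw [Real.rpow_sub_one hx1.ne', Real.rpow_neg hx.le, Real.rpow_neg hx1.le]
      have p1 : 0 < x ^ t := by positivity
      have p2 : 0 < (x + 1) ^ t := by positivity
      have h3 : ((x + 1) ^ t)⁻¹ * (1 + t / (x + 1)) ≤ (x ^ t)⁻¹ := by
        rw [inv_mul_eq_div, div_le_iff₀ p2, inv_mul_eq_div, le_div_iff₀ p1]
        linarith
      have : t * (((x + 1) ^ t)⁻¹ / (x + 1)) = ((x + 1) ^ t)⁻¹ * (t / (x + 1)) := by ring
      linarith
    have h3 : x ^ (-t - 1) ≤ (1 + 1 / θ) ^ (t + 1) * (x + 1) ^ (-t - 1) := by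
      rw [show -t - 1 = -(t + 1) by ring, Real.rpow_neg hx.le, Real.rpow_neg hx1.le,
        ← div_eq_mul_inv, le_div_iff₀ (by positivity), inv_mul_eq_div,
        div_le_iff₀ (by positivity)]
      exact h1
    have h4 : x ^ (-t - 1) ≤ (1 + 1 / θ) ^ (t + 1) / t * (x ^ (-t) - (x + 1) ^ (-t)) := by
      calc _ ≤ (1 + 1 / θ) ^ (t + 1) * (x + 1) ^ (-t - 1) := h3
        _ = (1 + 1 / θ) ^ (t + 1) / t * (t * (x + 1) ^ (-t - 1)) := by field_simp
        _ ≤ _ := by gcongr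
    linarith

/-- The column sums in the Schur test. The sum is split at `k = n`: the factor
`(k + θ + (n + θ)) ^ (-q)` is at most `(n + θ) ^ (-q)` below that index and at most
`(k + θ) ^ (-q)` above it. -/
lemma schur_sum {θ s q : ℝ} (hθ : 0 < θ) (hs : 0 < s) (hq : s < q) :
    ∃ D : ℝ, 0 < D ∧ ∀ n M : ℕ,
      ∑ k ∈ Finset.range M, ((k : ℝ) + θ + (n + θ)) ^ (-q) * ((k : ℝ) + θ) ^ (s - 1) ≤
        D * ((n : ℝ) + θ) ^ (s - q) := by
  refine ⟨(1 + 1 / θ) / s + (1 + 1 / θ) ^ (q - s + 1) / (q - s), ?_, fun n M => ?_⟩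
  · have : 0 < q - s := by linarith
    positivity
  have hy : 0 < (n : ℝ) + θ := by positivity
  have hmono : ∑ k ∈ Finset.range M, ((k : ℝ) + θ + (n + θ)) ^ (-q) * ((k : ℝ) + θ) ^ (s - 1) ≤
      ∑ k ∈ Finset.range (n + M),
        ((k : ℝ) + θ + (n + θ)) ^ (-q) * ((k : ℝ) + θ) ^ (s - 1) := by
    apply Finset.sum_le_sum_of_subset_of_nonneg
    · intro k; simp; omega
    · intros; positivity
  refine hmono.trans ?_
  rw [Finset.sum_range_add, add_mul]
  apply add_le_add
  · calc _ ≤ ∑ k ∈ Finset.range n, ((n : ℝ) + θ) ^ (-q) * ((k : ℝ) + θ) ^ (s - 1) := by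
          refine Finset.sum_le_sum fun k _ => ?_
          refine mul_le_mul_of_nonneg_right ?_ (by positivity)
          apply Real.rpow_le_rpow_of_nonpos hy _ (by linarith)
          have : (0 : ℝ) ≤ k := by positivity
          linarith
      _ ≤ ((n : ℝ) + θ) ^ (-q) * ((1 + 1 / θ) / s * ((n : ℝ) + θ) ^ s) := by
          rw [← Finset.mul_sum]
          gcongr
          exact sum_rpow_head hθ hs n
      _ = _ := by
          rw [show s - q = s + -q by ring, Real.rpow_add hy]; ring
  · calc _ ≤ ∑ j ∈ Finset.range M, (((n + j : ℕ) : ℝ) + θ) ^ (-(q - s) - 1) := by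
          refine Finset.sum_le_sum fun j _ => ?_
          have hx : 0 < ((n + j : ℕ) : ℝ) + θ := by positivity
          rw [show -(q - s) - 1 = -q + (s - 1) by ring, Real.rpow_add hx]
          refine mul_le_mul_of_nonneg_right ?_ (by positivity)
          apply Real.rpow_le_rpow_of_nonpos hx _ (by linarith)
          linarith
      _ ≤ _ := by
          have := sum_rpow_tail hθ (sub_pos.2 hq) n M
          rwa [neg_sub] at this ⊢

/-! ### Boundedness when `1 + (β - α) / 2 ≤ lam` -/

/-- The kernel is dominated by a homogeneous kernel of any smaller degree `-q`. The shift by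
`2 * θ` is harmless because `t + 2 * θ ≤ (1 + 2 * θ) * max t 1`. -/
lemma kernel_le {lam θ q : ℝ} (hθ : 0 < θ) (hq : 0 < q) (hql : q ≤ lam)
    (k n : ℕ) :
    1 / (((k : ℝ) + n) ^ lam + 1) ≤ (1 + 2 * θ) ^ q * ((k : ℝ) + θ + (n + θ)) ^ (-q) := by
  have ht : 0 ≤ (k : ℝ) + n := by positivity
  have e : (k : ℝ) + θ + (n + θ) = (k : ℝ) + n + 2 * θ := by ring
  rw [e]
  set t := (k : ℝ) + n
  rw [Real.rpow_neg (by positivity), ← div_eq_mul_inv,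
    div_le_div_iff₀ (by positivity) (by positivity), one_mul]
  rcases le_total t 1 with h | h
  · calc (t + 2 * θ) ^ q ≤ (1 + 2 * θ) ^ q * 1 := by rw [mul_one]; gcongr
      _ ≤ _ := by
        gcongr
        have : 0 ≤ t ^ lam := by positivity
        linarith
  · calc (t + 2 * θ) ^ q ≤ ((1 + 2 * θ) * t) ^ q := by gcongr; nlinarith
      _ = (1 + 2 * θ) ^ q * t ^ q := Real.mul_rpow (by positivity) ht
      _ ≤ _ := by
        gcongr
        have : t ^ q ≤ t ^ lam := Real.rpow_le_rpow_of_exponent_le h hql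
        linarith

/-- The Schur test for finite sections, with a constant independent of their size. -/
lemma finite_schur {lam θ α β : ℝ} (hθ : 0 < θ)
    (hα : α < 1) (hβ : -1 < β) (h : 1 + (β - α) / 2 ≤ lam) :
    ∃ C : ℝ, 0 < C ∧ ∀ (c : ℕ → ℝ), (∀ k, 0 ≤ c k) → ∀ N M : ℕ,
      ∑ n ∈ Finset.range N, ((n : ℝ) + θ) ^ β *
        (∑ k ∈ Finset.range M, c k * (1 / (((k : ℝ) + n) ^ lam + 1))) ^ 2 ≤
      C * ∑ k ∈ Finset.range M, ((k : ℝ) + θ) ^ α * c k ^ 2 := by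
  set q := 1 + (β - α) / 2 with hq
  obtain ⟨D₁, hD₁, h₁⟩ := schur_sum (θ := θ) (s := (1 - α) / 2) (q := q) hθ (by linarith)
    (by rw [hq]; linarith)
  obtain ⟨D₂, hD₂, h₂⟩ := schur_sum (θ := θ) (s := (1 + β) / 2) (q := q) hθ (by linarith)
    (by rw [hq]; linarith)
  set E := (1 + 2 * θ) ^ q
  have hE : 0 < E := by positivity
  refine ⟨E ^ 2 * D₁ * D₂, by positivity, fun c hc N M => ?_⟩
  let K : ℕ → ℕ → ℝ := fun k n => ((k : ℝ) + θ + (n + θ)) ^ (-q)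
  have hK : ∀ k n, 0 ≤ K k n := fun k n => by positivity
  -- Weighted Cauchy–Schwarz in `k`, with weight `(k + θ) ^ (-(1 + α) / 2)`.
  have row : ∀ n : ℕ, (∑ k ∈ Finset.range M, c k * (1 / (((k : ℝ) + n) ^ lam + 1))) ^ 2 ≤
      E ^ 2 * (D₁ * ((n : ℝ) + θ) ^ ((1 - α) / 2 - q) *
        ∑ k ∈ Finset.range M, K k n * (((k : ℝ) + θ) ^ ((1 + α) / 2) * c k ^ 2)) := by
    intro n
    have s1 : ∑ k ∈ Finset.range M, c k * (1 / (((k : ℝ) + n) ^ lam + 1)) ≤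
        E * ∑ k ∈ Finset.range M, c k * K k n := by
      rw [Finset.mul_sum]
      refine Finset.sum_le_sum fun k _ => ?_
      calc _ ≤ c k * (E * K k n) :=
            mul_le_mul_of_nonneg_left (kernel_le hθ (by rw [hq]; linarith) h k n) (hc k)
        _ = _ := by ring
    have s0 : 0 ≤ ∑ k ∈ Finset.range M, c k * (1 / (((k : ℝ) + n) ^ lam + 1)) :=
      Finset.sum_nonneg fun k _ => mul_nonneg (hc k) (by positivity)
    calc _ ≤ (E * ∑ k ∈ Finset.range M, c k * K k n) ^ 2 := by gcongr
      _ = E ^ 2 * (∑ k ∈ Finset.range M, c k * K k n) ^ 2 := by ring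
      _ ≤ _ := by
        gcongr
        have cs := Finset.sum_sq_le_sum_mul_sum_of_sq_le_mul (Finset.range M)
          (r := fun k => c k * K k n)
          (f := fun k => K k n * ((k : ℝ) + θ) ^ ((1 - α) / 2 - 1))
          (g := fun k => K k n * (((k : ℝ) + θ) ^ ((1 + α) / 2) * c k ^ 2))
          (fun k _ => by positivity) (fun k _ => by positivity) (fun k _ => by
            have hx : 0 < (k : ℝ) + θ := by positivity
            have : ((k : ℝ) + θ) ^ ((1 - α) / 2 - 1) * ((k : ℝ) + θ) ^ ((1 + α) / 2) = 1 := by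
              rw [← Real.rpow_add hx, show (1 - α) / 2 - 1 + (1 + α) / 2 = 0 by ring,
                Real.rpow_zero]
            refine le_of_eq ?_
            linear_combination (-(c k ^ 2 * K k n ^ 2)) * this)
        refine cs.trans ?_
        refine mul_le_mul_of_nonneg_right (h₁ n M) ?_
        exact Finset.sum_nonneg fun k _ => by positivity
  calc _ ≤ ∑ n ∈ Finset.range N, ((n : ℝ) + θ) ^ β * (E ^ 2 * (D₁ *
        ((n : ℝ) + θ) ^ ((1 - α) / 2 - q) *
        ∑ k ∈ Finset.range M, K k n * (((k : ℝ) + θ) ^ ((1 + α) / 2) * c k ^ 2))) := by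
        refine Finset.sum_le_sum fun n _ => ?_
        exact mul_le_mul_of_nonneg_left (row n) (by positivity)
    _ = E ^ 2 * D₁ * ∑ k ∈ Finset.range M, ((k : ℝ) + θ) ^ ((1 + α) / 2) * c k ^ 2 *
          ∑ n ∈ Finset.range N,
            ((n : ℝ) + θ + (k + θ)) ^ (-q) * ((n : ℝ) + θ) ^ ((1 + β) / 2 - 1) := by
        simp_rw [Finset.mul_sum]
        rw [Finset.sum_comm]
        refine Finset.sum_congr rfl fun k _ => Finset.sum_congr rfl fun n _ => ?_
        have hy : 0 < (n : ℝ) + θ := by positivity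
        have : ((n : ℝ) + θ) ^ ((1 + β) / 2 - 1) =
            ((n : ℝ) + θ) ^ β * ((n : ℝ) + θ) ^ ((1 - α) / 2 - q) := by
          rw [← Real.rpow_add hy]; congr 1; rw [hq]; ring
        rw [this, add_comm ((n : ℝ) + θ)]
        simp only [K]; ring
    _ ≤ E ^ 2 * D₁ * ∑ k ∈ Finset.range M, ((k : ℝ) + θ) ^ ((1 + α) / 2) * c k ^ 2 *
          (D₂ * ((k : ℝ) + θ) ^ ((1 + β) / 2 - q)) := by
        gcongr with k _
        exact h₂ k N
    _ = _ := by
        rw [mul_assoc (E ^ 2 * D₁) D₂, Finset.mul_sum _ _ D₂]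
        congr 1
        refine Finset.sum_congr rfl fun k _ => ?_
        have hx : 0 < (k : ℝ) + θ := by positivity
        have : ((k : ℝ) + θ) ^ α =
            ((k : ℝ) + θ) ^ ((1 + α) / 2) * ((k : ℝ) + θ) ^ ((1 + β) / 2 - q) := by
          rw [← Real.rpow_add hx]; congr 1; rw [hq]; ring
        rw [this]; ring

/-- Passage from finite sections to the operator. The uniform bound also gives absolute
convergence of every inner series, so no `tsum` here takes its default value. -/
lemma bounded_of_le {lam θ α β : ℝ} (hθ : 0 < θ)
    (hα : α < 1) (hβ : -1 < β) (h : 1 + (β - α) / 2 ≤ lam) :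
    ∃ C : ℝ, 0 < C ∧ ∀ a : ℕ → ℂ,
      Summable (fun k : ℕ => ((k : ℝ) + θ) ^ α * ‖a k‖ ^ 2 * (Nat.factorial k : ℝ)) →
      ∑' n : ℕ, ((n : ℝ) + θ) ^ β *
          ‖∑' k : ℕ, a k *
            ((Real.sqrt (Nat.factorial k) / (((k : ℝ) + n) ^ lam + 1) : ℝ) : ℂ)‖ ^ 2
        ≤ C * ∑' k : ℕ, ((k : ℝ) + θ) ^ α * ‖a k‖ ^ 2 * (Nat.factorial k : ℝ) := by
  obtain ⟨C, hC, hfin⟩ := finite_schur (lam := lam) hθ hα hβ h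
  refine ⟨C, hC, fun a ha => ?_⟩
  set S := ∑' k : ℕ, ((k : ℝ) + θ) ^ α * ‖a k‖ ^ 2 * (Nat.factorial k : ℝ) with hS
  let c : ℕ → ℝ := fun k => ‖a k‖ * Real.sqrt (Nat.factorial k)
  have hc : ∀ k, 0 ≤ c k := fun k => by positivity
  have hbd : ∀ N M : ℕ, ∑ n ∈ Finset.range N, ((n : ℝ) + θ) ^ β *
      (∑ k ∈ Finset.range M, c k * (1 / (((k : ℝ) + n) ^ lam + 1))) ^ 2 ≤ C * S := by
    intro N M
    refine (hfin c hc N M).trans ?_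
    gcongr
    have : ∀ k : ℕ, ((k : ℝ) + θ) ^ α * c k ^ 2 =
        ((k : ℝ) + θ) ^ α * ‖a k‖ ^ 2 * (Nat.factorial k : ℝ) := fun k => by
      simp only [c]
      rw [mul_pow, Real.sq_sqrt (by positivity), mul_assoc]
    simp_rw [this]
    exact ha.sum_le_tsum _ fun k _ => by positivity
  have hnorm : ∀ n k : ℕ, ‖a k *
      ((Real.sqrt (Nat.factorial k) / (((k : ℝ) + n) ^ lam + 1) : ℝ) : ℂ)‖ =
      c k * (1 / (((k : ℝ) + n) ^ lam + 1)) := fun n k => by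
    rw [norm_mul, Complex.norm_real, Real.norm_of_nonneg (by positivity)]
    simp only [c]; ring
  have hsum : ∀ n : ℕ, Summable fun k : ℕ => a k *
      ((Real.sqrt (Nat.factorial k) / (((k : ℝ) + n) ^ lam + 1) : ℝ) : ℂ) := by
    intro n
    apply Summable.of_norm
    simp_rw [hnorm]
    have hy : 0 < ((n : ℝ) + θ) ^ β := by positivity
    refine summable_of_sum_range_le (c := Real.sqrt (C * S / ((n : ℝ) + θ) ^ β))
      (fun k => mul_nonneg (hc k) (by positivity)) fun M => ?_
    apply Real.le_sqrt_of_sq_le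
    rw [le_div_iff₀ hy, mul_comm]
    refine le_trans ?_ (hbd (n + 1) M)
    exact Finset.single_le_sum (f := fun n : ℕ => ((n : ℝ) + θ) ^ β *
      (∑ k ∈ Finset.range M, c k * (1 / (((k : ℝ) + n) ^ lam + 1))) ^ 2)
      (fun _ _ => by positivity) (by simp)
  refine Real.tsum_le_of_sum_range_le (fun n => by positivity) fun N => ?_
  have hlim : Filter.Tendsto (fun M : ℕ => ∑ n ∈ Finset.range N, ((n : ℝ) + θ) ^ β *
      ‖∑ k ∈ Finset.range M, a k *
        ((Real.sqrt (Nat.factorial k) / (((k : ℝ) + n) ^ lam + 1) : ℝ) : ℂ)‖ ^ 2)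
      Filter.atTop (nhds (∑ n ∈ Finset.range N, ((n : ℝ) + θ) ^ β *
      ‖∑' k : ℕ, a k *
        ((Real.sqrt (Nat.factorial k) / (((k : ℝ) + n) ^ lam + 1) : ℝ) : ℂ)‖ ^ 2)) :=
    tendsto_finsetSum _ fun n _ =>
      ((hsum n).hasSum.tendsto_sum_nat.norm.pow 2).const_mul _
  refine le_of_tendsto' hlim fun M => (Finset.sum_le_sum fun n _ => ?_).trans (hbd N M)
  refine mul_le_mul_of_nonneg_left ?_ (by positivity)
  refine pow_le_pow_left₀ (norm_nonneg _) ?_ 2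
  refine (norm_sum_le _ _).trans (le_of_eq ?_)
  exact Finset.sum_congr rfl fun k _ => hnorm n k

/-! ### Unboundedness when `lam < 1 + (β - α) / 2` -/

/-- Differences of the kernel in `k` gain one power of decay in `n`. -/
lemma kernel_sub_isBigO {lam : ℝ} (hlam : 0 < lam) (k : ℕ) :
    (fun n : ℕ => 1 / (((k : ℝ) + n) ^ lam + 1) - 1 / ((n : ℝ) ^ lam + 1)) =O[Filter.atTop]
      fun n : ℕ => (n : ℝ) ^ (-lam - 1) := by
  have hd : HasDerivAt (fun u : ℝ => u ^ lam) (lam * 1 ^ (lam - 1)) 1 :=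
    Real.hasDerivAt_rpow_const (Or.inl one_ne_zero)
  have ht : Filter.Tendsto (fun n : ℕ => 1 + (k : ℝ) / n) Filter.atTop (nhds 1) := by
    simpa using (tendsto_const_div_atTop_nhds_zero_nat (k : ℝ)).const_add 1
  have h1 := hd.isBigO_sub.comp_tendsto ht
  have h2 := h1.mul (Asymptotics.isBigO_refl (fun n : ℕ => (n : ℝ) ^ (-lam)) Filter.atTop)
  have h3 : (fun n : ℕ => 1 / (((k : ℝ) + n) ^ lam + 1) - 1 / ((n : ℝ) ^ lam + 1))
      =O[Filter.atTop] fun n : ℕ => ((1 + (k : ℝ) / n) ^ lam - 1 ^ lam) * (n : ℝ) ^ (-lam) := by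
    refine Asymptotics.IsBigO.of_bound 1 ?_
    filter_upwards [Filter.eventually_gt_atTop 0] with n hn
    have hn' : (0 : ℝ) < n := by exact_mod_cast hn
    have p : 0 < (n : ℝ) ^ lam := by positivity
    have e : ((k : ℝ) + n) ^ lam = (1 + (k : ℝ) / n) ^ lam * (n : ℝ) ^ lam := by
      rw [← Real.mul_rpow (by positivity) hn'.le]; congr 1; field_simp; ring
    have hU : 1 ≤ (1 + (k : ℝ) / n) ^ lam := by
      apply Real.one_le_rpow _ hlam.le
      have : 0 ≤ (k : ℝ) / n := by positivity
      linarith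
    rw [e, Real.one_rpow, Real.rpow_neg hn'.le]
    set U := (1 + (k : ℝ) / n) ^ lam
    set P := (n : ℝ) ^ lam
    rw [one_mul, norm_sub_rev, Real.norm_of_nonneg, Real.norm_of_nonneg]
    · rw [div_sub_div _ _ (by positivity) (by positivity), ← div_eq_mul_inv,
        div_le_div_iff₀ (by positivity) p]
      have hU' : 0 ≤ U - 1 := by linarith
      have : 0 ≤ (U - 1) * ((U - 1) * P ^ 2 + U * P + P + 1) :=
        mul_nonneg hU' (by positivity)
      linarith
    · exact mul_nonneg (by linarith) (by positivity)
    · rw [sub_nonneg]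
      apply one_div_le_one_div_of_le (by positivity)
      nlinarith
  refine h3.trans (h2.trans ?_)
  refine Asymptotics.IsBigO.of_bound k ?_
  filter_upwards [Filter.eventually_gt_atTop 0] with n hn
  have hn' : (0 : ℝ) < n := by exact_mod_cast hn
  apply le_of_eq
  simp only [Function.comp]
  rw [Real.rpow_sub_one hn'.ne', Real.norm_of_nonneg, Real.norm_of_nonneg]
  · ring
  · positivity
  · rw [add_sub_cancel_left]; positivity

/-- Powers with exponent in `[-1, 1]` vary by at most a factor `3` on `[x, 3 * x]`. -/
lemma rpow_comparable {x y s : ℝ} (hx : 0 < x) (hxy : x ≤ y) (hyx : y ≤ 3 * x)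
    (hs₁ : -1 ≤ s) (hs₂ : s ≤ 1) : y ^ s ≤ 3 * x ^ s ∧ x ^ s ≤ 3 * y ^ s := by
  have hy : 0 < y := hx.trans_le hxy
  have h1 : 1 ≤ y / x := (one_le_div hx).2 hxy
  have h3 : y / x ≤ 3 := (div_le_iff₀ hx).2 hyx
  have e : y ^ s = (y / x) ^ s * x ^ s := by
    rw [← Real.mul_rpow (by positivity) hx.le, div_mul_cancel₀ _ hx.ne']
  have hp : 0 < x ^ s := by positivity
  have hu : (y / x) ^ s ≤ 3 :=
    (Real.rpow_le_rpow_of_exponent_le h1 hs₂).trans (by rwa [Real.rpow_one])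
  have hl : 1 / 3 ≤ (y / x) ^ s := by
    refine le_trans ?_ (Real.rpow_le_rpow_of_exponent_le h1 hs₁)
    rw [Real.rpow_neg_one, one_div]
    exact inv_anti₀ (by positivity) h3
  rw [e]
  constructor
  · gcongr
  · nlinarith

/-- The assumed inequality, tested on `a k = c k / √(k!)` with `c` finitely supported and of sum
zero. The vanishing sum is what makes the outer series converge: without it the outer `tsum`
could be `0` by convention, and the hypothesis would say nothing. -/
lemma finite_test {lam θ α β C : ℝ} (hlam : 0 < lam) (hθ : 0 < θ) (hβ₁ : -1 < β) (hβ₂ : β < 1)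
    (H : ∀ a : ℕ → ℂ,
      Summable (fun k : ℕ => ((k : ℝ) + θ) ^ α * ‖a k‖ ^ 2 * (Nat.factorial k : ℝ)) →
      ∑' n : ℕ, ((n : ℝ) + θ) ^ β *
          ‖∑' k : ℕ, a k *
            ((Real.sqrt (Nat.factorial k) / (((k : ℝ) + n) ^ lam + 1) : ℝ) : ℂ)‖ ^ 2
        ≤ C * ∑' k : ℕ, ((k : ℝ) + θ) ^ α * ‖a k‖ ^ 2 * (Nat.factorial k : ℝ))
    (c : ℕ → ℝ) (S : Finset ℕ) (hcS : ∀ k ∉ S, c k = 0) (hc : ∑ k ∈ S, c k = 0)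
    (T : Finset ℕ) :
    ∑ n ∈ T, ((n : ℝ) + θ) ^ β * (∑ k ∈ S, c k * (1 / (((k : ℝ) + n) ^ lam + 1))) ^ 2 ≤
      C * ∑ k ∈ S, ((k : ℝ) + θ) ^ α * c k ^ 2 := by
  let a : ℕ → ℂ := fun k => ((c k / Real.sqrt (Nat.factorial k) : ℝ) : ℂ)
  have hf : ∀ k : ℕ, 0 < Real.sqrt (Nat.factorial k) := fun k =>
    Real.sqrt_pos.2 (by exact_mod_cast Nat.factorial_pos k)
  have e1 : (fun k : ℕ => ((k : ℝ) + θ) ^ α * ‖a k‖ ^ 2 * (Nat.factorial k : ℝ)) =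
      fun k : ℕ => ((k : ℝ) + θ) ^ α * c k ^ 2 := by
    funext k
    simp only [a]
    rw [Complex.norm_real, Real.norm_eq_abs, sq_abs, div_pow, Real.sq_sqrt (by positivity)]
    have : (Nat.factorial k : ℝ) ≠ 0 := by exact_mod_cast (Nat.factorial_pos k).ne'
    field_simp
  have e2 : ∀ n : ℕ, ‖∑' k : ℕ, a k *
      ((Real.sqrt (Nat.factorial k) / (((k : ℝ) + n) ^ lam + 1) : ℝ) : ℂ)‖ ^ 2 =
      (∑ k ∈ S, c k * (1 / (((k : ℝ) + n) ^ lam + 1))) ^ 2 := by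
    intro n
    have : ∀ k : ℕ, a k *
        ((Real.sqrt (Nat.factorial k) / (((k : ℝ) + n) ^ lam + 1) : ℝ) : ℂ) =
        ((c k * (1 / (((k : ℝ) + n) ^ lam + 1)) : ℝ) : ℂ) := fun k => by
      simp only [a]
      rw [← Complex.ofReal_mul]
      congr 1
      have := (hf k).ne'
      field_simp
    simp_rw [this]
    rw [tsum_eq_sum (s := S) (fun k hk => by simp [hcS k hk]), ← Complex.ofReal_sum,
      Complex.norm_real, Real.norm_eq_abs, sq_abs]
  have key := H a (by
    rw [e1]; exact summable_of_ne_finset_zero (s := S) fun k hk => by simp [hcS k hk])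
  rw [e1] at key
  simp_rw [e2] at key
  rw [tsum_eq_sum (f := fun k : ℕ => ((k : ℝ) + θ) ^ α * c k ^ 2) (s := S)
    (fun k hk => by simp [hcS k hk])] at key
  refine le_trans (Summable.sum_le_tsum T (fun n _ => by positivity) ?_) key
  -- Subtracting `(∑ c k) * (n ^ lam + 1)⁻¹ = 0` exposes the extra power of decay.
  have hB : (fun n : ℕ => ∑ k ∈ S, c k * (1 / (((k : ℝ) + n) ^ lam + 1))) =O[Filter.atTop]
      fun n : ℕ => (n : ℝ) ^ (-lam - 1) := by
    have e3 : (fun n : ℕ => ∑ k ∈ S, c k * (1 / (((k : ℝ) + n) ^ lam + 1))) =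
        fun n : ℕ => ∑ k ∈ S,
          c k * (1 / (((k : ℝ) + n) ^ lam + 1) - 1 / ((n : ℝ) ^ lam + 1)) := by
      funext n
      simp_rw [mul_sub]
      rw [Finset.sum_sub_distrib, ← Finset.sum_mul, hc, zero_mul, sub_zero]
    rw [e3]
    exact Asymptotics.IsBigO.fun_sum fun k _ => (kernel_sub_isBigO hlam k).const_mul_left _
  have hw : (fun n : ℕ => ((n : ℝ) + θ) ^ β) =O[Filter.atTop] fun n : ℕ => (n : ℝ) ^ β := by
    refine Asymptotics.IsBigO.of_bound 3 ?_
    filter_upwards [Filter.eventually_gt_atTop 0, Filter.eventually_ge_atTop ⌈θ⌉₊] with n hn hn2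
    have hn' : (0 : ℝ) < n := by exact_mod_cast hn
    have hn3 : θ ≤ n := Nat.ceil_le.1 hn2
    rw [Real.norm_of_nonneg (by positivity), Real.norm_of_nonneg (by positivity)]
    exact (rpow_comparable hn' (by linarith) (by linarith) hβ₁.le hβ₂.le).1
  refine summable_of_isBigO_nat (Real.summable_nat_rpow.2 (by linarith : β - 2 * lam - 2 < -1))
    ((hw.mul (hB.pow 2)).trans (Asymptotics.IsBigO.of_bound 1 ?_))
  filter_upwards [Filter.eventually_gt_atTop 0] with n hn
  have hn' : (0 : ℝ) < n := by exact_mod_cast hn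
  rw [one_mul, ← Real.rpow_natCast, ← Real.rpow_mul hn'.le, ← Real.rpow_add hn']
  apply le_of_eq
  congr 2
  push_cast
  ring

/-- Testing on the indicator of `[N, 2N)` minus `1 / L` times that of `[LN, 2LN)`, with `L` fixed,
gives `N ^ (β + 2 - 2 * lam - α) = O(1)`, so the exponent cannot be positive. -/
lemma le_of_bounded {lam θ α β C : ℝ} (hlam : 0 < lam) (hθ : 0 < θ)
    (hα₁ : -1 < α) (hα₂ : α < 1) (hβ₁ : -1 < β) (hβ₂ : β < 1) (hC : 0 < C)
    (H : ∀ a : ℕ → ℂ,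
      Summable (fun k : ℕ => ((k : ℝ) + θ) ^ α * ‖a k‖ ^ 2 * (Nat.factorial k : ℝ)) →
      ∑' n : ℕ, ((n : ℝ) + θ) ^ β *
          ‖∑' k : ℕ, a k *
            ((Real.sqrt (Nat.factorial k) / (((k : ℝ) + n) ^ lam + 1) : ℝ) : ℂ)‖ ^ 2
        ≤ C * ∑' k : ℕ, ((k : ℝ) + θ) ^ α * ‖a k‖ ^ 2 * (Nat.factorial k : ℝ)) :
    1 + (β - α) / 2 ≤ lam := by
  by_contra! hlt
  -- On the far block `(k + n) ^ lam ≥ 3 * (4 * N) ^ lam`, while on the near one it is at most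
  -- `(4 * N) ^ lam`; the two contributions thus differ by a definite fraction of the larger.
  obtain ⟨L, hL1, hL⟩ : ∃ L : ℕ, 1 ≤ L ∧ 3 * (4 : ℝ) ^ lam ≤ (L : ℝ) ^ lam := by
    have ht := (tendsto_rpow_atTop hlam).comp (tendsto_natCast_atTop_atTop (R := ℝ))
    obtain ⟨L, h1, h2⟩ := ((Filter.eventually_ge_atTop 1).and
      (ht.eventually_ge_atTop (3 * (4 : ℝ) ^ lam))).exists
    exact ⟨L, h1, h2⟩
  have hL' : (1 : ℝ) ≤ L := by exact_mod_cast hL1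
  have main : ∀ N : ℕ, 1 ≤ N → θ ≤ N →
      (N : ℝ) ^ (β + 2 - 2 * lam - α) ≤ 36 * (4 * 4 ^ lam) ^ 2 * C := by
    intro N hN1 hNθ
    have hN : (1 : ℝ) ≤ N := by exact_mod_cast hN1
    have hN0 : (0 : ℝ) < N := by linarith
    let I : ℕ → Finset ℕ := fun m => Finset.Ico m (2 * m)
    have hI : ∀ m k, k ∈ I m → (m : ℝ) ≤ k ∧ (k : ℝ) < 2 * m := fun m k hk => by
      obtain ⟨h1, h2⟩ := Finset.mem_Ico.1 hk
      exact ⟨by exact_mod_cast h1, by exact_mod_cast h2⟩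
    have hcard : ∀ m, (I m).card = m := fun m => by simp [I]; omega
    let i₁ : ℕ → ℝ := fun k => if k ∈ I N then 1 else 0
    let i₂ : ℕ → ℝ := fun k => if k ∈ I (L * N) then 1 else 0
    let c : ℕ → ℝ := fun k => i₁ k - (L : ℝ)⁻¹ * i₂ k
    let S := I N ∪ I (L * N)
    have sum₁ : ∀ f : ℕ → ℝ, ∑ k ∈ S, i₁ k * f k = ∑ k ∈ I N, f k := fun f => by
      simp only [i₁, ite_mul, one_mul, zero_mul]
      rw [Finset.sum_ite_mem, Finset.union_inter_cancel_left]
    have sum₂ : ∀ f : ℕ → ℝ, ∑ k ∈ S, i₂ k * f k = ∑ k ∈ I (L * N), f k := fun f => by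
      simp only [i₂, ite_mul, one_mul, zero_mul]
      rw [Finset.sum_ite_mem, Finset.union_inter_cancel_right]
    have sumc : ∀ f : ℕ → ℝ, ∑ k ∈ S, c k * f k =
        ∑ k ∈ I N, f k - (L : ℝ)⁻¹ * ∑ k ∈ I (L * N), f k := fun f => by
      rw [← sum₁, ← sum₂, Finset.mul_sum, ← Finset.sum_sub_distrib]
      exact Finset.sum_congr rfl fun k _ => by simp only [c]; ring
    have hcS : ∀ k ∉ S, c k = 0 := fun k hk => by
      have h1 : k ∉ I N := fun h => hk (Finset.mem_union_left _ h)
      have h2 : k ∉ I (L * N) := fun h => hk (Finset.mem_union_right _ h)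
      simp [c, i₁, i₂, h1, h2]
    have hc0 : ∑ k ∈ S, c k = 0 := by
      have := sumc fun _ => 1
      simp only [mul_one, Finset.sum_const, hcard, nsmul_eq_mul] at this
      rw [this]; push_cast; field_simp; ring
    have key := finite_test hlam hθ hβ₁ hβ₂ H c S hcS hc0 (I N)
    have block : ∀ m : ℕ, (N : ℝ) ≤ m →
        ∑ k ∈ I m, ((k : ℝ) + θ) ^ α ≤ m * (3 * (m : ℝ) ^ α) := fun m hm => by
      have : ∀ k ∈ I m, ((k : ℝ) + θ) ^ α ≤ 3 * (m : ℝ) ^ α := fun k hk => by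
        obtain ⟨h1, h2⟩ := hI m k hk
        exact (rpow_comparable (by linarith) (by linarith) (by linarith) hα₁.le hα₂.le).1
      refine (Finset.sum_le_card_nsmul _ _ _ this).trans (le_of_eq ?_)
      rw [hcard, nsmul_eq_mul]
    have upper : ∑ k ∈ S, ((k : ℝ) + θ) ^ α * c k ^ 2 ≤ 12 * (N * (N : ℝ) ^ α) := by
      have hLα : (L : ℝ) ^ α ≤ L := by
        simpa using Real.rpow_le_rpow_of_exponent_le hL' hα₂.le
      have hb := block (L * N) (by push_cast; nlinarith)
      push_cast at hb
      rw [Real.mul_rpow (by positivity) hN0.le] at hb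
      calc ∑ k ∈ S, ((k : ℝ) + θ) ^ α * c k ^ 2
          ≤ ∑ k ∈ S, (2 * (i₁ k * ((k : ℝ) + θ) ^ α) +
              2 * ((L : ℝ)⁻¹ ^ 2 * (i₂ k * ((k : ℝ) + θ) ^ α))) := by
            refine Finset.sum_le_sum fun k _ => ?_
            have q1 : i₁ k ^ 2 = i₁ k := by simp only [i₁]; split_ifs <;> norm_num
            have q2 : i₂ k ^ 2 = i₂ k := by simp only [i₂]; split_ifs <;> norm_num
            have : c k ^ 2 ≤ 2 * i₁ k + 2 * ((L : ℝ)⁻¹ ^ 2 * i₂ k) := by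
              simp only [c]
              have := sq_nonneg (i₁ k + (L : ℝ)⁻¹ * i₂ k)
              have e : ((L : ℝ)⁻¹ * i₂ k) ^ 2 = (L : ℝ)⁻¹ ^ 2 * i₂ k := by rw [mul_pow, q2]
              nlinarith
            have hp : 0 ≤ ((k : ℝ) + θ) ^ α := by positivity
            nlinarith [mul_le_mul_of_nonneg_left this hp]
        _ = 2 * ∑ k ∈ I N, ((k : ℝ) + θ) ^ α +
              2 * ((L : ℝ)⁻¹ ^ 2 * ∑ k ∈ I (L * N), ((k : ℝ) + θ) ^ α) := by
            rw [Finset.sum_add_distrib, ← Finset.mul_sum, ← Finset.mul_sum, ← Finset.mul_sum,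
              sum₁, sum₂]
        _ ≤ 2 * (N * (3 * (N : ℝ) ^ α)) +
              2 * ((L : ℝ)⁻¹ ^ 2 * (L * N * (3 * (L * (N : ℝ) ^ α)))) := by
            gcongr
            · exact block N le_rfl
            · exact hb.trans (by gcongr)
        _ = _ := by field_simp; ring
    have lower : ∀ n ∈ I N, N * ((4 * 4 ^ lam) * (N : ℝ) ^ lam)⁻¹ ≤
        ∑ k ∈ S, c k * (1 / (((k : ℝ) + n) ^ lam + 1)) := fun n hn => by
      obtain ⟨n1, n2⟩ := hI N n hn
      rw [sumc]
      have hP : 1 ≤ (4 : ℝ) ^ lam * (N : ℝ) ^ lam :=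
        one_le_mul_of_one_le_of_one_le (Real.one_le_rpow (by norm_num) hlam.le)
          (Real.one_le_rpow hN hlam.le)
      set P := (4 : ℝ) ^ lam * (N : ℝ) ^ lam with hPdef
      have near : N * (1 / (P + 1)) ≤ ∑ k ∈ I N, 1 / (((k : ℝ) + n) ^ lam + 1) := by
        have : ∀ k ∈ I N, 1 / (P + 1) ≤ 1 / (((k : ℝ) + n) ^ lam + 1) := fun k hk => by
          obtain ⟨k1, k2⟩ := hI N k hk
          rw [hPdef, ← Real.mul_rpow (by norm_num) hN0.le]
          gcongr
          linarith
        refine le_trans (le_of_eq ?_) (Finset.card_nsmul_le_sum _ _ _ this)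
        rw [hcard, nsmul_eq_mul]
      have far : ∑ k ∈ I (L * N), 1 / (((k : ℝ) + n) ^ lam + 1) ≤
          L * N * (1 / (3 * P + 1)) := by
        have : ∀ k ∈ I (L * N), 1 / (((k : ℝ) + n) ^ lam + 1) ≤ 1 / (3 * P + 1) := fun k hk => by
          obtain ⟨k1, k2⟩ := hI (L * N) k hk
          push_cast at k1
          have h1 : 3 * P ≤ ((L : ℝ) * N) ^ lam := by
            rw [Real.mul_rpow (by positivity) hN0.le, hPdef, ← mul_assoc]
            gcongr
          have h2 : ((L : ℝ) * N) ^ lam ≤ ((k : ℝ) + n) ^ lam := by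
            gcongr
            linarith
          exact one_div_le_one_div_of_le (by linarith) (by linarith)
        refine (Finset.sum_le_card_nsmul _ _ _ this).trans (le_of_eq ?_)
        rw [hcard, nsmul_eq_mul]; push_cast; ring
      have far' : (L : ℝ)⁻¹ * ∑ k ∈ I (L * N), 1 / (((k : ℝ) + n) ^ lam + 1) ≤
          N * (1 / (3 * P + 1)) := by
        calc _ ≤ (L : ℝ)⁻¹ * (L * N * (1 / (3 * P + 1))) := by gcongr
          _ = _ := by field_simp
      have e : (4 * P)⁻¹ ≤ 1 / (P + 1) - 1 / (3 * P + 1) := by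
        have : 0 < P := by linarith
        rw [div_sub_div _ _ (by positivity) (by positivity), inv_eq_one_div,
          div_le_div_iff₀ (by positivity) (by positivity)]
        nlinarith [mul_self_nonneg (P - 1)]
      have e' := mul_le_mul_of_nonneg_left e hN0.le
      rw [mul_assoc 4, ← hPdef]
      linarith
    have low2 : N * ((N : ℝ) ^ β / 3 * (N * ((4 * 4 ^ lam) * (N : ℝ) ^ lam)⁻¹) ^ 2) ≤
        ∑ n ∈ I N, ((n : ℝ) + θ) ^ β *
          (∑ k ∈ S, c k * (1 / (((k : ℝ) + n) ^ lam + 1))) ^ 2 := by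
      have : ∀ n ∈ I N, (N : ℝ) ^ β / 3 * (N * ((4 * 4 ^ lam) * (N : ℝ) ^ lam)⁻¹) ^ 2 ≤
          ((n : ℝ) + θ) ^ β * (∑ k ∈ S, c k * (1 / (((k : ℝ) + n) ^ lam + 1))) ^ 2 := by
        intro n hn
        obtain ⟨n1, n2⟩ := hI N n hn
        have h1 := (rpow_comparable (y := (n : ℝ) + θ) hN0 (by linarith) (by linarith)
          hβ₁.le hβ₂.le).2
        have h2 := lower n hn
        gcongr
        linarith
      refine le_trans (le_of_eq ?_) (Finset.card_nsmul_le_sum _ _ _ this)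
      rw [hcard, nsmul_eq_mul]
    have fin := (low2.trans key).trans (mul_le_mul_of_nonneg_left upper hC.le)
    have e : (N : ℝ) ^ (β + 2 - 2 * lam - α) =
        (N : ℝ) ^ β * N ^ 2 / ((N : ℝ) ^ lam) ^ 2 / (N : ℝ) ^ α := by
      rw [Real.rpow_sub hN0, Real.rpow_sub hN0, Real.rpow_add hN0, mul_comm 2 lam,
        Real.rpow_mul hN0.le]
      norm_cast
    rw [e]
    have pα : 0 < (N : ℝ) ^ α := by positivity
    have pl : 0 < (N : ℝ) ^ lam := by positivity
    have p4 : 0 < (4 : ℝ) ^ lam := by positivity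
    rw [div_le_iff₀ pα]
    have q : 0 < 3 * (4 * (4 : ℝ) ^ lam) ^ 2 / N := by positivity
    calc _ = 3 * (4 * (4 : ℝ) ^ lam) ^ 2 / N * (N * ((N : ℝ) ^ β / 3 *
          (N * ((4 * 4 ^ lam) * (N : ℝ) ^ lam)⁻¹) ^ 2)) := by field_simp
      _ ≤ 3 * (4 * (4 : ℝ) ^ lam) ^ 2 / N * (C * (12 * (N * (N : ℝ) ^ α))) := by gcongr
      _ = _ := by field_simp; ring
  have ht := (tendsto_rpow_atTop (by linarith : 0 < β + 2 - 2 * lam - α)).comp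
    (tendsto_natCast_atTop_atTop (R := ℝ))
  obtain ⟨N, ⟨h1, h2⟩, h3⟩ := (((Filter.eventually_ge_atTop 1).and
    (Filter.eventually_ge_atTop ⌈θ⌉₊)).and
    (ht.eventually_gt_atTop (36 * (4 * 4 ^ lam) ^ 2 * C))).exists
  exact absurd (main N h1 (Nat.ceil_le.1 h2)) (not_le.2 h3)


/-- For `λ > 0`, `θ > 0`, `−1 < α < 1`, `−1 < β < 1`, the Hilbert-type
operator `H_λ` is bounded from the weighted Fock space `F²_{θ,α}` to `F²_{θ,β}`
(in terms of Taylor coefficients) if and only if `λ ≥ 1 + (β − α)/2`. -/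
theorem hilbert_type_operator_bounded_iff
    (lam θ α β : ℝ) (hlam : 0 < lam) (hθ : 0 < θ)
    (hα₁ : -1 < α) (hα₂ : α < 1) (hβ₁ : -1 < β) (hβ₂ : β < 1) :
    (∃ C : ℝ, 0 < C ∧ ∀ a : ℕ → ℂ,
      Summable (fun k : ℕ => ((k : ℝ) + θ) ^ α * ‖a k‖ ^ 2 * (Nat.factorial k : ℝ)) →
      ∑' n : ℕ, ((n : ℝ) + θ) ^ β *
          ‖∑' k : ℕ, a k *
            ((Real.sqrt (Nat.factorial k) / (((k : ℝ) + n) ^ lam + 1) : ℝ) : ℂ)‖ ^ 2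
        ≤ C * ∑' k : ℕ, ((k : ℝ) + θ) ^ α * ‖a k‖ ^ 2 * (Nat.factorial k : ℝ)) ↔
    1 + (β - α) / 2 ≤ lam := by
  constructor
  · rintro ⟨C, hC, H⟩
    exact le_of_bounded hlam hθ hα₁ hα₂ hβ₁ hβ₂ hC H
  · exact bounded_of_le hθ hα₂ hβ₁
end

section
/- Let θ > 0, −1 < α < 1, −1 < β < 1, and let μ be a finite positive Borel measure on [0,1). The Hilbert-type operator H_μ, which sends an entire function f(z) = Σ_{k≥0} a_k z^k to H_μ(f)(z) = Σ_{n≥0} [ (1/√(n!)) Σ_{k≥0} μ[k+n] a_k √(k!) ] z^n, is bounded from F²_{θ,α} to F²_{θ,β} — that is, there exists a constant C > 0 such that for every sequence a : ℕ → ℂ with Σ_{k≥0} (k+θ)^α |a_k|² k! < ∞ one has Σ_{n≥0} (n+θ)^β | Σ_{k≥0} μ[k+n] a_k √(k!) |² ≤ C · Σ_{k≥0} (k+θ)^α |a_k|² k! — if and only if μ is a [1 + (β−α)/2]-Carleson measure on [0,1). -/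
/-!
Put `σ = 1 + (β - α) / 2` and `b k = √(k!) |a k|`; the claim concerns the Hankel matrix
`K (k + n)` of moments of `μ`, as a map between weighted `ℓ²` spaces.

If `μ` is `σ`-Carleson, then `K m ≤ M (m + 1) ^ (-σ)` (`moment_le`), so the matrix is dominated by
the kernel `(n + k + 1) ^ (-σ)`. That kernel is bounded by a Schur test
(`hilbert_finite_le`), in which the bounds `-1 < α, β < 1` keep the auxiliary exponents in range.

Conversely, the operator is tested on the polynomials
`p_N(t) = t ^ N (1 - t ^ N) (1 + t + ⋯ + t ^ (N - 1))`, for which the `n`-th output is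
`∫ t ^ n p_N dμ`. Since `p_N ≥ c N` on the annulus `1 / (2N) < 1 - t ≤ 1 / N`, the outputs with
`N ≤ n < 2N` bound the mass of this annulus by a multiple of `N ^ (-σ)`
(`annulus_le_of_bounded`), and summing over dyadic `N` gives the Carleson condition
(`carleson_of_annulus_le`). Unlike a test polynomial with positive coefficients, `p_N` vanishes at
`t = 1`. For an arbitrary finite `μ` this makes its outputs `O(1 / (n + 1))`, so that (as
`β < 1`) the series on the left converges and its `tsum` is not the junk value `0`.
-/

open MeasureTheory

/-! ### The weighted Hilbert inequality -/

lemma rpow_le_of_comparable {x y A : ℝ} (s : ℝ) (hx : 0 < x) (hy : 0 < y) (hA : 1 ≤ A)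
    (hxy : x ≤ A * y) (hyx : y ≤ A * x) : x ^ s ≤ A ^ |s| * y ^ s := by
  have hA0 : 0 < A := by linarith
  rcases le_total 0 s with hs | hs
  · rw [abs_of_nonneg hs, ← Real.mul_rpow hA0.le hy.le]
    exact Real.rpow_le_rpow hx.le hxy hs
  · have h1 : (A * x) ^ s ≤ y ^ s := Real.rpow_le_rpow_of_nonpos hy hyx hs
    rw [Real.mul_rpow hA0.le hx.le] at h1
    rw [abs_of_nonpos hs, Real.rpow_neg hA0.le]
    have h2 : 0 < A ^ s := Real.rpow_pos_of_pos hA0 s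
    rw [inv_mul_eq_div, le_div_iff₀ h2]
    linarith

/-- Telescoping against `k ^ (1 - γ)`, by Bernoulli's inequality; this avoids comparing with an
integral. -/
lemma sum_rpow_neg_le {γ : ℝ} (h0 : 0 < γ) (h1 : γ < 1) (M : ℕ) :
    ∑ k ∈ Finset.range M, ((k : ℝ) + 1) ^ (-γ) ≤ (M : ℝ) ^ (1 - γ) / (1 - γ) := by
  have hp : 0 < 1 - γ := by linarith
  induction M with
  | zero => simp [Real.zero_rpow hp.ne']
  | succ M ih =>
    rw [Finset.sum_range_succ]
    have hy : (0 : ℝ) < (M : ℝ) + 1 := by positivity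
    have hb := rpow_one_add_le_one_add_mul_self (s := -(1 / ((M : ℝ) + 1)))
      (by rw [neg_le_neg_iff, div_le_one hy]; linarith [(Nat.cast_nonneg M : (0 : ℝ) ≤ M)])
      hp.le (by linarith)
    have hM : (M : ℝ) ^ (1 - γ) =
        ((M : ℝ) + 1) ^ (1 - γ) * (1 + -(1 / ((M : ℝ) + 1))) ^ (1 - γ) := by
      have e : 1 + -(1 / ((M : ℝ) + 1)) = M / (M + 1) := by field_simp; ring
      rw [e, ← Real.mul_rpow hy.le (by positivity)]
      congr 1; field_simp
    have hq : ((M : ℝ) + 1) ^ (-γ) = ((M : ℝ) + 1) ^ (1 - γ) * (1 / ((M : ℝ) + 1)) := by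
      rw [show -γ = (1 - γ) - 1 by ring, Real.rpow_sub_one hy.ne']; ring
    have hpos : 0 < ((M : ℝ) + 1) ^ (1 - γ) := Real.rpow_pos_of_pos hy _
    have h2 : (1 - γ) * ((M : ℝ) + 1) ^ (-γ) ≤ ((M : ℝ) + 1) ^ (1 - γ) - (M : ℝ) ^ (1 - γ) := by
      rw [hM, hq]
      nlinarith [mul_le_mul_of_nonneg_left hb hpos.le]
    push_cast
    rw [le_div_iff₀ hp] at ih ⊢
    nlinarith

/-- Telescoping against `k ^ (1 - τ)`, by `log x ≤ x - 1` and `x + 1 ≤ exp x`. -/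
lemma sum_rpow_neg_tail_le {τ : ℝ} (h1 : 1 < τ) (n M : ℕ) :
    ∑ j ∈ Finset.range M, ((n : ℝ) + 1 + j + 1) ^ (-τ) ≤ ((n : ℝ) + 1) ^ (1 - τ) / (τ - 1) := by
  have hp : 0 < τ - 1 := by linarith
  have key : ∑ j ∈ Finset.range M, ((n : ℝ) + 1 + j + 1) ^ (-τ) ≤
      (((n : ℝ) + 1) ^ (1 - τ) - ((n : ℝ) + 1 + M) ^ (1 - τ)) / (τ - 1) := by
    induction M with
    | zero => simp
    | succ M ih =>
      rw [Finset.sum_range_succ]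
      have hx : (0 : ℝ) < (n : ℝ) + 1 + M := by positivity
      have hy : (0 : ℝ) < (n : ℝ) + 1 + M + 1 := by positivity
      have hpos : 0 < ((n : ℝ) + 1 + M + 1) ^ (1 - τ) := Real.rpow_pos_of_pos hy _
      have hq : ((n : ℝ) + 1 + M + 1) ^ (-τ) =
          ((n : ℝ) + 1 + M + 1) ^ (1 - τ) * (1 / ((n : ℝ) + 1 + M + 1)) := by
        rw [show -τ = (1 - τ) - 1 by ring, Real.rpow_sub_one hy.ne']; ring
      have hb : 1 + (τ - 1) * (1 / ((n : ℝ) + 1 + M + 1)) ≤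
          (((n : ℝ) + 1 + M) / ((n : ℝ) + 1 + M + 1)) ^ (1 - τ) := by
        have hd : 0 < ((n : ℝ) + 1 + M) / ((n : ℝ) + 1 + M + 1) := by positivity
        rw [Real.rpow_def_of_pos hd]
        have hl := Real.log_le_sub_one_of_pos hd
        have e : ((n : ℝ) + 1 + M) / ((n : ℝ) + 1 + M + 1) - 1 = -(1 / ((n : ℝ) + 1 + M + 1)) := by
          field_simp; ring
        rw [e] at hl
        have := Real.add_one_le_exp (Real.log (((n : ℝ) + 1 + M) / ((n : ℝ) + 1 + M + 1)) * (1 - τ))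
        nlinarith
      have hM : ((n : ℝ) + 1 + M) ^ (1 - τ) = ((n : ℝ) + 1 + M + 1) ^ (1 - τ) *
          (((n : ℝ) + 1 + M) / ((n : ℝ) + 1 + M + 1)) ^ (1 - τ) := by
        rw [← Real.mul_rpow hy.le (by positivity)]
        congr 1; field_simp
      have h2 : (τ - 1) * ((n : ℝ) + 1 + M + 1) ^ (-τ) ≤
          ((n : ℝ) + 1 + M) ^ (1 - τ) - ((n : ℝ) + 1 + M + 1) ^ (1 - τ) := by
        rw [hM, hq]
        nlinarith [mul_le_mul_of_nonneg_left hb hpos.le]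
      push_cast
      rw [← add_assoc ((n : ℝ) + 1)]
      rw [le_div_iff₀ hp] at ih ⊢
      nlinarith
  refine key.trans ?_
  gcongr
  linarith [Real.rpow_nonneg (by positivity : (0 : ℝ) ≤ (n : ℝ) + 1 + M) (1 - τ)]

/-- The row sums in the Schur test. The sum is split at `k = n`: there `n + k + 1` is bounded below
by `n + 1` for small `k`, and by `k + 1` for large `k`. -/
lemma schur_sum_le {σ γ : ℝ} (hσ : 0 < σ) (h0 : 0 < γ) (h1 : γ < 1) (hs : 1 < σ + γ) :
    ∃ C : ℝ, 0 < C ∧ ∀ n M : ℕ,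
      ∑ k ∈ Finset.range M, ((n : ℝ) + k + 1) ^ (-σ) * ((k : ℝ) + 1) ^ (-γ) ≤
        C * ((n : ℝ) + 1) ^ (1 - σ - γ) := by
  have hp : 0 < 1 - γ := by linarith
  have hq : 0 < σ + γ - 1 := by linarith
  refine ⟨1 / (1 - γ) + 1 / (σ + γ - 1), by positivity, fun n M => ?_⟩
  have hx : (0 : ℝ) < (n : ℝ) + 1 := by positivity
  calc ∑ k ∈ Finset.range M, ((n : ℝ) + k + 1) ^ (-σ) * ((k : ℝ) + 1) ^ (-γ)
      ≤ ∑ k ∈ Finset.range (n + 1 + M), ((n : ℝ) + k + 1) ^ (-σ) * ((k : ℝ) + 1) ^ (-γ) := by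
        apply Finset.sum_le_sum_of_subset_of_nonneg
        · intro k hk; simp only [Finset.mem_range] at *; omega
        · intros; positivity
    _ = ∑ k ∈ Finset.range (n + 1), ((n : ℝ) + k + 1) ^ (-σ) * ((k : ℝ) + 1) ^ (-γ) +
        ∑ j ∈ Finset.range M, ((n : ℝ) + ((n + 1 + j : ℕ) : ℝ) + 1) ^ (-σ) *
          (((n + 1 + j : ℕ) : ℝ) + 1) ^ (-γ) := by rw [Finset.sum_range_add]
    _ ≤ ((n : ℝ) + 1) ^ (-σ) * ∑ k ∈ Finset.range (n + 1), ((k : ℝ) + 1) ^ (-γ) +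
        ∑ j ∈ Finset.range M, ((n : ℝ) + 1 + j + 1) ^ (-(σ + γ)) := by
        rw [Finset.mul_sum]
        refine add_le_add (Finset.sum_le_sum fun k _ => ?_) (Finset.sum_le_sum fun j _ => ?_)
        · refine mul_le_mul_of_nonneg_right ?_ (by positivity)
          exact Real.rpow_le_rpow_of_nonpos hx
            (by linarith [(Nat.cast_nonneg k : (0 : ℝ) ≤ k)]) (by linarith)
        · push_cast
          have hy : (0 : ℝ) < (n : ℝ) + 1 + j + 1 := by positivity
          rw [neg_add, Real.rpow_add hy]
          refine mul_le_mul_of_nonneg_right ?_ (by positivity)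
          exact Real.rpow_le_rpow_of_nonpos hy
            (by linarith [(Nat.cast_nonneg n : (0 : ℝ) ≤ n)]) (by linarith)
    _ ≤ ((n : ℝ) + 1) ^ (-σ) * (((n : ℝ) + 1) ^ (1 - γ) / (1 - γ)) +
        ((n : ℝ) + 1) ^ (1 - (σ + γ)) / (σ + γ - 1) := by
        have a := sum_rpow_neg_le h0 h1 (n + 1)
        push_cast at a
        exact add_le_add (mul_le_mul_of_nonneg_left a (by positivity))
          (sum_rpow_neg_tail_le hs n M)
    _ = (1 / (1 - γ) + 1 / (σ + γ - 1)) * ((n : ℝ) + 1) ^ (1 - σ - γ) := by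
        rw [show 1 - (σ + γ) = 1 - σ - γ by ring, show 1 - σ - γ = -σ + (1 - γ) by ring,
          Real.rpow_add hx]
        ring

/-- The weighted Hilbert inequality for the kernel `(n + k + 1) ^ (-(1 + (β - α) / 2))`, on
truncated sums, by the Schur test with weights `(k + 1) ^ ((1 + α) / 2)` and
`(n + 1) ^ (-(1 - β) / 2)`. The four bounds on `α` and `β` are exactly what makes the two
applications of `schur_sum_le` legitimate. -/
lemma hilbert_finite_le {α β : ℝ} (hα₁ : -1 < α) (hα₂ : α < 1) (hβ₁ : -1 < β) (hβ₂ : β < 1) :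
    ∃ C : ℝ, 0 < C ∧ ∀ (b : ℕ → ℝ) (L M : ℕ),
      ∑ n ∈ Finset.range L, ((n : ℝ) + 1) ^ β *
        (∑ k ∈ Finset.range M, ((n : ℝ) + k + 1) ^ (-(1 + (β - α) / 2)) * b k) ^ 2 ≤
      C * ∑ k ∈ Finset.range M, ((k : ℝ) + 1) ^ α * b k ^ 2 := by
  set σ := 1 + (β - α) / 2 with hσ
  obtain ⟨C₁, hC₁, H₁⟩ := schur_sum_le (σ := σ) (γ := (1 + α) / 2) (by linarith) (by linarith)
    (by linarith) (by linarith)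
  obtain ⟨C₂, hC₂, H₂⟩ := schur_sum_le (σ := σ) (γ := (1 - β) / 2) (by linarith) (by linarith)
    (by linarith) (by linarith)
  refine ⟨C₁ * C₂, by positivity, fun b L M => ?_⟩
  calc ∑ n ∈ Finset.range L, ((n : ℝ) + 1) ^ β *
        (∑ k ∈ Finset.range M, ((n : ℝ) + k + 1) ^ (-σ) * b k) ^ 2
      ≤ ∑ n ∈ Finset.range L, C₁ * ∑ k ∈ Finset.range M, ((k : ℝ) + 1) ^ ((1 + α) / 2) * b k ^ 2 *
          (((k : ℝ) + n + 1) ^ (-σ) * ((n : ℝ) + 1) ^ (-((1 - β) / 2))) := by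
        refine Finset.sum_le_sum fun n _ => ?_
        have hx : (0 : ℝ) < (n : ℝ) + 1 := by positivity
        have cs : (∑ k ∈ Finset.range M, ((n : ℝ) + k + 1) ^ (-σ) * b k) ^ 2 ≤
            (∑ k ∈ Finset.range M, ((n : ℝ) + k + 1) ^ (-σ) * ((k : ℝ) + 1) ^ (-((1 + α) / 2))) *
            ∑ k ∈ Finset.range M, ((n : ℝ) + k + 1) ^ (-σ) *
              (((k : ℝ) + 1) ^ ((1 + α) / 2) * b k ^ 2) := by
          refine Finset.sum_sq_le_sum_mul_sum_of_sq_le_mul _ (fun k _ => by positivity)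
            (fun k _ => by positivity) (fun k _ => ?_)
          have hy : (0 : ℝ) < (k : ℝ) + 1 := by positivity
          rw [Real.rpow_neg hy.le ((1 + α) / 2)]
          have := (Real.rpow_pos_of_pos hy ((1 + α) / 2)).ne'
          field_simp
          rfl
        have hS : 0 ≤ ∑ k ∈ Finset.range M, ((n : ℝ) + k + 1) ^ (-σ) *
              (((k : ℝ) + 1) ^ ((1 + α) / 2) * b k ^ 2) :=
          Finset.sum_nonneg fun k _ => by positivity
        calc _ ≤ ((n : ℝ) + 1) ^ β * ((C₁ * ((n : ℝ) + 1) ^ (1 - σ - (1 + α) / 2)) *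
              ∑ k ∈ Finset.range M, ((n : ℝ) + k + 1) ^ (-σ) *
              (((k : ℝ) + 1) ^ ((1 + α) / 2) * b k ^ 2)) := by
              refine mul_le_mul_of_nonneg_left (cs.trans ?_) (by positivity)
              exact mul_le_mul_of_nonneg_right (H₁ n M) hS
          _ = C₁ * (((n : ℝ) + 1) ^ (-((1 - β) / 2)) *
              ∑ k ∈ Finset.range M, ((n : ℝ) + k + 1) ^ (-σ) *
              (((k : ℝ) + 1) ^ ((1 + α) / 2) * b k ^ 2)) := by
              rw [show -((1 - β) / 2) = β + (1 - σ - (1 + α) / 2) by rw [hσ]; ring,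
                Real.rpow_add hx]
              ring
          _ = _ := by
              rw [Finset.mul_sum]
              congr 1
              refine Finset.sum_congr rfl fun k _ => ?_
              rw [add_comm (n : ℝ) k]; ring
    _ = C₁ * ∑ k ∈ Finset.range M, ((k : ℝ) + 1) ^ ((1 + α) / 2) * b k ^ 2 *
          ∑ n ∈ Finset.range L, ((k : ℝ) + n + 1) ^ (-σ) * ((n : ℝ) + 1) ^ (-((1 - β) / 2)) := by
        rw [← Finset.mul_sum, Finset.sum_comm]
        simp_rw [Finset.mul_sum]
    _ ≤ C₁ * ∑ k ∈ Finset.range M, ((k : ℝ) + 1) ^ ((1 + α) / 2) * b k ^ 2 *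
          (C₂ * ((k : ℝ) + 1) ^ (1 - σ - (1 - β) / 2)) := by
        refine mul_le_mul_of_nonneg_left (Finset.sum_le_sum fun k _ => ?_) hC₁.le
        exact mul_le_mul_of_nonneg_left (H₂ k L) (by positivity)
    _ = C₁ * C₂ * ∑ k ∈ Finset.range M, ((k : ℝ) + 1) ^ α * b k ^ 2 := by
        rw [mul_assoc, Finset.mul_sum (a := C₂)]
        congr 1
        refine Finset.sum_congr rfl fun k _ => ?_
        have hy : (0 : ℝ) < (k : ℝ) + 1 := by positivity
        have e : ((k : ℝ) + 1) ^ α =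
            ((k : ℝ) + 1) ^ ((1 + α) / 2) * ((k : ℝ) + 1) ^ (1 - σ - (1 - β) / 2) := by
          rw [← Real.rpow_add hy]; congr 1; rw [hσ]; ring
        rw [e]; ring

/-! ### Carleson measures give bounded operators -/

lemma integrable_pow_Ico (μ : Measure ℝ) [IsFiniteMeasure μ] (m : ℕ) :
    Integrable (fun t : ℝ => t ^ m) (μ.restrict (Set.Ico 0 1)) := by
  refine Integrable.of_bound (C := 1) (by fun_prop) ?_
  filter_upwards [ae_restrict_mem measurableSet_Ico] with t ht
  rw [Real.norm_of_nonneg (pow_nonneg ht.1 m)]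
  exact pow_le_one₀ ht.1 ht.2.le

/-- Carleson measures have moments of order `(m + 1) ^ (-σ)`: decompose `[0, 1)` according to the
integer part `i` of `(m + 1) (1 - t)`; on the `i`-th piece `t ^ m ≤ exp (1 - i)`, and the piece
lies within distance `(i + 1) / (m + 1)` of `1`. -/
lemma moment_le {σ C₁ : ℝ} (h0 : 0 < σ) (h2 : σ ≤ 2) (hC₁ : 0 < C₁) (μ : Measure ℝ)
    [IsFiniteMeasure μ]
    (hcar : ∀ t ∈ Set.Ico (0 : ℝ) 1, μ (Set.Ico t 1) ≤ ENNReal.ofReal (C₁ * (1 - t) ^ σ)) :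
    ∃ M : ℝ, 0 < M ∧ ∀ m : ℕ,
      ∫ t in Set.Ico (0 : ℝ) 1, t ^ m ∂μ ≤ M * ((m : ℝ) + 1) ^ (-σ) := by
  set g : ℕ → ℝ := fun i => Real.exp (1 - i) * ((i : ℝ) + 1) ^ 2 with hg
  have hgpos : ∀ i, 0 < g i := fun i => by simp only [hg]; positivity
  have hgs : Summable g := by
    have h := (summable_nat_add_iff 1).2 (Real.summable_pow_mul_exp_neg_nat_mul 2 (r := 1) one_pos)
    refine (h.mul_left (Real.exp 2)).congr fun i => ?_
    simp only [hg]
    push_cast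
    rw [mul_left_comm, ← Real.exp_add, mul_comm]
    congr 2; ring
  refine ⟨C₁ * ∑' i, g i, mul_pos hC₁ (hgs.tsum_pos (fun i => (hgpos i).le) 0 (hgpos 0)),
    fun m => ?_⟩
  have hm : (0 : ℝ) < (m : ℝ) + 1 := by positivity
  set c : ℕ → ℝ := fun i => 1 - ((i : ℝ) + 1) / ((m : ℝ) + 1) with hc
  have hpt : ∀ t ∈ Set.Ico (0 : ℝ) 1, ENNReal.ofReal (t ^ m) ≤
      ∑' i : ℕ, (Set.Ici (c i)).indicator (fun _ => ENNReal.ofReal (Real.exp (1 - i))) t := by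
    intro t ht
    have hu : 0 ≤ ((m : ℝ) + 1) * (1 - t) := mul_nonneg hm.le (by linarith [ht.2])
    set i := ⌊((m : ℝ) + 1) * (1 - t)⌋₊ with hi
    have h1 : ((m : ℝ) + 1) * (1 - t) < i + 1 := Nat.lt_floor_add_one _
    have h2 : (i : ℝ) ≤ ((m : ℝ) + 1) * (1 - t) := Nat.floor_le hu
    refine le_trans ?_ (ENNReal.le_tsum i)
    have hmem : t ∈ Set.Ici (c i) := by
      have : 1 - t ≤ ((i : ℝ) + 1) / ((m : ℝ) + 1) := by
        rw [le_div_iff₀ hm]; linarith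
      simp only [hc, Set.mem_Ici]; linarith
    rw [Set.indicator_of_mem hmem]
    apply ENNReal.ofReal_le_ofReal
    have h3 : t ≤ Real.exp (t - 1) := by linarith [Real.add_one_le_exp (t - 1)]
    calc t ^ m ≤ Real.exp (t - 1) ^ m := pow_le_pow_left₀ ht.1 h3 m
      _ = Real.exp (m * (t - 1)) := by rw [← Real.exp_nat_mul]
      _ ≤ _ := Real.exp_le_exp.2 (by nlinarith [ht.1])
  have hint := integrable_pow_Ico μ m
  have hnn : 0 ≤ᵐ[μ.restrict (Set.Ico 0 1)] (fun t : ℝ => t ^ m) := by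
    filter_upwards [ae_restrict_mem measurableSet_Ico] with t ht
    exact pow_nonneg ht.1 m
  have hR : 0 ≤ C₁ * (∑' i, g i) * ((m : ℝ) + 1) ^ (-σ) :=
    mul_nonneg (mul_nonneg hC₁.le (tsum_nonneg fun i => (hgpos i).le)) (by positivity)
  rw [← ENNReal.ofReal_le_ofReal_iff hR, ofReal_integral_eq_lintegral_ofReal hint hnn]
  calc ∫⁻ t in Set.Ico (0 : ℝ) 1, ENNReal.ofReal (t ^ m) ∂μ
      ≤ ∫⁻ t in Set.Ico (0 : ℝ) 1, ∑' i : ℕ,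
          (Set.Ici (c i)).indicator (fun _ => ENNReal.ofReal (Real.exp (1 - i))) t ∂μ :=
        setLIntegral_mono' measurableSet_Ico hpt
    _ = ∑' i : ℕ, ENNReal.ofReal (Real.exp (1 - i)) * μ (Set.Ici (c i) ∩ Set.Ico 0 1) := by
        rw [lintegral_tsum fun i => (measurable_const.indicator measurableSet_Ici).aemeasurable]
        refine tsum_congr fun i => ?_
        rw [lintegral_indicator_const measurableSet_Ici, Measure.restrict_apply measurableSet_Ici]
    _ ≤ ∑' i : ℕ, ENNReal.ofReal (C₁ * ((m : ℝ) + 1) ^ (-σ) * g i) := by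
        refine ENNReal.tsum_le_tsum fun i => ?_
        have hd : 0 < ((i : ℝ) + 1) / ((m : ℝ) + 1) := by positivity
        have hmax : max 0 (c i) < 1 := max_lt one_pos (by simp only [hc]; linarith)
        have hsub : Set.Ici (c i) ∩ Set.Ico 0 1 ⊆ Set.Ico (max 0 (c i)) 1 :=
          fun t ht => ⟨max_le ht.2.1 ht.1, ht.2.2⟩
        have hle := (measure_mono hsub).trans (hcar _ ⟨le_max_left _ _, hmax⟩)
        refine (mul_le_mul_right hle _).trans ?_
        rw [← ENNReal.ofReal_mul (Real.exp_pos _).le]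
        apply ENNReal.ofReal_le_ofReal
        have h3 : (1 - max 0 (c i)) ^ σ ≤ (((i : ℝ) + 1) / ((m : ℝ) + 1)) ^ σ := by
          refine Real.rpow_le_rpow (by linarith) ?_ h0.le
          have := le_max_right 0 (c i)
          simp only [hc] at this ⊢; linarith
        have h4 : ((i : ℝ) + 1) ^ σ ≤ ((i : ℝ) + 1) ^ 2 := by
          rw [← Real.rpow_natCast]
          exact Real.rpow_le_rpow_of_exponent_le (by simp) (by exact_mod_cast h2)
        rw [Real.div_rpow (by positivity) hm.le, div_eq_mul_inv, ← Real.rpow_neg hm.le] at h3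
        calc Real.exp (1 - i) * (C₁ * (1 - max 0 (c i)) ^ σ)
            ≤ Real.exp (1 - i) * (C₁ * (((i : ℝ) + 1) ^ 2 * ((m : ℝ) + 1) ^ (-σ))) := by
              gcongr
              exact h3.trans (by gcongr)
          _ = _ := by simp only [hg]; ring
    _ = ENNReal.ofReal (C₁ * (∑' i, g i) * ((m : ℝ) + 1) ^ (-σ)) := by
        rw [← ENNReal.ofReal_tsum_of_nonneg
          (fun i => mul_nonneg (by positivity) (hgpos i).le) (hgs.mul_left _), tsum_mul_left]
        congr 1; ring

lemma comparable_add_one {θ : ℝ} (hθ : 0 < θ) : ∃ A : ℝ, 1 ≤ A ∧ ∀ k : ℕ,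
    (k : ℝ) + θ ≤ A * ((k : ℝ) + 1) ∧ (k : ℝ) + 1 ≤ A * ((k : ℝ) + θ) := by
  have hi : 0 < 1 / θ := by positivity
  have e : 1 / θ * θ = 1 := by field_simp
  refine ⟨1 + θ + 1 / θ, by linarith, fun k => ?_⟩
  have hk : (0 : ℝ) ≤ k := Nat.cast_nonneg k
  constructor
  · nlinarith [mul_nonneg hθ.le hk, mul_nonneg hi.le hk]
  · nlinarith [mul_nonneg hθ.le hk, mul_nonneg hi.le hk]

/-- Boundedness of the operator with a Hankel matrix `K (k + n)` of size at most that of the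
power kernel. Truncated sums are estimated first, which also yields convergence of the inner
series. -/
lemma bounded_of_moment_le {θ α β M : ℝ} (hθ : 0 < θ) (hα₁ : -1 < α) (hα₂ : α < 1)
    (hβ₁ : -1 < β) (hβ₂ : β < 1) (K : ℕ → ℝ) (hK0 : ∀ m, 0 ≤ K m) (hM : 0 < M)
    (hK : ∀ m : ℕ, K m ≤ M * ((m : ℝ) + 1) ^ (-(1 + (β - α) / 2))) :
    ∃ C : ℝ, 0 < C ∧ ∀ a : ℕ → ℂ,
      Summable (fun k : ℕ => ((k : ℝ) + θ) ^ α * ‖a k‖ ^ 2 * (Nat.factorial k : ℝ)) →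
      ∑' n : ℕ, ((n : ℝ) + θ) ^ β *
          ‖∑' k : ℕ, ((K (k + n) * Real.sqrt (Nat.factorial k) : ℝ) : ℂ) * a k‖ ^ 2
        ≤ C * ∑' k : ℕ, ((k : ℝ) + θ) ^ α * ‖a k‖ ^ 2 * (Nat.factorial k : ℝ) := by
  obtain ⟨C, hC, H⟩ := hilbert_finite_le hα₁ hα₂ hβ₁ hβ₂
  obtain ⟨A, hA, hcomp⟩ := comparable_add_one hθ
  have hA0 : 0 < A := by linarith
  refine ⟨A ^ |β| * M ^ 2 * C * A ^ |α|, by positivity, fun a ha => ?_⟩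
  set S := ∑' k : ℕ, ((k : ℝ) + θ) ^ α * ‖a k‖ ^ 2 * (Nat.factorial k : ℝ) with hS
  set b : ℕ → ℝ := fun k => Real.sqrt (Nat.factorial k) * ‖a k‖ with hb
  have hb0 : ∀ k, 0 ≤ b k := fun k => by simp only [hb]; positivity
  have hbS : ∀ N : ℕ, ∑ k ∈ Finset.range N, ((k : ℝ) + 1) ^ α * b k ^ 2 ≤ A ^ |α| * S := by
    intro N
    calc ∑ k ∈ Finset.range N, ((k : ℝ) + 1) ^ α * b k ^ 2
        ≤ ∑ k ∈ Finset.range N,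
            A ^ |α| * (((k : ℝ) + θ) ^ α * ‖a k‖ ^ 2 * (Nat.factorial k : ℝ)) := by
          refine Finset.sum_le_sum fun k _ => ?_
          have h1 := rpow_le_of_comparable α (by positivity : (0 : ℝ) < (k : ℝ) + 1)
            (by positivity : (0 : ℝ) < (k : ℝ) + θ) hA (hcomp k).2 (hcomp k).1
          simp only [hb]
          rw [mul_pow, Real.sq_sqrt (Nat.cast_nonneg _)]
          nlinarith [mul_le_mul_of_nonneg_right h1
            (by positivity : 0 ≤ (Nat.factorial k : ℝ) * ‖a k‖ ^ 2)]
      _ ≤ A ^ |α| * S := by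
          rw [← Finset.mul_sum]
          exact mul_le_mul_of_nonneg_left
            (ha.sum_le_tsum _ fun k _ => by positivity) (by positivity)
  -- All estimates are first made for truncated sums.
  have hfin : ∀ L N : ℕ, ∑ n ∈ Finset.range L, ((n : ℝ) + θ) ^ β *
      (∑ k ∈ Finset.range N, K (k + n) * b k) ^ 2 ≤ A ^ |β| * M ^ 2 * C * A ^ |α| * S := by
    intro L N
    calc ∑ n ∈ Finset.range L, ((n : ℝ) + θ) ^ β * (∑ k ∈ Finset.range N, K (k + n) * b k) ^ 2
        ≤ ∑ n ∈ Finset.range L, A ^ |β| * M ^ 2 * (((n : ℝ) + 1) ^ β *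
          (∑ k ∈ Finset.range N, ((n : ℝ) + k + 1) ^ (-(1 + (β - α) / 2)) * b k) ^ 2) := by
          refine Finset.sum_le_sum fun n _ => ?_
          have h1 := rpow_le_of_comparable β (by positivity : (0 : ℝ) < (n : ℝ) + θ)
            (by positivity : (0 : ℝ) < (n : ℝ) + 1) hA (hcomp n).1 (hcomp n).2
          have h2 : ∑ k ∈ Finset.range N, K (k + n) * b k ≤
              M * ∑ k ∈ Finset.range N, ((n : ℝ) + k + 1) ^ (-(1 + (β - α) / 2)) * b k := by
            rw [Finset.mul_sum]
            refine Finset.sum_le_sum fun k _ => ?_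
            have := mul_le_mul_of_nonneg_right (hK (k + n)) (hb0 k)
            push_cast at this
            rw [add_comm (n : ℝ) k, ← mul_assoc M]
            exact this
          have h3 : 0 ≤ ∑ k ∈ Finset.range N, K (k + n) * b k :=
            Finset.sum_nonneg fun k _ => mul_nonneg (hK0 _) (hb0 _)
          have h4 := mul_le_mul h1 (pow_le_pow_left₀ h3 h2 2) (by positivity) (by positivity)
          rw [mul_pow] at h4
          refine h4.trans (le_of_eq ?_)
          ring
      _ ≤ A ^ |β| * M ^ 2 * (C * (A ^ |α| * S)) := by
          rw [← Finset.mul_sum]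
          refine mul_le_mul_of_nonneg_left ((H b L N).trans ?_) (by positivity)
          exact mul_le_mul_of_nonneg_left (hbS N) hC.le
      _ = _ := by ring
  have hsum : ∀ n, Summable fun k => K (k + n) * b k := by
    intro n
    have hw : 0 < ((n : ℝ) + θ) ^ β := by positivity
    refine summable_of_sum_range_le (c := Real.sqrt (A ^ |β| * M ^ 2 * C * A ^ |α| * S /
      ((n : ℝ) + θ) ^ β)) (fun k => mul_nonneg (hK0 _) (hb0 _)) fun N => ?_
    apply Real.le_sqrt_of_sq_le
    rw [le_div_iff₀ hw, mul_comm]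
    refine le_trans ?_ (hfin (n + 1) N)
    exact Finset.single_le_sum (f := fun n : ℕ => ((n : ℝ) + θ) ^ β *
      (∑ k ∈ Finset.range N, K (k + n) * b k) ^ 2) (fun i _ => by positivity) (by simp)
  have hnorm : ∀ n k, ‖((K (k + n) * Real.sqrt (Nat.factorial k) : ℝ) : ℂ) * a k‖ =
      K (k + n) * b k := by
    intro n k
    rw [norm_mul, Complex.norm_real, Real.norm_of_nonneg (mul_nonneg (hK0 _) (Real.sqrt_nonneg _)),
      mul_assoc]
  refine Real.tsum_le_of_sum_range_le (fun n => by positivity) fun L => ?_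
  calc ∑ n ∈ Finset.range L, ((n : ℝ) + θ) ^ β *
          ‖∑' k : ℕ, ((K (k + n) * Real.sqrt (Nat.factorial k) : ℝ) : ℂ) * a k‖ ^ 2
      ≤ ∑ n ∈ Finset.range L, ((n : ℝ) + θ) ^ β * (∑' k, K (k + n) * b k) ^ 2 := by
        refine Finset.sum_le_sum fun n _ => ?_
        have h1 : ‖∑' k : ℕ, ((K (k + n) * Real.sqrt (Nat.factorial k) : ℝ) : ℂ) * a k‖ ≤
            ∑' k, K (k + n) * b k := by
          rw [← tsum_congr (hnorm n)]
          exact norm_tsum_le_tsum_norm ((hsum n).congr fun k => (hnorm n k).symm)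
        gcongr
    _ ≤ _ := by
        have hlim : Filter.Tendsto (fun N => ∑ n ∈ Finset.range L, ((n : ℝ) + θ) ^ β *
          (∑ k ∈ Finset.range N, K (k + n) * b k) ^ 2) Filter.atTop
          (nhds (∑ n ∈ Finset.range L, ((n : ℝ) + θ) ^ β * (∑' k, K (k + n) * b k) ^ 2)) :=
          tendsto_finsetSum _ fun n _ => (((hsum n).hasSum.tendsto_sum_nat).pow 2).const_mul _
        exact le_of_tendsto' hlim (hfin L)

/-! ### Bounded operators come from Carleson measures -/

lemma pow_mul_one_add_le {t : ℝ} (h0 : 0 ≤ t) (h1 : t ≤ 1) (m : ℕ) :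
    t ^ m * (1 + m * (1 - t)) ≤ 1 := by
  have hb := one_add_mul_le_pow (a := 1 - t) (by linarith) m
  calc t ^ m * (1 + m * (1 - t)) ≤ t ^ m * (1 + (1 - t)) ^ m :=
        mul_le_mul_of_nonneg_left hb (pow_nonneg h0 m)
    _ = (t * (1 + (1 - t))) ^ m := by rw [mul_pow]
    _ ≤ 1 := pow_le_one₀ (mul_nonneg h0 (by linarith)) (by nlinarith [sq_nonneg (1 - t)])

/-- The moments of `(1 - t ^ N) dμ` decay like `1 / (m + 1)` for any finite `μ`. -/
lemma moment_diff_le (μ : Measure ℝ) [IsFiniteMeasure μ] (m N : ℕ) :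
    (∫ t in Set.Ico (0 : ℝ) 1, t ^ m ∂μ) - ∫ t in Set.Ico (0 : ℝ) 1, t ^ (m + N) ∂μ ≤
      N / ((m : ℝ) + 1) * μ.real Set.univ := by
  have hm : (0 : ℝ) < (m : ℝ) + 1 := by positivity
  rw [← integral_sub (integrable_pow_Ico μ m) (integrable_pow_Ico μ (m + N))]
  calc ∫ t in Set.Ico (0 : ℝ) 1, (t ^ m - t ^ (m + N)) ∂μ
      ≤ ∫ _t in Set.Ico (0 : ℝ) 1, (N / ((m : ℝ) + 1)) ∂μ := by
        refine setIntegral_mono_on ((integrable_pow_Ico μ m).sub (integrable_pow_Ico μ (m + N)))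
          (integrable_const _) measurableSet_Ico fun t ht => ?_
        have h1 := pow_mul_one_add_le ht.1 ht.2.le m
        have h2 : 1 - t ^ N ≤ N * (1 - t) := by
          have := one_add_mul_le_pow (a := t - 1) (by linarith [ht.1]) N
          simp only [add_sub_cancel] at this
          linarith
        have h3 : 0 ≤ t ^ m := pow_nonneg ht.1 m
        have h4 : t ^ m * (((m : ℝ) + 1) * (1 - t)) ≤ 1 := by
          nlinarith [mul_nonneg h3 ht.1]
        rw [le_div_iff₀ hm, pow_add]
        calc (t ^ m - t ^ m * t ^ N) * ((m : ℝ) + 1) = t ^ m * ((m : ℝ) + 1) * (1 - t ^ N) := by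
              ring
          _ ≤ t ^ m * ((m : ℝ) + 1) * (N * (1 - t)) := by gcongr
          _ = N * (t ^ m * (((m : ℝ) + 1) * (1 - t))) := by ring
          _ ≤ N * 1 := by gcongr
          _ = N := mul_one _
    _ = N / ((m : ℝ) + 1) * μ.real (Set.Ico 0 1) := by
        rw [setIntegral_const, smul_eq_mul, mul_comm]
    _ ≤ _ := by
        exact mul_le_mul_of_nonneg_left (measureReal_mono (Set.subset_univ _)) (by positivity)

/-- With `N = 2 * P`, on the annulus `1 / (2 * N) < 1 - t ≤ 1 / N` one has `t ^ m ≥ 1 / 256` for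
`m ≤ 4 * N`, and `1 - t ^ N ≥ 1 / 3`; hence the constant `768`. -/
lemma le_moment_diff (μ : Measure ℝ) [IsFiniteMeasure μ] {P m : ℕ} (hP : 1 ≤ P) (hm : m ≤ 8 * P) :
    μ.real (Set.Ico (1 - 1 / (2 * P : ℝ)) (1 - 1 / (4 * P : ℝ))) / 768 ≤
    (∫ t in Set.Ico (0 : ℝ) 1, t ^ m ∂μ) - ∫ t in Set.Ico (0 : ℝ) 1, t ^ (m + 2 * P) ∂μ := by
  have hP' : (1 : ℝ) ≤ P := by exact_mod_cast hP
  have hsub : Set.Ico (1 - 1 / (2 * P : ℝ)) (1 - 1 / (4 * P : ℝ)) ⊆ Set.Ico 0 1 := by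
    refine Set.Ico_subset_Ico ?_ ?_
    · rw [sub_nonneg, div_le_one (by positivity)]; linarith
    · have : 0 < 1 / (4 * P : ℝ) := by positivity
      linarith
  have hint := (integrable_pow_Ico μ m).sub (integrable_pow_Ico μ (m + 2 * P))
  rw [← integral_sub (integrable_pow_Ico μ m) (integrable_pow_Ico μ (m + 2 * P))]
  calc μ.real (Set.Ico (1 - 1 / (2 * P : ℝ)) (1 - 1 / (4 * P : ℝ))) / 768
      = ∫ _t in Set.Ico (1 - 1 / (2 * P : ℝ)) (1 - 1 / (4 * P : ℝ)), (1 / 768 : ℝ) ∂μ := by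
        rw [setIntegral_const, smul_eq_mul]; ring
    _ ≤ ∫ t in Set.Ico (1 - 1 / (2 * P : ℝ)) (1 - 1 / (4 * P : ℝ)), (t ^ m - t ^ (m + 2 * P)) ∂μ := by
        refine setIntegral_mono_on (integrable_const _)
          (IntegrableOn.mono_set hint hsub) measurableSet_Ico fun t ht => ?_
        obtain ⟨t0, t1⟩ := hsub ht
        have hl : P * (1 - t) ≤ 1 / 2 := by
          have : 1 - t ≤ 1 / (2 * P : ℝ) := by linarith [ht.1]
          calc P * (1 - t) ≤ P * (1 / (2 * P : ℝ)) := by gcongr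
            _ = 1 / 2 := by field_simp
        have hu : 1 / 4 ≤ P * (1 - t) := by
          have : 1 / (4 * P : ℝ) ≤ 1 - t := by linarith [ht.2]
          calc (1 / 4 : ℝ) = P * (1 / (4 * P : ℝ)) := by field_simp
            _ ≤ P * (1 - t) := by gcongr
        have h1 : 1 / 2 ≤ t ^ P := by
          have := one_add_mul_le_pow (a := t - 1) (by linarith) P
          simp only [add_sub_cancel] at this
          linarith
        have h2 : 1 / 256 ≤ t ^ m := by
          calc (1 / 256 : ℝ) = (1 / 2) ^ 8 := by norm_num
            _ ≤ (t ^ P) ^ 8 := by gcongr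
            _ = t ^ (8 * P) := by rw [← pow_mul, mul_comm]
            _ ≤ t ^ m := pow_le_pow_of_le_one t0 t1.le hm
        have h3 : t ^ (2 * P) ≤ 2 / 3 := by
          have := pow_mul_one_add_le t0 t1.le (2 * P)
          push_cast at this
          nlinarith [pow_nonneg t0 (2 * P)]
        rw [pow_add]
        nlinarith
    _ ≤ ∫ t in Set.Ico (0 : ℝ) 1, (t ^ m - t ^ (m + 2 * P)) ∂μ := by
        refine setIntegral_mono_set hint ?_ hsub.eventuallyLE
        filter_upwards [ae_restrict_mem measurableSet_Ico] with t ht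
        exact sub_nonneg.2 (pow_le_pow_of_le_one ht.1 ht.2.le (by omega))

lemma moment_diff_nonneg (μ : Measure ℝ) [IsFiniteMeasure μ] (m N : ℕ) :
    0 ≤ (∫ t in Set.Ico (0 : ℝ) 1, t ^ m ∂μ) - ∫ t in Set.Ico (0 : ℝ) 1, t ^ (m + N) ∂μ := by
  rw [← integral_sub (integrable_pow_Ico μ m) (integrable_pow_Ico μ (m + N))]
  refine setIntegral_nonneg measurableSet_Ico fun t ht => ?_
  exact sub_nonneg.2 (pow_le_pow_of_le_one ht.1 ht.2.le (by omega))

/-- The coefficients of the test polynomial `t ^ N (1 - t ^ N) (1 + t + ⋯ + t ^ (N - 1))`: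
`1` on `[N, 2N)`, `-1` on `[2N, 3N)`, and `0` elsewhere. -/
def blockSign (N k : ℕ) : ℝ :=
  if k < N then 0 else if k < N + N then 1 else if k < N + N + N then -1 else 0

lemma sum_mul_blockSign (N : ℕ) (f : ℕ → ℝ) :
    ∑ k ∈ Finset.range (N + N + N), f k * blockSign N k =
      ∑ i ∈ Finset.range N, (f (N + i) - f (N + i + N)) := by
  rw [Finset.sum_range_add, Finset.sum_range_add, Finset.sum_sub_distrib]
  have h1 : ∑ k ∈ Finset.range N, f k * blockSign N k = 0 :=
    Finset.sum_eq_zero fun k hk => by simp [blockSign, Finset.mem_range.1 hk]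
  have h2 : ∑ i ∈ Finset.range N, f (N + i) * blockSign N (N + i) =
      ∑ i ∈ Finset.range N, f (N + i) :=
    Finset.sum_congr rfl fun i hi => by simp [blockSign, Finset.mem_range.1 hi]
  have h3 : ∑ i ∈ Finset.range N, f (N + N + i) * blockSign N (N + N + i) =
      -∑ i ∈ Finset.range N, f (N + i + N) := by
    rw [← Finset.sum_neg_distrib]
    refine Finset.sum_congr rfl fun i hi => ?_
    have hi' := Finset.mem_range.1 hi
    rw [blockSign, if_neg (by omega), if_neg (by omega), if_pos (by omega),
      show N + N + i = N + i + N by omega]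
    ring
  rw [h1, h2, h3]; ring

lemma sum_mul_blockSign_sq (N : ℕ) (f : ℕ → ℝ) :
    ∑ k ∈ Finset.range (N + N + N), f k * blockSign N k ^ 2 =
      ∑ i ∈ Finset.range (N + N), f (N + i) := by
  rw [add_assoc, Finset.sum_range_add]
  have h1 : ∑ k ∈ Finset.range N, f k * blockSign N k ^ 2 = 0 :=
    Finset.sum_eq_zero fun k hk => by simp [blockSign, Finset.mem_range.1 hk]
  rw [h1, zero_add]
  refine Finset.sum_congr rfl fun i hi => ?_
  have hi' := Finset.mem_range.1 hi
  rw [blockSign, if_neg (by omega)]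
  split_ifs
  · ring
  · ring
  · omega

lemma blockSign_eq_zero {N k : ℕ} (h : k ∉ Finset.range (N + N + N)) : blockSign N k = 0 := by
  simp only [Finset.mem_range] at h
  rw [blockSign, if_neg (by omega), if_neg (by omega), if_neg (by omega)]

/-- Testing the operator on the polynomial with coefficients `blockSign N`, where `N = 2 * P`,
controls the mass of the annulus `1 / (2 * N) < 1 - t ≤ 1 / N`. -/
lemma annulus_le_of_bounded {θ α β C : ℝ} (hθ : 0 < θ) (hβ₂ : β < 1) (hC : 0 < C)
    (μ : Measure ℝ) [IsFiniteMeasure μ]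
    (hbd : ∀ a : ℕ → ℂ,
      Summable (fun k : ℕ => ((k : ℝ) + θ) ^ α * ‖a k‖ ^ 2 * (Nat.factorial k : ℝ)) →
      ∑' n : ℕ, ((n : ℝ) + θ) ^ β *
          ‖∑' k : ℕ, (((∫ t in Set.Ico (0 : ℝ) 1, t ^ (k + n) ∂μ) *
              Real.sqrt (Nat.factorial k) : ℝ) : ℂ) * a k‖ ^ 2
        ≤ C * ∑' k : ℕ, ((k : ℝ) + θ) ^ α * ‖a k‖ ^ 2 * (Nat.factorial k : ℝ)) :
    ∃ Q : ℝ, 0 < Q ∧ ∀ P : ℕ, 1 ≤ P →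
      μ.real (Set.Ico (1 - 1 / (2 * P : ℝ)) (1 - 1 / (4 * P : ℝ))) ≤
        Q * (2 * P : ℝ) ^ (-(1 + (β - α) / 2)) := by
  set B := 3 + θ with hB
  have hB1 : 1 ≤ B := by linarith
  have hB0 : 0 < B := by linarith
  refine ⟨Real.sqrt (768 ^ 2 * (C * 2 * B ^ |α| * B ^ |β|)), by positivity, fun P hP => ?_⟩
  set K : ℕ → ℝ := fun m => ∫ t in Set.Ico (0 : ℝ) 1, t ^ m ∂μ with hK
  set N := 2 * P with hN
  set x := μ.real (Set.Ico (1 - 1 / (2 * P : ℝ)) (1 - 1 / (4 * P : ℝ))) with hx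
  have hx0 : 0 ≤ x := measureReal_nonneg
  have hN0 : (0 : ℝ) < N := by rw [hN]; exact_mod_cast (by omega : 0 < 2 * P)
  have hN1 : (1 : ℝ) ≤ N := by rw [hN]; exact_mod_cast (by omega : 1 ≤ 2 * P)
  have hcomp : ∀ (s : ℝ) (i : ℕ), i < N + N → (((N + i : ℕ) : ℝ) + θ) ^ s ≤ B ^ |s| * (N : ℝ) ^ s ∧
      (N : ℝ) ^ s ≤ B ^ |s| * (((N + i : ℕ) : ℝ) + θ) ^ s := by
    intro s i hi
    have hi' : (i : ℝ) < N + N := by exact_mod_cast hi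
    have hi0 : (0 : ℝ) ≤ i := Nat.cast_nonneg i
    have hpos : (0 : ℝ) < ((N + i : ℕ) : ℝ) + θ := by positivity
    have h1 : ((N + i : ℕ) : ℝ) + θ ≤ B * N := by push_cast; rw [hB]; nlinarith
    have h2 : (N : ℝ) ≤ B * (((N + i : ℕ) : ℝ) + θ) := by
      push_cast; nlinarith
    exact ⟨rpow_le_of_comparable s hpos hN0 hB1 h1 h2, rpow_le_of_comparable s hN0 hpos hB1 h2 h1⟩
  set a : ℕ → ℂ := fun k => ((blockSign N k / Real.sqrt (Nat.factorial k) : ℝ) : ℂ) with ha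
  have hfac : ∀ k : ℕ, 0 < Real.sqrt (Nat.factorial k) :=
    fun k => Real.sqrt_pos.2 (by exact_mod_cast Nat.factorial_pos k)
  have hterm : ∀ k : ℕ, ((k : ℝ) + θ) ^ α * ‖a k‖ ^ 2 * (Nat.factorial k : ℝ) =
      ((k : ℝ) + θ) ^ α * blockSign N k ^ 2 := by
    intro k
    have hne : (Nat.factorial k : ℝ) ≠ 0 := by exact_mod_cast (Nat.factorial_pos k).ne'
    simp only [ha]
    rw [Complex.norm_real, Real.norm_eq_abs, sq_abs, div_pow, Real.sq_sqrt (Nat.cast_nonneg _)]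
    field_simp
  have hzero : ∀ k ∉ Finset.range (N + N + N), ((k : ℝ) + θ) ^ α * blockSign N k ^ 2 = 0 :=
    fun k hk => by rw [blockSign_eq_zero hk]; ring
  have hmain := hbd a (by
    simp_rw [hterm]
    exact summable_of_ne_finset_zero hzero)
  have hin : ∀ n : ℕ, ‖∑' k : ℕ, (((∫ t in Set.Ico (0 : ℝ) 1, t ^ (k + n) ∂μ) *
      Real.sqrt (Nat.factorial k) : ℝ) : ℂ) * a k‖ =
      ∑ i ∈ Finset.range N, (K (N + i + n) - K (N + i + n + N)) := by
    intro n
    have h1 : ∀ k : ℕ, (((∫ t in Set.Ico (0 : ℝ) 1, t ^ (k + n) ∂μ) *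
        Real.sqrt (Nat.factorial k) : ℝ) : ℂ) * a k = ((K (k + n) * blockSign N k : ℝ) : ℂ) := by
      intro k
      simp only [ha, hK]
      rw [← Complex.ofReal_mul]
      congr 1
      have := (hfac k).ne'
      field_simp
    have h2 : ∑' k : ℕ, ((K (k + n) * blockSign N k : ℝ) : ℂ) =
        ((∑ i ∈ Finset.range N, (K (N + i + n) - K (N + i + n + N)) : ℝ) : ℂ) := by
      rw [tsum_eq_sum (s := Finset.range (N + N + N))
        (fun k hk => by rw [blockSign_eq_zero hk]; simp), ← Complex.ofReal_sum,
        sum_mul_blockSign N fun k => K (k + n)]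
      congr 1
      exact Finset.sum_congr rfl fun i _ => by rw [show N + i + N + n = N + i + n + N by omega]
    rw [tsum_congr h1, h2, Complex.norm_real, Real.norm_of_nonneg]
    exact Finset.sum_nonneg fun i _ => moment_diff_nonneg μ _ _
  simp_rw [hin, hterm] at hmain
  rw [tsum_eq_sum hzero, sum_mul_blockSign_sq N fun k => ((k : ℝ) + θ) ^ α] at hmain
  set F : ℕ → ℝ := fun n => ((n : ℝ) + θ) ^ β *
    (∑ i ∈ Finset.range N, (K (N + i + n) - K (N + i + n + N))) ^ 2 with hF
  have hF0 : ∀ n, 0 ≤ F n := fun n => by simp only [hF]; positivity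
  -- This is where the zero of the test polynomial at `t = 1` enters: without it the series
  -- could diverge and the inequality for `tsum` would carry no information.
  have hFs : Summable F := by
    obtain ⟨A, hA, hAc⟩ := comparable_add_one hθ
    have hs : Summable fun n : ℕ => ((n : ℝ) + 1) ^ (β - 2) := by
      have := (Real.summable_one_div_nat_add_rpow 1 (2 - β)).2 (by linarith)
      refine this.congr fun n => ?_
      have hn : (0 : ℝ) < (n : ℝ) + 1 := by positivity
      rw [abs_of_pos hn, show β - 2 = -(2 - β) by ring, Real.rpow_neg hn.le, one_div]
    refine Summable.of_nonneg_of_le hF0 (fun n => ?_)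
      (hs.mul_left (A ^ |β| * (N * (N * μ.real Set.univ)) ^ 2))
    have hn : (0 : ℝ) < (n : ℝ) + 1 := by positivity
    have hA0 : 0 < A := by linarith
    have h1 := rpow_le_of_comparable β (by positivity : (0 : ℝ) < (n : ℝ) + θ) hn hA
      (hAc n).1 (hAc n).2
    have h2 : ∑ i ∈ Finset.range N, (K (N + i + n) - K (N + i + n + N)) ≤
        N * (N * μ.real Set.univ) / ((n : ℝ) + 1) := by
      calc ∑ i ∈ Finset.range N, (K (N + i + n) - K (N + i + n + N))
          ≤ ∑ _i ∈ Finset.range N, N / ((n : ℝ) + 1) * μ.real Set.univ := by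
            refine Finset.sum_le_sum fun i _ => (moment_diff_le μ _ N).trans ?_
            gcongr
            have : (0 : ℝ) ≤ i := Nat.cast_nonneg i
            linarith
        _ = _ := by rw [Finset.sum_const, Finset.card_range, nsmul_eq_mul]; ring
    have h3 : 0 ≤ ∑ i ∈ Finset.range N, (K (N + i + n) - K (N + i + n + N)) :=
      Finset.sum_nonneg fun i _ => moment_diff_nonneg μ _ _
    have h4 := mul_le_mul h1 (pow_le_pow_left₀ h3 h2 2) (by positivity) (by positivity)
    refine h4.trans (le_of_eq ?_)
    rw [Real.rpow_sub hn, Real.rpow_two]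
    field_simp
  have hlow : (N : ℝ) * ((N : ℝ) ^ β * (N * (x / 768)) ^ 2) ≤ B ^ |β| * ∑' n, F n := by
    have h1 : ∑ j ∈ Finset.range N, F (N + j) ≤ ∑' n, F n := by
      have h2 := hFs.sum_le_tsum (Finset.range (N + N)) fun n _ => hF0 n
      rw [Finset.sum_range_add] at h2
      have h3 : 0 ≤ ∑ n ∈ Finset.range N, F n := Finset.sum_nonneg fun n _ => hF0 n
      linarith
    have h2 : ∀ j ∈ Finset.range N, (N : ℝ) ^ β * (N * (x / 768)) ^ 2 ≤ B ^ |β| * F (N + j) := by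
      intro j hj
      have hj' := Finset.mem_range.1 hj
      have h3 : N * (x / 768) ≤
          ∑ i ∈ Finset.range N, (K (N + i + (N + j)) - K (N + i + (N + j) + N)) := by
        have := Finset.card_nsmul_le_sum (Finset.range N)
          (fun i => K (N + i + (N + j)) - K (N + i + (N + j) + N)) (x / 768) fun i hi => by
            have hi' := Finset.mem_range.1 hi
            exact le_moment_diff μ hP (by omega)
        rwa [Finset.card_range, nsmul_eq_mul] at this
      have h4 := (hcomp β j (by omega)).2
      simp only [hF]
      rw [← mul_assoc]
      exact mul_le_mul h4 (pow_le_pow_left₀ (by positivity) h3 2) (by positivity) (by positivity)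
    have h3 := Finset.card_nsmul_le_sum _ _ _ h2
    rw [Finset.card_range, nsmul_eq_mul, ← Finset.mul_sum] at h3
    exact h3.trans (mul_le_mul_of_nonneg_left h1 (by positivity))
  have hup : ∑ i ∈ Finset.range (N + N), (((N + i : ℕ) : ℝ) + θ) ^ α ≤
      2 * N * (B ^ |α| * (N : ℝ) ^ α) := by
    have := Finset.sum_le_card_nsmul (Finset.range (N + N))
      (fun i => (((N + i : ℕ) : ℝ) + θ) ^ α) (B ^ |α| * (N : ℝ) ^ α)
      fun i hi => (hcomp α i (Finset.mem_range.1 hi)).1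
    rw [Finset.card_range, nsmul_eq_mul] at this
    push_cast at this ⊢
    linarith
  have hfinal : (N : ℝ) * ((N : ℝ) ^ β * (N * (x / 768)) ^ 2) ≤
      B ^ |β| * (C * (2 * N * (B ^ |α| * (N : ℝ) ^ α))) :=
    hlow.trans (mul_le_mul_of_nonneg_left (hmain.trans (mul_le_mul_of_nonneg_left hup hC.le))
      (by positivity))
  have hNc : (2 * P : ℝ) = N := by rw [hN]; push_cast; ring
  rw [hNc]
  set y := (N : ℝ) ^ (-(1 + (β - α) / 2)) with hy
  have hy0 : 0 < y := Real.rpow_pos_of_pos hN0 _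
  have hyy : y ^ 2 * ((N : ℝ) ^ β * N ^ 2) = (N : ℝ) ^ α := by
    rw [hy, ← Real.rpow_natCast, ← Real.rpow_mul hN0.le, ← Real.rpow_two, ← Real.rpow_add hN0,
      ← Real.rpow_add hN0]
    congr 1; push_cast; ring
  refine abs_le_of_sq_le_sq' ?_ (by positivity) |>.2
  rw [mul_pow, Real.sq_sqrt (by positivity)]
  rw [← hyy] at hfinal
  have hc : 0 < (N : ℝ) * ((N : ℝ) ^ β * N ^ 2) / 768 ^ 2 := by positivity
  refine le_of_mul_le_mul_left ?_ hc
  refine le_trans (le_of_eq ?_) (hfinal.trans (le_of_eq ?_))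
  · ring
  · ring

/-- Summing the bounds over the dyadic annuli gives the Carleson condition: the sequence
`μ [1 - 2⁻ʲ, 1) - D rʲ / (1 - r)`, with `r = 2 ^ (-σ)`, is nondecreasing and tends to `0`, so it is
nowhere positive. -/
lemma carleson_of_annulus_le {σ Q : ℝ} (hσ : 0 < σ) (hQ : 0 < Q) (μ : Measure ℝ)
    [IsFiniteMeasure μ]
    (h : ∀ P : ℕ, 1 ≤ P → μ.real (Set.Ico (1 - 1 / (2 * P : ℝ)) (1 - 1 / (4 * P : ℝ))) ≤
      Q * (2 * P : ℝ) ^ (-σ)) :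
    ∃ C₁ : ℝ, 0 < C₁ ∧ ∀ t ∈ Set.Ico (0 : ℝ) 1,
      μ (Set.Ico t 1) ≤ ENNReal.ofReal (C₁ * (1 - t) ^ σ) := by
  set r : ℝ := (1 / 2) ^ σ with hr
  have hr0 : 0 < r := by positivity
  have hr1 : r < 1 := Real.rpow_lt_one (by norm_num) (by norm_num) hσ
  have hrj : ∀ j : ℕ, r ^ j = ((1 / 2 : ℝ) ^ j) ^ σ := by
    intro j
    rw [hr, ← Real.rpow_natCast, ← Real.rpow_mul (by norm_num), mul_comm,
      Real.rpow_mul (by norm_num), Real.rpow_natCast]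
  set D := Q + μ.real Set.univ with hD
  have hD0 : 0 < D := by have : 0 ≤ μ.real Set.univ := measureReal_nonneg; linarith
  set s : ℕ → Set ℝ := fun j => Set.Ico (1 - (1 / 2 : ℝ) ^ j) 1 with hs
  have hanti : Antitone s := fun i j hij => Set.Ico_subset_Ico_left (by
    have : (1 / 2 : ℝ) ^ j ≤ (1 / 2 : ℝ) ^ i :=
      pow_le_pow_of_le_one (by norm_num) (by norm_num) hij
    linarith)
  have hann : ∀ j : ℕ, μ.real (Set.Ico (1 - (1 / 2 : ℝ) ^ j) (1 - (1 / 2 : ℝ) ^ (j + 1))) ≤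
      D * r ^ j := by
    intro j
    cases j with
    | zero =>
      have : μ.real (Set.Ico (1 - (1 / 2 : ℝ) ^ 0) (1 - (1 / 2 : ℝ) ^ (0 + 1))) ≤
        μ.real Set.univ := measureReal_mono (Set.subset_univ _)
      rw [pow_zero r, mul_one]; linarith
    | succ j =>
      have h1 := h (2 ^ j) Nat.one_le_two_pow
      have e1 : 1 / (2 * ((2 ^ j : ℕ) : ℝ)) = (1 / 2 : ℝ) ^ (j + 1) := by
        push_cast; rw [one_div_pow, pow_succ]; ring
      have e2 : 1 / (4 * ((2 ^ j : ℕ) : ℝ)) = (1 / 2 : ℝ) ^ (j + 1 + 1) := by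
        push_cast; rw [one_div_pow, pow_succ, pow_succ]; ring
      have e3 : (2 * ((2 ^ j : ℕ) : ℝ)) ^ (-σ) = r ^ (j + 1) := by
        rw [hrj, ← e1, Real.rpow_neg (by positivity), one_div, Real.inv_rpow (by positivity)]
      rw [e1, e2, e3] at h1
      refine h1.trans (mul_le_mul_of_nonneg_right ?_ (by positivity))
      have : 0 ≤ μ.real Set.univ := measureReal_nonneg
      linarith
  have hstep : ∀ j : ℕ, μ.real (s j) ≤ D * r ^ j + μ.real (s (j + 1)) := by
    intro j
    have hu : s j ⊆ Set.Ico (1 - (1 / 2 : ℝ) ^ j) (1 - (1 / 2 : ℝ) ^ (j + 1)) ∪ s (j + 1) :=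
      Set.Ico_subset_Ico_union_Ico
    have := (measureReal_mono (μ := μ) hu).trans (measureReal_union_le _ _)
    linarith [hann j]
  have hlim : Filter.Tendsto (fun j => μ.real (s j)) Filter.atTop (nhds 0) := by
    have h1 := tendsto_measure_iInter_atTop (μ := μ) (s := s)
      (fun j => measurableSet_Ico.nullMeasurableSet) hanti ⟨0, measure_ne_top _ _⟩
    have h2 : ⋂ j, s j = ∅ := by
      refine Set.eq_empty_of_forall_notMem fun t ht => ?_
      have ht' := Set.mem_iInter.1 ht
      obtain ⟨j, hj⟩ := exists_pow_lt_of_lt_one (sub_pos.2 (ht' 0).2)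
        (by norm_num : (1 / 2 : ℝ) < 1)
      linarith [(ht' j).1]
    rw [h2, measure_empty] at h1
    have h3 := (ENNReal.tendsto_toReal ENNReal.zero_ne_top).comp h1
    rw [ENNReal.toReal_zero] at h3
    exact h3
  have hr1' : 0 < 1 - r := by linarith
  have htail : ∀ j, μ.real (s j) ≤ D / (1 - r) * r ^ j := by
    have hmono : Monotone fun j => μ.real (s j) - D / (1 - r) * r ^ j := by
      refine monotone_nat_of_le_succ fun j => ?_
      have e : D / (1 - r) * r ^ j - D / (1 - r) * r ^ (j + 1) = D * r ^ j := by
        rw [pow_succ]; field_simp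
      linarith [hstep j]
    have hl : Filter.Tendsto (fun j => μ.real (s j) - D / (1 - r) * r ^ j) Filter.atTop
        (nhds 0) := by
      simpa using hlim.sub ((tendsto_pow_atTop_nhds_zero_of_lt_one hr0.le hr1).const_mul
        (D / (1 - r)))
    intro j
    linarith [hmono.ge_of_tendsto hl j]
  refine ⟨D / (1 - r) / r, by positivity, fun t ht => ?_⟩
  obtain ⟨j, hj1, hj2⟩ := exists_nat_pow_near_of_lt_one (sub_pos.2 ht.2)
    (by linarith [ht.1] : 1 - t ≤ 1) (by norm_num : (0 : ℝ) < 1 / 2) (by norm_num)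
  rw [← ofReal_measureReal (measure_ne_top _ _)]
  apply ENNReal.ofReal_le_ofReal
  calc μ.real (Set.Ico t 1) ≤ μ.real (s j) :=
        measureReal_mono (Set.Ico_subset_Ico_left (by linarith))
    _ ≤ D / (1 - r) * r ^ j := htail j
    _ = D / (1 - r) / r * r ^ (j + 1) := by rw [pow_succ]; field_simp
    _ ≤ D / (1 - r) / r * (1 - t) ^ σ := by
        rw [hrj]
        gcongr

/-- For `θ > 0`, `−1 < α < 1`, `−1 < β < 1` and a finite positive Borel
measure `μ` on `[0,1)`, the Hilbert-type operator `H_μ` (acting on Taylor coefficients via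
the moments `μ[k+n] = ∫_{[0,1)} t^{k+n} dμ`) is bounded from `F²_{θ,α}` to `F²_{θ,β}`
if and only if `μ` is a `[1 + (β−α)/2]`-Carleson measure on `[0,1)`. -/
theorem hilbert_type_measure_operator_bounded_iff_carleson
    (θ α β : ℝ) (hθ : 0 < θ) (hα₁ : -1 < α) (hα₂ : α < 1) (hβ₁ : -1 < β) (hβ₂ : β < 1)
    (μ : Measure ℝ) [IsFiniteMeasure μ] (hsupp : μ (Set.Ico (0 : ℝ) 1)ᶜ = 0) :
    (∃ C : ℝ, 0 < C ∧ ∀ a : ℕ → ℂ,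
      Summable (fun k : ℕ => ((k : ℝ) + θ) ^ α * ‖a k‖ ^ 2 * (Nat.factorial k : ℝ)) →
      ∑' n : ℕ, ((n : ℝ) + θ) ^ β *
          ‖∑' k : ℕ, (((∫ t in Set.Ico (0 : ℝ) 1, t ^ (k + n) ∂μ) *
              Real.sqrt (Nat.factorial k) : ℝ) : ℂ) * a k‖ ^ 2
        ≤ C * ∑' k : ℕ, ((k : ℝ) + θ) ^ α * ‖a k‖ ^ 2 * (Nat.factorial k : ℝ)) ↔
    (∃ C₁ : ℝ, 0 < C₁ ∧ ∀ t ∈ Set.Ico (0 : ℝ) 1,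
      μ (Set.Ico t 1) ≤ ENNReal.ofReal (C₁ * (1 - t) ^ (1 + (β - α) / 2))) := by
  constructor
  · rintro ⟨C, hC, h⟩
    obtain ⟨Q, hQ, hann⟩ := annulus_le_of_bounded hθ hβ₂ hC μ h
    exact carleson_of_annulus_le (by linarith) hQ μ hann
  · rintro ⟨C₁, hC₁, hcar⟩
    obtain ⟨M, hM, hmom⟩ := moment_le (by linarith) (by linarith) hC₁ μ hcar
    exact bounded_of_moment_le hθ hα₁ hα₂ hβ₁ hβ₂
      (fun m => ∫ t in Set.Ico (0 : ℝ) 1, t ^ m ∂μ)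
      (fun m => setIntegral_nonneg measurableSet_Ico fun t ht => pow_nonneg ht.1 m) hM hmom
end

section
/- Let θ > 0, −1 < α < 1, −1 < β < 1, and let μ be a finite positive Borel measure on [0,1). Then μ is a vanishing [1 + (β−α)/2]-Carleson measure on [0,1) if and only if there exists a compact continuous linear operator T on the Hilbert space ℓ²(ℕ; ℂ) such that for every x ∈ ℓ²(ℕ; ℂ) and every n ∈ ℕ, (T x)(n) = Σ_{k≥0} μ[k+n] (n+θ)^{β/2} (k+θ)^{−α/2} x(k). (This operator is the coordinate expression of the Hilbert-type operator H_μ : F²_{θ,α} → F²_{θ,β} under the isometric identifications a_k ↦ (k+θ)^{α/2} √(k!) a_k and b_n ↦ (n+θ)^{β/2} √(n!) b_n of the weighted Fock spaces with ℓ².) -/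
/-!
Put `s = 1 + (β - α) / 2`, so that `0 < s < 2`. The matrix of the operator is
`A n k = μ[n + k] (n + θ) ^ (β / 2) (k + θ) ^ (-α / 2)`.

*Vanishing Carleson implies compact.* An `s`-Carleson measure with constant `C` has moments
`μ[m] ≤ C D (m + 1) ^ (-s)` (`exists_moment_le`), and splitting a vanishing Carleson measure into a
part away from `1` and a part near `1` gives `μ[m] = o((m + 1) ^ (-s))` (`moment_eventually_le`). So
`A` is dominated by the kernel `(n + k + 1) ^ (-s) (n + θ) ^ (β / 2) (k + θ) ^ (-α / 2)`, which is
essentially homogeneous of degree `-1` and satisfies the Schur test with weight `(n + θ) ^ (-1 / 2)`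
(`exists_operator_of_le_kernel`). The rows of `A` with index at least `N` are dominated by a small
multiple of that kernel, so the operator is the norm limit of its finite rank truncations
(`exists_compact_operator`).

*Compact implies vanishing Carleson.* The normalized indicators `x_N` of the blocks `[N, 2N)` are
unit vectors tending weakly to `0`, hence `⟪x_N, T x_N⟫ → 0` (`tendsto_inner_blockVec_apply`). All
entries of `A` on the block are at least a multiple of `N ^ (s - 1) μ([1 - 1 / N, 1))`, so this inner
product is at least a multiple of `N ^ s μ([1 - 1 / N, 1))` (`tendsto_tail_of_compact`). Interpolating
between the points `1 - 1 / N` gives the vanishing condition, and the Carleson bound itself follows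
because `μ` is finite.
-/

open MeasureTheory

/-! ### Power sums and the Schur test -/

/-- Discrete comparison with the derivative of `x ^ q / q`: on `[θ, ∞)` the power `x ^ (q - 1)` is
at most a constant times the unit increment of `x ^ q / q`. -/
lemma rpow_le_increment {θ q : ℝ} (hθ : 0 < θ) (hq : q ≠ 0) (hq1 : q < 1) {x : ℝ} (hx : θ ≤ x) :
    x ^ (q - 1) ≤ (1 + 1 / θ) ^ (1 - q) * (((x + 1) ^ q - x ^ q) / q) := by
  have hx0 : 0 < x := hθ.trans_le hx
  obtain ⟨ξ, ⟨h1, h2⟩, h3⟩ := exists_hasDerivAt_eq_slope (fun y : ℝ => y ^ q)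
    (fun y => q * y ^ (q - 1)) (show x < x + 1 by linarith)
    (fun y hy => (Real.continuousAt_rpow_const y q
      (Or.inl (hx0.trans_le hy.1).ne')).continuousWithinAt)
    (fun y hy => Real.hasDerivAt_rpow_const (Or.inl (hx0.trans hy.1).ne'))
  have h4 : ((x + 1) ^ q - x ^ q) / q = ξ ^ (q - 1) := by
    have : (x + 1) ^ q - x ^ q = q * ξ ^ (q - 1) := by
      rw [h3]; simp
    rw [this]; field_simp
  rw [h4]
  have hξ0 : 0 < ξ := hx0.trans h1
  have hK : 0 < 1 + 1 / θ := by positivity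
  have h5 : ξ ≤ (1 + 1 / θ) * x := by
    have : 1 ≤ 1 / θ * x := by
      rw [one_div, inv_mul_eq_div, le_div_iff₀ hθ]; linarith
    nlinarith
  have h6 : ((1 + 1 / θ) * x) ^ (q - 1) ≤ ξ ^ (q - 1) :=
    Real.rpow_le_rpow_of_nonpos hξ0 h5 (by linarith)
  rw [Real.mul_rpow hK.le hx0.le] at h6
  have h7 : (1 + 1 / θ) ^ (1 - q) * (1 + 1 / θ) ^ (q - 1) = 1 := by
    rw [← Real.rpow_add hK]; simp
  calc x ^ (q - 1) = (1 + 1 / θ) ^ (1 - q) * ((1 + 1 / θ) ^ (q - 1) * x ^ (q - 1)) := by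
        rw [← mul_assoc, h7, one_mul]
    _ ≤ _ := by gcongr

lemma sum_Ico_rpow_le {θ q : ℝ} (hθ : 0 < θ) (hq : q ≠ 0) (hq1 : q < 1) {a b : ℕ} (hab : a ≤ b) :
    ∑ k ∈ Finset.Ico a b, ((k : ℝ) + θ) ^ (q - 1) ≤
      (1 + 1 / θ) ^ (1 - q) * (((b + θ) ^ q - (a + θ) ^ q) / q) := by
  induction b, hab using Nat.le_induction with
  | base => simp
  | succ n hn ih =>
    rw [Finset.sum_Ico_succ_top hn]
    have := rpow_le_increment hθ hq hq1 (x := n + θ) (by simp)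
    push_cast
    rw [show (n : ℝ) + 1 + θ = n + θ + 1 by ring]
    calc _ ≤ _ := add_le_add ih this
      _ = _ := by ring

/-- The tail `k ≥ n` and the head `k < n` of the sum are both of order `(n + θ) ^ (1 - p - s)`;
the conditions `p < 1` and `p + s > 1` give integrability at `0` and at `∞` respectively. -/
lemma exists_sum_kernel_le {θ p s : ℝ} (hθ : 0 < θ) (hp0 : 0 < p) (hp : p < 1) (hs : 0 < s)
    (hps : 1 < p + s) :
    ∃ C : ℝ, 0 < C ∧ ∀ (n : ℕ) (F : Finset ℕ),
      ∑ k ∈ F, ((k : ℝ) + θ) ^ (-p) * ((n : ℝ) + k + 1) ^ (-s) ≤ C * ((n : ℝ) + θ) ^ (1 - p - s) := by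
  set K := 1 + 1 / θ with hKdef
  have hK : 0 < K := by positivity
  -- `m + 1` and `m + θ` are comparable
  have hcomp : ∀ m j : ℕ, m ≤ j → ((j : ℝ) + 1) ^ (-s) ≤ (1 + θ) ^ s * ((m : ℝ) + θ) ^ (-s) := by
    intro m j hmj
    have hmj' : (m : ℝ) ≤ j := by exact_mod_cast hmj
    have h1 : (m + θ) / (1 + θ) ≤ (j : ℝ) + 1 := by
      rw [div_le_iff₀ (by positivity)]
      nlinarith [mul_nonneg (Nat.cast_nonneg (α := ℝ) j) hθ.le]
    calc ((j : ℝ) + 1) ^ (-s) ≤ ((m + θ) / (1 + θ)) ^ (-s) :=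
          Real.rpow_le_rpow_of_nonpos (by positivity) h1 (by linarith)
      _ = (1 + θ) ^ s * ((m : ℝ) + θ) ^ (-s) := by
          rw [Real.div_rpow (by positivity) (by positivity), Real.rpow_neg (x := 1 + θ) (by positivity)]
          field_simp
  refine ⟨(1 + θ) ^ s * (K ^ p / (1 - p) + K ^ (p + s) / (p + s - 1)), ?_, ?_⟩
  · have : 0 < 1 - p := by linarith
    have : 0 < p + s - 1 := by linarith
    positivity
  intro n F
  have hx : 0 < (n : ℝ) + θ := by positivity
  obtain ⟨M, hM⟩ : ∃ M, n ≤ M ∧ F ⊆ Finset.range M := by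
    obtain ⟨M, hM⟩ := F.exists_nat_subset_range
    exact ⟨max n M, le_max_left _ _, hM.trans (by simp)⟩
  calc ∑ k ∈ F, ((k : ℝ) + θ) ^ (-p) * ((n : ℝ) + k + 1) ^ (-s)
      ≤ ∑ k ∈ Finset.range M, ((k : ℝ) + θ) ^ (-p) * ((n : ℝ) + k + 1) ^ (-s) :=
        Finset.sum_le_sum_of_subset_of_nonneg hM.2 (fun k _ _ => by positivity)
    _ = ∑ k ∈ Finset.Ico 0 n, ((k : ℝ) + θ) ^ (-p) * ((n : ℝ) + k + 1) ^ (-s) +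
        ∑ k ∈ Finset.Ico n M, ((k : ℝ) + θ) ^ (-p) * ((n : ℝ) + k + 1) ^ (-s) := by
        rw [Finset.range_eq_Ico, Finset.sum_Ico_consecutive _ (Nat.zero_le _) hM.1]
    _ ≤ ∑ k ∈ Finset.Ico 0 n, ((1 + θ) ^ s * ((n : ℝ) + θ) ^ (-s)) * ((k : ℝ) + θ) ^ (1 - p - 1) +
        ∑ k ∈ Finset.Ico n M, (1 + θ) ^ s * ((k : ℝ) + θ) ^ (1 - p - s - 1) := by
        refine add_le_add (Finset.sum_le_sum fun k _ => ?_) (Finset.sum_le_sum fun k _ => ?_)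
        · have := hcomp n (n + k) (by omega)
          push_cast at this
          rw [mul_comm, show 1 - p - 1 = -p by ring]
          gcongr
        · have := hcomp k (n + k) (by omega)
          push_cast at this
          rw [show 1 - p - s - 1 = -p + -s by ring, Real.rpow_add (by positivity)]
          calc _ ≤ ((k : ℝ) + θ) ^ (-p) * ((1 + θ) ^ s * ((k : ℝ) + θ) ^ (-s)) := by gcongr
            _ = _ := by ring
    _ ≤ ((1 + θ) ^ s * ((n : ℝ) + θ) ^ (-s)) * (K ^ p * (((n : ℝ) + θ) ^ (1 - p) / (1 - p))) +
        (1 + θ) ^ s * (K ^ (p + s) * (((n : ℝ) + θ) ^ (1 - p - s) / (p + s - 1))) := by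
        rw [← Finset.mul_sum, ← Finset.mul_sum]
        have e1 := sum_Ico_rpow_le hθ (q := 1 - p) (by linarith) (by linarith) (Nat.zero_le n)
        have e2 := sum_Ico_rpow_le hθ (q := 1 - p - s) (by linarith) (by linarith) hM.1
        rw [← hKdef] at e1 e2
        gcongr
        · refine e1.trans ?_
          rw [show 1 - (1 - p) = p by ring]
          have : 0 < 1 - p := by linarith
          gcongr
          have : 0 ≤ ((0 : ℕ) + θ : ℝ) ^ (1 - p) := by positivity
          linarith
        · refine e2.trans ?_
          rw [show 1 - (1 - p - s) = p + s by ring]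
          have h0 : 0 < p + s - 1 := by linarith
          have : 0 ≤ ((M : ℝ) + θ) ^ (1 - p - s) := by positivity
          rw [show 1 - p - s = -(p + s - 1) by ring] at this ⊢
          rw [div_neg, ← neg_div]
          gcongr
          linarith
    _ = _ := by
        rw [show 1 - p - s = -s + (1 - p) by ring, Real.rpow_add hx]; ring

/-- **Schur test** for a nonnegative matrix with a single weight `w`: row and column sums weighted
by `w` bounded by `C * w` give an operator on `ℓ²` of norm at most `C`. -/
lemma schur_test (A : ℕ → ℕ → ℝ) (w : ℕ → ℝ) (C : ℝ) (hA : ∀ n k, 0 ≤ A n k) (hw : ∀ n, 0 < w n)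
    (hC : 0 ≤ C) (hrow : ∀ n (F : Finset ℕ), ∑ k ∈ F, A n k * w k ≤ C * w n)
    (hcol : ∀ k (F : Finset ℕ), ∑ n ∈ F, A n k * w n ≤ C * w k) :
    ∃ T : lp (fun _ : ℕ => ℂ) 2 →L[ℂ] lp (fun _ : ℕ => ℂ) 2,
      ‖T‖ ≤ C ∧ ∀ x n, T x n = ∑' k, (A n k : ℂ) * x k := by
  have h2 : 0 < (2 : ENNReal).toReal := by norm_num
  have hnorm : ∀ (x : lp (fun _ : ℕ => ℂ) 2) (s : Finset ℕ), ∑ k ∈ s, ‖x k‖ ^ 2 ≤ ‖x‖ ^ 2 := by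
    intro x s
    have := lp.sum_rpow_le_norm_rpow h2 x s
    simpa using this
  -- the estimate for finite sections
  have hfin : ∀ (x : lp (fun _ : ℕ => ℂ) 2) (F s : Finset ℕ),
      ∑ n ∈ F, (∑ k ∈ s, A n k * ‖x k‖) ^ 2 ≤ C ^ 2 * ‖x‖ ^ 2 := by
    intro x F s
    calc ∑ n ∈ F, (∑ k ∈ s, A n k * ‖x k‖) ^ 2
        ≤ ∑ n ∈ F, (∑ k ∈ s, A n k * w k) * ∑ k ∈ s, A n k * (‖x k‖ ^ 2 / w k) := by
          refine Finset.sum_le_sum fun n _ => ?_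
          refine Finset.sum_sq_le_sum_mul_sum_of_sq_le_mul _
            (fun k _ => mul_nonneg (hA n k) (hw k).le)
            (fun k _ => mul_nonneg (hA n k) (div_nonneg (sq_nonneg _) (hw k).le)) (fun k _ => le_of_eq ?_)
          have := (hw k).ne'
          field_simp
      _ ≤ ∑ n ∈ F, (C * w n) * ∑ k ∈ s, A n k * (‖x k‖ ^ 2 / w k) := by
          refine Finset.sum_le_sum fun n _ => mul_le_mul_of_nonneg_right (hrow n s) ?_
          exact Finset.sum_nonneg
            (fun k _ => mul_nonneg (hA n k) (div_nonneg (sq_nonneg _) (hw k).le))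
      _ = ∑ k ∈ s, C * (‖x k‖ ^ 2 / w k) * ∑ n ∈ F, A n k * w n := by
          simp_rw [Finset.mul_sum]
          rw [Finset.sum_comm]
          refine Finset.sum_congr rfl fun k _ => Finset.sum_congr rfl fun n _ => by ring
      _ ≤ ∑ k ∈ s, C * (‖x k‖ ^ 2 / w k) * (C * w k) := by
          refine Finset.sum_le_sum fun k _ => mul_le_mul_of_nonneg_left (hcol k F) ?_
          exact mul_nonneg hC (div_nonneg (sq_nonneg _) (hw k).le)
      _ = C ^ 2 * ∑ k ∈ s, ‖x k‖ ^ 2 := by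
          rw [Finset.mul_sum]
          refine Finset.sum_congr rfl fun k _ => ?_
          have := (hw k).ne'
          field_simp
      _ ≤ _ := by gcongr; exact hnorm x s
  have hsumm : ∀ (x : lp (fun _ : ℕ => ℂ) 2) n, Summable fun k => A n k * ‖x k‖ := by
    intro x n
    refine summable_of_sum_le (c := C * ‖x‖) (fun k => mul_nonneg (hA n k) (norm_nonneg _)) ?_
    intro s
    have := hfin x {n} s
    rw [Finset.sum_singleton, ← mul_pow] at this
    exact le_of_sq_le_sq this (by positivity)
  have hsummC : ∀ (x : lp (fun _ : ℕ => ℂ) 2) n, Summable fun k => (A n k : ℂ) * x k := by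
    intro x n
    refine Summable.of_norm_bounded (hsumm x n) (fun k => ?_)
    simp [abs_of_nonneg (hA n k)]
  have hbd : ∀ (x : lp (fun _ : ℕ => ℂ) 2) (F : Finset ℕ),
      ∑ n ∈ F, ‖∑' k, (A n k : ℂ) * x k‖ ^ 2 ≤ (C * ‖x‖) ^ 2 := by
    intro x F
    have hlim : Filter.Tendsto (fun s : Finset ℕ => ∑ n ∈ F, (∑ k ∈ s, A n k * ‖x k‖) ^ 2)
        Filter.atTop (nhds (∑ n ∈ F, (∑' k, A n k * ‖x k‖) ^ 2)) :=
      tendsto_finsetSum _ fun n _ => (hsumm x n).hasSum.pow 2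
    rw [mul_pow]
    refine le_trans (Finset.sum_le_sum fun n _ => ?_) (le_of_tendsto' hlim (hfin x F))
    gcongr
    refine (norm_tsum_le_tsum_norm (hsummC x n).norm).trans (le_of_eq ?_)
    exact tsum_congr fun k => by simp [abs_of_nonneg (hA n k)]
  have hmem : ∀ x : lp (fun _ : ℕ => ℂ) 2, Memℓp (fun n => ∑' k, (A n k : ℂ) * x k) 2 := by
    intro x
    refine memℓp_gen' (C := (C * ‖x‖) ^ 2) fun s => ?_
    simpa using hbd x s
  let L : lp (fun _ : ℕ => ℂ) 2 →ₗ[ℂ] lp (fun _ : ℕ => ℂ) 2 :=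
    { toFun := fun x => ⟨fun n => ∑' k, (A n k : ℂ) * x k, hmem x⟩
      map_add' := by
        intro x y
        ext n
        simp only [lp.coeFn_add, Pi.add_apply, mul_add]
        exact (hsummC x n).tsum_add (hsummC y n)
      map_smul' := by
        intro c x
        ext n
        simp only [lp.coeFn_smul, Pi.smul_apply, smul_eq_mul, RingHom.id_apply]
        rw [← tsum_mul_left]
        exact tsum_congr fun k => by ring }
  refine ⟨L.mkContinuous C fun x => ?_, L.mkContinuous_norm_le hC _, fun x n => rfl⟩
  refine lp.norm_le_of_forall_sum_le h2 (by positivity) fun s => ?_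
  have := hbd x s
  simp only [ENNReal.toReal_ofNat, Real.rpow_ofNat]
  exact this

/-- The comparison kernel is asymptotically homogeneous of degree `-1`, and the weight
`(n + θ) ^ (-1/2)` makes
the Schur test work exactly in the range `-1 < β`, `α < 1`. -/
lemma exists_operator_of_le_kernel {θ α β : ℝ} (hθ : 0 < θ) (hα₁ : -1 < α) (hα₂ : α < 1)
    (hβ₁ : -1 < β) (hβ₂ : β < 1) :
    ∃ C : ℝ, 0 < C ∧ ∀ (B : ℝ) (A : ℕ → ℕ → ℝ), 0 ≤ B → (∀ n k, 0 ≤ A n k) →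
      (∀ n k, A n k ≤ B * (((n : ℝ) + k + 1) ^ (-(1 + (β - α) / 2)) *
        ((n : ℝ) + θ) ^ (β / 2) * ((k : ℝ) + θ) ^ (-(α / 2)))) →
      ∃ T : lp (fun _ : ℕ => ℂ) 2 →L[ℂ] lp (fun _ : ℕ => ℂ) 2,
        ‖T‖ ≤ B * C ∧ ∀ x n, T x n = ∑' k, (A n k : ℂ) * x k := by
  set s := 1 + (β - α) / 2 with hs
  obtain ⟨C₁, hC₁, h₁⟩ := exists_sum_kernel_le (θ := θ) (p := (1 + α) / 2) (s := s) hθ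
    (by linarith) (by linarith) (by linarith) (by linarith)
  obtain ⟨C₂, hC₂, h₂⟩ := exists_sum_kernel_le (θ := θ) (p := (1 - β) / 2) (s := s) hθ
    (by linarith) (by linarith) (by linarith) (by linarith)
  refine ⟨max C₁ C₂, lt_max_of_lt_left hC₁, fun B A hB hA hAB => ?_⟩
  have hpos : ∀ n : ℕ, 0 < (n : ℝ) + θ := fun n => by positivity
  refine schur_test A (fun n => ((n : ℝ) + θ) ^ (-(1 / 2) : ℝ)) (B * max C₁ C₂) hA
    (fun n => Real.rpow_pos_of_pos (hpos n) _) (by positivity) (fun n F => ?_) (fun k F => ?_)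
  · calc ∑ k ∈ F, A n k * ((k : ℝ) + θ) ^ (-(1 / 2) : ℝ)
        ≤ ∑ k ∈ F, (B * ((n : ℝ) + θ) ^ (β / 2)) *
            (((k : ℝ) + θ) ^ (-((1 + α) / 2)) * ((n : ℝ) + k + 1) ^ (-s)) := by
          refine Finset.sum_le_sum fun k _ => ?_
          have := hpos k
          rw [show -((1 + α) / 2) = -(α / 2) + (-(1 / 2)) by ring, Real.rpow_add (hpos k)]
          calc _ ≤ _ := mul_le_mul_of_nonneg_right (hAB n k) (by positivity)
            _ = _ := by ring
      _ ≤ (B * ((n : ℝ) + θ) ^ (β / 2)) * (C₁ * ((n : ℝ) + θ) ^ (1 - (1 + α) / 2 - s)) := by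
          rw [← Finset.mul_sum]
          have := hpos n
          exact mul_le_mul_of_nonneg_left (h₁ n F) (by positivity)
      _ = B * C₁ * ((n : ℝ) + θ) ^ (-(1 / 2) : ℝ) := by
          rw [show (-(1 / 2) : ℝ) = β / 2 + (1 - (1 + α) / 2 - s) by rw [hs]; ring,
            Real.rpow_add (hpos n)]
          ring
      _ ≤ _ := by
          have := hpos n
          gcongr
          exact le_max_left _ _
  · calc ∑ n ∈ F, A n k * ((n : ℝ) + θ) ^ (-(1 / 2) : ℝ)
        ≤ ∑ n ∈ F, (B * ((k : ℝ) + θ) ^ (-(α / 2))) *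
            (((n : ℝ) + θ) ^ (-((1 - β) / 2)) * ((k : ℝ) + n + 1) ^ (-s)) := by
          refine Finset.sum_le_sum fun n _ => ?_
          have := hpos n
          rw [show -((1 - β) / 2) = β / 2 + (-(1 / 2)) by ring, Real.rpow_add (hpos n),
            add_comm (k : ℝ) n]
          calc _ ≤ _ := mul_le_mul_of_nonneg_right (hAB n k) (by positivity)
            _ = _ := by ring
      _ ≤ (B * ((k : ℝ) + θ) ^ (-(α / 2))) * (C₂ * ((k : ℝ) + θ) ^ (1 - (1 - β) / 2 - s)) := by
          rw [← Finset.mul_sum]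
          have := hpos k
          exact mul_le_mul_of_nonneg_left (h₂ k F) (by positivity)
      _ = B * C₂ * ((k : ℝ) + θ) ^ (-(1 / 2) : ℝ) := by
          rw [show (-(1 / 2) : ℝ) = -(α / 2) + (1 - (1 - β) / 2 - s) by rw [hs]; ring,
            Real.rpow_add (hpos k)]
          ring
      _ ≤ _ := by
          have := hpos k
          gcongr
          exact le_max_right _ _

/-! ### Compactness by truncation -/

/-- The projection of `ℓ²` onto the span of the first `N` basis vectors. -/
noncomputable def truncation (N : ℕ) : lp (fun _ : ℕ => ℂ) 2 →L[ℂ] lp (fun _ : ℕ => ℂ) 2 :=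
  ∑ n ∈ Finset.range N,
    (lp.singleContinuousLinearMap ℂ (fun _ : ℕ => ℂ) 2 n).comp (lp.evalCLM ℂ (fun _ : ℕ => ℂ) 2 n)

lemma truncation_apply (N : ℕ) (x : lp (fun _ : ℕ => ℂ) 2) (n : ℕ) :
    truncation N x n = if n < N then x n else 0 := by
  have h : ∀ i : ℕ, (lp.evalCLM ℂ (fun _ : ℕ => ℂ) 2 i) x = x i := fun _ => rfl
  simp only [truncation, sum_apply, lp.coeFn_sum, Finset.sum_apply, ContinuousLinearMap.comp_apply,
    lp.singleContinuousLinearMap_apply, lp.coeFn_single, Pi.single_apply, h]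
  simp

lemma isCompactOperator_truncation (N : ℕ) : IsCompactOperator (truncation N) := by
  refine (compactOperator (RingHom.id ℂ) (lp (fun _ : ℕ => ℂ) 2) (lp (fun _ : ℕ => ℂ) 2)).sum_mem
    fun n _ => ?_
  exact (isCompactOperator_of_locallyCompactSpace_rng
    (lp.singleContinuousLinearMap ℂ (fun _ : ℕ => ℂ) 2 n)).comp_clm _

/-- A matrix bounded by the kernel, and bounded by arbitrarily small multiples of it on all rows of
large index, defines a compact operator. -/
lemma exists_compact_operator {θ α β : ℝ} (hθ : 0 < θ) (hα₁ : -1 < α) (hα₂ : α < 1)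
    (hβ₁ : -1 < β) (hβ₂ : β < 1) (A : ℕ → ℕ → ℝ) (hA : ∀ n k, 0 ≤ A n k)
    (hbdd : ∃ B : ℝ, 0 ≤ B ∧ ∀ n k, A n k ≤ B * (((n : ℝ) + k + 1) ^ (-(1 + (β - α) / 2)) *
        ((n : ℝ) + θ) ^ (β / 2) * ((k : ℝ) + θ) ^ (-(α / 2))))
    (hlit : ∀ ε : ℝ, 0 < ε → ∃ N : ℕ, ∀ n k, N ≤ n →
      A n k ≤ ε * (((n : ℝ) + k + 1) ^ (-(1 + (β - α) / 2)) *
        ((n : ℝ) + θ) ^ (β / 2) * ((k : ℝ) + θ) ^ (-(α / 2)))) :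
    ∃ T : lp (fun _ : ℕ => ℂ) 2 →L[ℂ] lp (fun _ : ℕ => ℂ) 2,
      IsCompactOperator T ∧ ∀ x n, T x n = ∑' k, (A n k : ℂ) * x k := by
  obtain ⟨C, hC, hop⟩ := exists_operator_of_le_kernel hθ hα₁ hα₂ hβ₁ hβ₂
  obtain ⟨B, hB, hAB⟩ := hbdd
  obtain ⟨T, -, hT⟩ := hop B A hB hA hAB
  refine ⟨T, ?_, hT⟩
  refine isCompactOperator_of_tendsto (l := Filter.atTop)
    (F := fun N : ℕ => (truncation N).comp T) ?_
    (Filter.Eventually.of_forall fun N => (isCompactOperator_truncation N).comp_clm T)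
  rw [Metric.tendsto_atTop]
  intro ε hε
  obtain ⟨N₀, hN₀⟩ := hlit (ε / (2 * C)) (by positivity)
  refine ⟨N₀, fun N hN => ?_⟩
  -- the discarded rows form a matrix to which the Schur bound applies with a small constant
  obtain ⟨R, hR, hRT⟩ := hop (ε / (2 * C)) (fun n k => if n < N then 0 else A n k) (by positivity)
    (fun n k => by split_ifs; exacts [le_rfl, hA n k])
    (fun n k => by
      split_ifs with h
      · positivity
      · exact hN₀ n k (by omega))
  have : T - (truncation N).comp T = R := by
    ext x n
    rw [hRT]
    by_cases h : n < N
    · simp [truncation_apply, h]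
    · simp [truncation_apply, h, hT]
  rw [dist_comm, dist_eq_norm, this]
  refine hR.trans_lt ?_
  have : ε / (2 * C) * C = ε / 2 := by field_simp
  linarith

/-! ### Moments of Carleson measures -/

lemma integrableOn_pow_Ico (ν : Measure ℝ) [IsFiniteMeasure ν] (m : ℕ) :
    IntegrableOn (fun t : ℝ => t ^ m) (Set.Ico 0 1) ν := by
  refine Measure.integrableOn_of_bounded (M := 1) (measure_ne_top _ _)
    (by fun_prop) ?_
  filter_upwards [ae_restrict_mem measurableSet_Ico] with t ht
  rw [norm_pow, Real.norm_of_nonneg ht.1]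
  exact pow_le_one₀ ht.1 ht.2.le

/-- The moments of an `s`-Carleson measure decay like `(m + 1) ^ (-s)`, with a constant
proportional to the Carleson constant. The interval `[0,1)` is cut into `m + 1` pieces of equal
length, and `t ^ m ≤ exp (1 - j)` on the `j`-th piece counted from `1`. -/
lemma exists_moment_le {s : ℝ} (hs2 : s < 2) :
    ∃ D : ℝ, 0 < D ∧ ∀ (ν : Measure ℝ) [IsFiniteMeasure ν] (C : ℝ), 0 ≤ C →
      (∀ t ∈ Set.Ico (0 : ℝ) 1, ν.real (Set.Ico t 1) ≤ C * (1 - t) ^ s) →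
      ∀ m : ℕ, ∫ t in Set.Ico (0 : ℝ) 1, t ^ m ∂ν ≤ C * D * ((m : ℝ) + 1) ^ (-s) := by
  set g : ℕ → ℝ := fun j => Real.exp (1 - j) * ((j : ℝ) + 1) ^ s with hg
  have hg0 : ∀ j, 0 < g j := fun j => by positivity
  have hsum : Summable g := by
    have h1 := Real.summable_pow_mul_exp_neg_nat_mul 2 one_pos
    have h2 := ((summable_nat_add_iff 1).mpr h1).mul_left (Real.exp 2)
    refine Summable.of_nonneg_of_le (fun j => (hg0 j).le) (fun j => ?_) h2
    have h3 : ((j : ℝ) + 1) ^ s ≤ ((j : ℝ) + 1) ^ 2 := by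
      rw [← Real.rpow_two]
      exact Real.rpow_le_rpow_of_exponent_le (by simp) hs2.le
    have h4 : Real.exp (1 - j) = Real.exp 2 * Real.exp (-1 * ((j + 1 : ℕ) : ℝ)) := by
      rw [← Real.exp_add]; congr 1; push_cast; ring
    simp only [hg]
    rw [h4]
    push_cast
    calc _ ≤ Real.exp 2 * Real.exp (-1 * ((j : ℝ) + 1)) * ((j : ℝ) + 1) ^ 2 := by gcongr
      _ = _ := by ring
  refine ⟨∑' j, g j, hsum.tsum_pos (fun j => (hg0 j).le) 0 (hg0 0), fun ν _ C hC hν m => ?_⟩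
  have hM : (0 : ℝ) < (m : ℝ) + 1 := by positivity
  set a : ℕ → ℝ := fun j => 1 - ((j : ℝ) + 1) / ((m : ℝ) + 1) with ha
  have ha01 : ∀ j ∈ Finset.range (m + 1), a j ∈ Set.Ico (0 : ℝ) 1 := by
    intro j hj
    have hj' : (j : ℝ) + 1 ≤ (m : ℝ) + 1 := by
      have := Finset.mem_range.mp hj
      exact_mod_cast this
    refine ⟨?_, ?_⟩
    · simp only [ha, sub_nonneg]; rw [div_le_one hM]; exact hj'
    · simp only [ha]
      have : 0 < ((j : ℝ) + 1) / ((m : ℝ) + 1) := by positivity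
      linarith
  have hpt : ∀ t ∈ Set.Ico (0 : ℝ) 1, t ^ m ≤ ∑ j ∈ Finset.range (m + 1),
      (Set.Ico (a j) 1).indicator (fun _ => Real.exp (1 - j)) t := by
    intro t ht
    -- `j + 1` is the integer part, rounded up, of `(m + 1) (1 - t)`
    obtain ⟨j, hj⟩ : ∃ j, ⌈((m : ℝ) + 1) * (1 - t)⌉₊ = j + 1 := by
      refine Nat.exists_eq_succ_of_ne_zero (Nat.ceil_pos.mpr ?_).ne'
      exact mul_pos hM (by linarith [ht.2])
    have hj1 : (j : ℝ) < ((m : ℝ) + 1) * (1 - t) := by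
      refine Nat.lt_ceil.mp ?_
      omega
    have hj2 : ((m : ℝ) + 1) * (1 - t) ≤ (j : ℝ) + 1 := by
      have := Nat.le_ceil (((m : ℝ) + 1) * (1 - t))
      rw [hj] at this
      exact_mod_cast this
    have hjm : j < m + 1 := by
      have : (j : ℝ) < ((m + 1 : ℕ) : ℝ) := by
        push_cast
        nlinarith [ht.1]
      exact_mod_cast this
    have htj : t ∈ Set.Ico (a j) 1 := by
      refine ⟨?_, ht.2⟩
      simp only [ha]
      rw [sub_le_comm, le_div_iff₀ hM]
      linarith
    calc t ^ m ≤ Real.exp (t - 1) ^ m := by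
          have := Real.add_one_le_exp (t - 1)
          exact pow_le_pow_left₀ ht.1 (by linarith) m
      _ = Real.exp (m * (t - 1)) := by rw [← Real.exp_nat_mul]
      _ ≤ Real.exp (1 - j) := by
          apply Real.exp_le_exp.mpr
          nlinarith [ht.1]
      _ = (Set.Ico (a j) 1).indicator (fun _ => Real.exp (1 - j)) t := by
          rw [Set.indicator_of_mem htj]
      _ ≤ _ := Finset.single_le_sum
          (f := fun j : ℕ => (Set.Ico (a j) 1).indicator (fun _ => Real.exp (1 - (j : ℝ))) t)
          (fun i _ => Set.indicator_nonneg (fun _ _ => (Real.exp_pos _).le) _)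
          (Finset.mem_range.mpr hjm)
  have hint : ∀ j ∈ Finset.range (m + 1), Integrable
      ((Set.Ico (a j) 1).indicator (fun _ : ℝ => Real.exp (1 - j)))
      (ν.restrict (Set.Ico (0 : ℝ) 1)) :=
    fun j _ => (integrable_const _).indicator measurableSet_Ico
  calc ∫ t in Set.Ico (0 : ℝ) 1, t ^ m ∂ν
      ≤ ∫ t in Set.Ico (0 : ℝ) 1, ∑ j ∈ Finset.range (m + 1),
          (Set.Ico (a j) 1).indicator (fun _ => Real.exp (1 - j)) t ∂ν :=
        setIntegral_mono_on (integrableOn_pow_Ico ν m) (integrable_finsetSum _ hint)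
          measurableSet_Ico hpt
    _ = ∑ j ∈ Finset.range (m + 1), Real.exp (1 - j) * ν.real (Set.Ico (a j) 1) := by
        rw [integral_finsetSum _ hint]
        refine Finset.sum_congr rfl fun j hj => ?_
        rw [setIntegral_indicator measurableSet_Ico, setIntegral_const,
          Set.inter_eq_self_of_subset_right (Set.Ico_subset_Ico_left (ha01 j hj).1), smul_eq_mul,
          mul_comm]
    _ ≤ ∑ j ∈ Finset.range (m + 1), C * ((m : ℝ) + 1) ^ (-s) * g j := by
        refine Finset.sum_le_sum fun j hj => ?_
        have h1 := hν (a j) (ha01 j hj)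
        have h2 : (1 - a j) ^ s = ((m : ℝ) + 1) ^ (-s) * ((j : ℝ) + 1) ^ s := by
          simp only [ha, sub_sub_cancel]
          rw [Real.div_rpow (by positivity) hM.le, Real.rpow_neg hM.le]
          field_simp
        rw [h2] at h1
        calc _ ≤ Real.exp (1 - j) * (C * (((m : ℝ) + 1) ^ (-s) * ((j : ℝ) + 1) ^ s)) := by gcongr
          _ = _ := by simp only [hg]; ring
    _ ≤ C * ((m : ℝ) + 1) ^ (-s) * ∑' j, g j := by
        rw [← Finset.mul_sum]
        gcongr
        exact hsum.sum_le_tsum _ (fun j _ => (hg0 j).le)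
    _ = _ := by ring

/-- The moments of a vanishing `s`-Carleson measure are `o((m + 1) ^ (-s))`: the part of `μ` away
from `1` contributes exponentially decaying moments, and the part near `1` is an `s`-Carleson
measure with a small constant. -/
lemma moment_eventually_le {s : ℝ} (hs0 : 0 < s) (hs2 : s < 2) (μ : Measure ℝ) [IsFiniteMeasure μ]
    (hμ : Filter.Tendsto (fun t : ℝ => μ.real (Set.Ico t 1) / (1 - t) ^ s)
      (nhdsWithin 1 (Set.Iio 1)) (nhds 0)) {ε : ℝ} (hε : 0 < ε) :
    ∃ N : ℕ, ∀ m : ℕ, N ≤ m →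
      ∫ t in Set.Ico (0 : ℝ) 1, t ^ m ∂μ ≤ ε * ((m : ℝ) + 1) ^ (-s) := by
  obtain ⟨D, hD, hDν⟩ := exists_moment_le hs2
  have hev := hμ.eventually (gt_mem_nhds (show 0 < ε / (2 * D) by positivity))
  obtain ⟨l, hl, hl'⟩ := (mem_nhdsLT_iff_exists_Ioo_subset).mp hev
  obtain ⟨r, hr, hr1⟩ := exists_between (max_lt hl zero_lt_one : max l 0 < 1)
  have hr0 : 0 < r := (le_max_right _ _).trans_lt hr
  have hlr : l < r := (le_max_left _ _).trans_lt hr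
  have hnear : ∀ t, r ≤ t → t < 1 → μ.real (Set.Ico t 1) ≤ ε / (2 * D) * (1 - t) ^ s := by
    intro t h1 h2
    have := hl' ⟨hlr.trans_le h1, h2⟩
    have h3 : 0 < (1 - t) ^ s := Real.rpow_pos_of_pos (by linarith) _
    exact ((div_lt_iff₀ h3).mp this).le
  have hν : ∀ t ∈ Set.Ico (0 : ℝ) 1,
      (μ.restrict (Set.Ico r 1)).real (Set.Ico t 1) ≤ ε / (2 * D) * (1 - t) ^ s := by
    intro t ht
    rw [measureReal_restrict_apply measurableSet_Ico, Set.Ico_inter_Ico, min_self]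
    rcases le_total r t with h | h
    · rw [sup_of_le_left h]; exact hnear t h ht.2
    · rw [sup_of_le_right h]
      refine (hnear r le_rfl hr1).trans ?_
      have : 0 ≤ 1 - r := by linarith
      gcongr
  have hmom := hDν (μ.restrict (Set.Ico r 1)) (ε / (2 * D)) (by positivity) hν
  have hfar : Filter.Tendsto (fun m : ℕ => 4 * μ.real Set.univ * ((m : ℝ) ^ 2 * r ^ m))
      Filter.atTop (nhds 0) := by
    simpa using (tendsto_pow_const_mul_const_pow_of_abs_lt_one 2
      (by rwa [abs_of_pos hr0])).const_mul (4 * μ.real Set.univ)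
  obtain ⟨N, hN⟩ := Filter.eventually_atTop.mp
    (hfar.eventually (gt_mem_nhds (show 0 < ε / 2 by positivity)))
  refine ⟨max N 1, fun m hm => ?_⟩
  have hm1 : (1 : ℝ) ≤ m := by exact_mod_cast (le_max_right N 1).trans hm
  have hM : (0 : ℝ) < (m : ℝ) + 1 := by positivity
  have hsplit : ∫ t in Set.Ico (0 : ℝ) 1, t ^ m ∂μ =
      (∫ t in Set.Ico (0 : ℝ) r, t ^ m ∂μ) +
        ∫ t in Set.Ico (0 : ℝ) 1, t ^ m ∂(μ.restrict (Set.Ico r 1)) := by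
    have hI := integrableOn_pow_Ico μ m
    rw [Measure.restrict_restrict measurableSet_Ico, Set.Ico_inter_Ico, min_self,
      sup_of_le_right hr0.le, ← Set.Ico_union_Ico_eq_Ico hr0.le hr1.le]
    refine setIntegral_union ?_ measurableSet_Ico (hI.mono_set ?_) (hI.mono_set ?_)
    · exact Set.Ico_disjoint_Ico_same
    · exact Set.Ico_subset_Ico_right hr1.le
    · exact Set.Ico_subset_Ico_left hr0.le
  have h1 : ∫ t in Set.Ico (0 : ℝ) r, t ^ m ∂μ ≤ μ.real Set.univ * r ^ m := by
    calc ∫ t in Set.Ico (0 : ℝ) r, t ^ m ∂μ ≤ ∫ t in Set.Ico (0 : ℝ) r, r ^ m ∂μ :=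
          setIntegral_mono_on
            ((integrableOn_pow_Ico μ m).mono_set (Set.Ico_subset_Ico_right hr1.le))
            (integrable_const _) measurableSet_Ico
            (fun t ht => pow_le_pow_left₀ ht.1 ht.2.le m)
      _ = μ.real (Set.Ico 0 r) * r ^ m := by rw [setIntegral_const, smul_eq_mul]
      _ ≤ _ := mul_le_mul_of_nonneg_right (measureReal_mono (Set.subset_univ _)) (by positivity)
  have h2 : ((m : ℝ) + 1) ^ s ≤ 4 * (m : ℝ) ^ 2 := by
    calc ((m : ℝ) + 1) ^ s ≤ ((m : ℝ) + 1) ^ (2 : ℝ) :=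
          Real.rpow_le_rpow_of_exponent_le (by linarith) hs2.le
      _ = ((m : ℝ) + 1) ^ 2 := Real.rpow_two _
      _ ≤ _ := by nlinarith
  have h3 := hN m ((le_max_left N 1).trans hm)
  have h4 : μ.real Set.univ * r ^ m ≤ ε / 2 * ((m : ℝ) + 1) ^ (-s) := by
    rw [Real.rpow_neg hM.le, ← div_eq_mul_inv, le_div_iff₀ (by positivity)]
    calc _ ≤ μ.real Set.univ * r ^ m * (4 * (m : ℝ) ^ 2) := by gcongr
      _ = 4 * μ.real Set.univ * ((m : ℝ) ^ 2 * r ^ m) := by ring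
      _ ≤ _ := h3.le
  have h5 := hmom m
  have h6 : ε / (2 * D) * D = ε / 2 := by field_simp
  rw [h6] at h5
  rw [hsplit]
  linarith

/-! ### The necessary condition -/

/-- The normalized indicator of the block `[N, 2N)`, a unit vector of `ℓ²` for `N ≥ 1` (and `0` for
`N = 0`). -/
noncomputable def blockVec (N : ℕ) : lp (fun _ : ℕ => ℂ) 2 :=
  ∑ k ∈ Finset.Ico N (2 * N), lp.single 2 k (((Real.sqrt N)⁻¹ : ℝ) : ℂ)

lemma blockVec_apply (N k : ℕ) :
    blockVec N k = if k ∈ Finset.Ico N (2 * N) then (((Real.sqrt N)⁻¹ : ℝ) : ℂ) else 0 := by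
  simp only [blockVec, lp.coeFn_sum, Finset.sum_apply, lp.coeFn_single, Pi.single_apply]
  rw [Finset.sum_ite_eq]

lemma norm_blockVec_le (N : ℕ) : ‖blockVec N‖ ≤ 1 := by
  have h := lp.norm_sum_single (p := 2) (E := fun _ : ℕ => ℂ) (by norm_num)
    (fun _ => (((Real.sqrt N)⁻¹ : ℝ) : ℂ)) (Finset.Ico N (2 * N))
  have h' : ‖blockVec N‖ ^ 2 ≤ 1 := by
    have e : ‖blockVec N‖ ^ 2 = ∑ k ∈ Finset.Ico N (2 * N), ‖(((Real.sqrt N)⁻¹ : ℝ) : ℂ)‖ ^ 2 := by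
      simpa [blockVec] using h
    rw [e, Finset.sum_const, Nat.card_Ico, Complex.norm_real, Real.norm_of_nonneg (by positivity),
      inv_pow, Real.sq_sqrt (by positivity), show 2 * N - N = N by omega, nsmul_eq_mul]
    exact mul_inv_le_one
  exact (sq_le_one_iff₀ (norm_nonneg _)).mp h'

lemma inner_blockVec (N : ℕ) (y : lp (fun _ : ℕ => ℂ) 2) :
    inner ℂ (blockVec N) y = ∑ k ∈ Finset.Ico N (2 * N), (((Real.sqrt N)⁻¹ : ℝ) : ℂ) * y k := by
  rw [blockVec, sum_inner]
  refine Finset.sum_congr rfl fun k _ => ?_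
  rw [lp.inner_single_left]
  simp [mul_comm]

lemma tendsto_inner_blockVec (y : lp (fun _ : ℕ => ℂ) 2) :
    Filter.Tendsto (fun N => ‖(inner ℂ (blockVec N) y : ℂ)‖) Filter.atTop (nhds 0) := by
  have hs : Summable fun k => ‖y k‖ ^ 2 := by
    have := (lp.memℓp y).summable (by norm_num)
    simpa using this
  have ht : Filter.Tendsto
      (fun N => Real.sqrt (∑' k, ‖y k‖ ^ 2 - ∑ k ∈ Finset.range N, ‖y k‖ ^ 2))
      Filter.atTop (nhds 0) := by
    have := (hs.hasSum.tendsto_sum_nat.const_sub (∑' k, ‖y k‖ ^ 2)).sqrt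
    simpa using this
  refine squeeze_zero (fun _ => norm_nonneg _) (fun N => ?_) ht
  apply Real.le_sqrt_of_sq_le
  have h1 : ‖(inner ℂ (blockVec N) y : ℂ)‖ ≤
      ∑ k ∈ Finset.Ico N (2 * N), (Real.sqrt N)⁻¹ * ‖y k‖ := by
    rw [inner_blockVec]
    refine (norm_sum_le _ _).trans (le_of_eq (Finset.sum_congr rfl fun k _ => ?_))
    rw [norm_mul, Complex.norm_real, Real.norm_of_nonneg (by positivity)]
  calc ‖(inner ℂ (blockVec N) y : ℂ)‖ ^ 2
      ≤ (∑ k ∈ Finset.Ico N (2 * N), (Real.sqrt N)⁻¹ * ‖y k‖) ^ 2 := by gcongr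
    _ ≤ (∑ k ∈ Finset.Ico N (2 * N), ((Real.sqrt N)⁻¹) ^ 2) *
          ∑ k ∈ Finset.Ico N (2 * N), ‖y k‖ ^ 2 := Finset.sum_mul_sq_le_sq_mul_sq _ _ _
    _ ≤ 1 * ∑ k ∈ Finset.Ico N (2 * N), ‖y k‖ ^ 2 := by
        gcongr
        rw [Finset.sum_const, Nat.card_Ico, inv_pow, Real.sq_sqrt (by positivity),
          show 2 * N - N = N by omega, nsmul_eq_mul]
        exact mul_inv_le_one
    _ ≤ _ := by
        rw [one_mul, Finset.sum_Ico_eq_sub _ (by omega : N ≤ 2 * N)]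
        gcongr
        exact hs.sum_le_tsum _ (fun _ _ => by positivity)

/-- The block vectors tend weakly to `0`, and this convergence is uniform on the relatively compact
image of the unit ball. -/
lemma tendsto_inner_blockVec_apply (T : lp (fun _ : ℕ => ℂ) 2 →L[ℂ] lp (fun _ : ℕ => ℂ) 2)
    (hT : IsCompactOperator T) :
    Filter.Tendsto (fun N => ‖(inner ℂ (blockVec N) (T (blockVec N)) : ℂ)‖)
      Filter.atTop (nhds 0) := by
  have hK : IsCompact (closure (T '' Metric.closedBall 0 1)) :=
    IsCompactOperator.isCompact_closure_image_closedBall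
      (f := (T : lp (fun _ : ℕ => ℂ) 2 →ₗ[ℂ] lp (fun _ : ℕ => ℂ) 2)) hT 1
  rw [Metric.tendsto_atTop]
  intro ε hε
  obtain ⟨t, htf, ht⟩ := Metric.totallyBounded_iff.mp hK.totallyBounded (ε / 2) (by positivity)
  have hev : ∀ᶠ N in Filter.atTop, ∀ y ∈ t, ‖(inner ℂ (blockVec N) y : ℂ)‖ < ε / 2 :=
    (Set.Finite.eventually_all htf).mpr fun y _ =>
      (tendsto_inner_blockVec y).eventually (gt_mem_nhds (by positivity))
  obtain ⟨N₀, hN₀⟩ := Filter.eventually_atTop.mp hev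
  refine ⟨N₀, fun N hN => ?_⟩
  rw [Real.dist_eq, sub_zero, abs_of_nonneg (norm_nonneg _)]
  have hmem : T (blockVec N) ∈ closure (T '' Metric.closedBall 0 1) :=
    subset_closure ⟨blockVec N, by simpa using norm_blockVec_le N, rfl⟩
  obtain ⟨y, hy, hyb⟩ := Set.mem_iUnion₂.mp (ht hmem)
  have h1 : (inner ℂ (blockVec N) (T (blockVec N)) : ℂ) =
      inner ℂ (blockVec N) (T (blockVec N) - y) + inner ℂ (blockVec N) y := by
    rw [← inner_add_right, sub_add_cancel]
  have h2 : ‖(inner ℂ (blockVec N) (T (blockVec N) - y) : ℂ)‖ ≤ ε / 2 := by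
    refine (norm_inner_le_norm _ _).trans ?_
    rw [mem_ball_iff_norm] at hyb
    calc _ ≤ 1 * ‖T (blockVec N) - y‖ := by gcongr; exact norm_blockVec_le N
      _ ≤ _ := by linarith
  rw [h1]
  refine (norm_add_le _ _).trans_lt ?_
  linarith [hN₀ N hN y hy]

/-- On the block `[N, 2N)` the power `(n + θ) ^ p` is at least a constant multiple of `N ^ p`,
whatever the sign of `p`. -/
lemma exists_block_rpow_ge {θ : ℝ} (hθ : 0 < θ) (p : ℝ) :
    ∃ c : ℝ, 0 < c ∧ ∀ N n : ℕ, 1 ≤ N → n ∈ Finset.Ico N (2 * N) →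
      c * (N : ℝ) ^ p ≤ ((n : ℝ) + θ) ^ p := by
  refine ⟨min 1 ((2 + θ) ^ p), by positivity, fun N n hN hn => ?_⟩
  rw [Finset.mem_Ico] at hn
  have hN' : (1 : ℝ) ≤ N := by exact_mod_cast hN
  have h1 : (N : ℝ) ≤ n := by exact_mod_cast hn.1
  have h2 : (n : ℝ) ≤ 2 * N := by exact_mod_cast hn.2.le
  rcases le_total 0 p with hp | hp
  · calc _ ≤ 1 * (N : ℝ) ^ p := by gcongr; exact min_le_left _ _
      _ ≤ _ := by
        rw [one_mul]
        exact Real.rpow_le_rpow (by positivity) (by linarith) hp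
  · calc _ ≤ (2 + θ) ^ p * (N : ℝ) ^ p := by gcongr; exact min_le_right _ _
      _ = ((2 + θ) * N) ^ p := by rw [Real.mul_rpow (by positivity) (by positivity)]
      _ ≤ _ := Real.rpow_le_rpow_of_nonpos (by positivity) (by nlinarith) hp

/-- `t ^ m` is bounded below on `[1 - 1/N, 1)` when `m = O(N)`. -/
lemma measure_tail_le_moment (μ : Measure ℝ) [IsFiniteMeasure μ] {N m : ℕ} (hN : 2 ≤ N)
    (hm : m ≤ 4 * N) :
    Real.exp (-8) * μ.real (Set.Ico (1 - 1 / (N : ℝ)) 1) ≤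
      ∫ t in Set.Ico (0 : ℝ) 1, t ^ m ∂μ := by
  have hN' : (2 : ℝ) ≤ N := by exact_mod_cast hN
  have hinv : 1 / (N : ℝ) ≤ 1 / 2 := one_div_le_one_div_of_le (by norm_num) hN'
  set r : ℝ := 1 - 1 / (N : ℝ) with hr
  have hr0 : 0 < r := by linarith
  have hr1 : r ≤ 1 := by
    have : 0 ≤ 1 / (N : ℝ) := by positivity
    linarith
  have hpow : Real.exp (-8) ≤ r ^ m := by
    refine le_trans ?_ (pow_le_pow_of_le_one hr0.le hr1 hm)
    rw [← Real.exp_log hr0, ← Real.exp_nat_mul]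
    apply Real.exp_le_exp.mpr
    have h1 := Real.one_sub_inv_le_log_of_pos hr0
    have h2 : -2 / (N : ℝ) ≤ 1 - r⁻¹ := by
      have h3 : r⁻¹ ≤ 1 + 2 / (N : ℝ) := by
        rw [inv_le_iff_one_le_mul₀ hr0, hr]
        have : 0 ≤ 1 / (N : ℝ) := by positivity
        rw [show 2 / (N : ℝ) = 2 * (1 / N) by ring]
        nlinarith
      rw [neg_div]; linarith
    calc (-8 : ℝ) = ((4 * N : ℕ) : ℝ) * (-2 / N) := by push_cast; field_simp; norm_num
      _ ≤ _ := by gcongr; linarith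
  have hI := integrableOn_pow_Ico μ m
  calc Real.exp (-8) * μ.real (Set.Ico r 1) = ∫ t in Set.Ico r 1, Real.exp (-8) ∂μ := by
        rw [setIntegral_const, smul_eq_mul, mul_comm]
    _ ≤ ∫ t in Set.Ico r 1, t ^ m ∂μ := by
        refine setIntegral_mono_on (integrable_const _)
          (hI.mono_set (Set.Ico_subset_Ico_left hr0.le)) measurableSet_Ico fun t ht => ?_
        exact hpow.trans (pow_le_pow_left₀ hr0.le ht.1 m)
    _ ≤ _ := by
        refine setIntegral_mono_set hI ?_ (Set.Ico_subset_Ico_left hr0.le).eventuallyLE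
        filter_upwards [ae_restrict_mem measurableSet_Ico] with t ht
        exact pow_nonneg ht.1 m

/-- Testing the operator on the block vectors bounds the measure of `[1 - 1/N, 1)`. -/
lemma tendsto_tail_of_compact {θ α β : ℝ} (hθ : 0 < θ) (μ : Measure ℝ) [IsFiniteMeasure μ]
    (T : lp (fun _ : ℕ => ℂ) 2 →L[ℂ] lp (fun _ : ℕ => ℂ) 2) (hT : IsCompactOperator T)
    (hTA : ∀ (x : lp (fun _ : ℕ => ℂ) 2) (n : ℕ),
        T x n = ∑' k : ℕ, (((∫ t in Set.Ico (0 : ℝ) 1, t ^ (k + n) ∂μ) *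
            ((n : ℝ) + θ) ^ (β / 2) * ((k : ℝ) + θ) ^ (-(α / 2)) : ℝ) : ℂ) * x k) :
    Filter.Tendsto (fun N : ℕ => (N : ℝ) ^ (1 + (β - α) / 2) *
      μ.real (Set.Ico (1 - 1 / (N : ℝ)) 1)) Filter.atTop (nhds 0) := by
  obtain ⟨c₁, hc₁, h₁⟩ := exists_block_rpow_ge hθ (β / 2)
  obtain ⟨c₂, hc₂, h₂⟩ := exists_block_rpow_ge hθ (-(α / 2))
  set A : ℕ → ℕ → ℝ := fun n k => (∫ t in Set.Ico (0 : ℝ) 1, t ^ (k + n) ∂μ) *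
            ((n : ℝ) + θ) ^ (β / 2) * ((k : ℝ) + θ) ^ (-(α / 2)) with hA
  have hc : 0 < Real.exp (-8) * c₁ * c₂ := by positivity
  have hlim := (tendsto_inner_blockVec_apply T hT).const_mul (Real.exp (-8) * c₁ * c₂)⁻¹
  rw [mul_zero] at hlim
  refine squeeze_zero' (Filter.Eventually.of_forall fun N => by positivity) ?_ hlim
  filter_upwards [Filter.eventually_ge_atTop 2] with N hN
  have hN0 : (0 : ℝ) < N := by exact_mod_cast (by omega : 0 < N)
  rw [inv_mul_eq_div, le_div_iff₀ hc]
  have hin : (inner ℂ (blockVec N) (T (blockVec N)) : ℂ) =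
      ((∑ n ∈ Finset.Ico N (2 * N), ∑ k ∈ Finset.Ico N (2 * N), (N : ℝ)⁻¹ * A n k : ℝ) : ℂ) := by
    rw [inner_blockVec, Complex.ofReal_sum]
    refine Finset.sum_congr rfl fun n _ => ?_
    rw [hTA, tsum_eq_sum (s := Finset.Ico N (2 * N))
      (fun k hk => by rw [blockVec_apply, if_neg hk, mul_zero]), Complex.ofReal_sum, Finset.mul_sum]
    refine Finset.sum_congr rfl fun k hk => ?_
    rw [blockVec_apply, if_pos hk, ← Complex.ofReal_mul, ← Complex.ofReal_mul]
    congr 1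
    have hsq : (Real.sqrt N)⁻¹ * (Real.sqrt N)⁻¹ = (N : ℝ)⁻¹ := by
      rw [← mul_inv, Real.mul_self_sqrt hN0.le]
    rw [← hsq]
    ring
  rw [hin, Complex.norm_real]
  refine le_trans ?_ (Real.le_norm_self _)
  set M := μ.real (Set.Ico (1 - 1 / (N : ℝ)) 1) with hM
  have hM0 : 0 ≤ M := measureReal_nonneg
  have hentry : ∀ n ∈ Finset.Ico N (2 * N), ∀ k ∈ Finset.Ico N (2 * N),
      (N : ℝ)⁻¹ * ((Real.exp (-8) * M) * (c₁ * (N : ℝ) ^ (β / 2)) * (c₂ * (N : ℝ) ^ (-(α / 2)))) ≤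
        (N : ℝ)⁻¹ * A n k := by
    intro n hn k hk
    have hmom := measure_tail_le_moment μ hN (m := k + n) (by
      rw [Finset.mem_Ico] at hn hk; omega)
    have e1 := h₁ N n (by omega) hn
    have e2 := h₂ N k (by omega) hk
    have hmom0 := (by positivity : 0 ≤ Real.exp (-8) * M).trans hmom
    simp only [hA]
    gcongr
  calc (N : ℝ) ^ (1 + (β - α) / 2) * M * (Real.exp (-8) * c₁ * c₂)
      = ∑ n ∈ Finset.Ico N (2 * N), ∑ k ∈ Finset.Ico N (2 * N), (N : ℝ)⁻¹ *
          ((Real.exp (-8) * M) * (c₁ * (N : ℝ) ^ (β / 2)) * (c₂ * (N : ℝ) ^ (-(α / 2)))) := by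
        simp only [Finset.sum_const, Nat.card_Ico, show 2 * N - N = N by omega, nsmul_eq_mul]
        rw [show 1 + (β - α) / 2 = 1 + β / 2 + -(α / 2) by ring, Real.rpow_add hN0,
          Real.rpow_add hN0, Real.rpow_one]
        field_simp
    _ ≤ _ := Finset.sum_le_sum fun n hn => Finset.sum_le_sum fun k hk => hentry n hn k hk

/-- The vanishing condition along `t = 1 - 1/N` implies it for all `t → 1⁻`, as `[t, 1)` lies in the
next larger interval of the sequence, whose length is at most `2 (1 - t)`. -/
lemma tendsto_of_tendsto_nat {s : ℝ} (hs : 0 < s) (μ : Measure ℝ) [IsFiniteMeasure μ]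
    (h : Filter.Tendsto (fun N : ℕ => (N : ℝ) ^ s * μ.real (Set.Ico (1 - 1 / (N : ℝ)) 1))
      Filter.atTop (nhds 0)) :
    Filter.Tendsto (fun t : ℝ => μ.real (Set.Ico t 1) / (1 - t) ^ s)
      (nhdsWithin 1 (Set.Iio 1)) (nhds 0) := by
  -- `N` is the integer part of `1 / (1 - t)`, so that `1 - 1 / N ≤ t` and `1 ≤ 2 N (1 - t)`
  have hfl : Filter.Tendsto (fun t : ℝ => ⌊(1 - t)⁻¹⌋₊) (nhdsWithin 1 (Set.Iio 1)) Filter.atTop := by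
    refine tendsto_nat_floor_atTop.comp (tendsto_inv_nhdsGT_zero.comp ?_)
    refine tendsto_nhdsWithin_iff.mpr ⟨?_, ?_⟩
    · have : Filter.Tendsto (fun t : ℝ => 1 - t) (nhds 1) (nhds (1 - 1)) := by
        exact (continuous_const.sub continuous_id).tendsto 1
      rw [sub_self] at this
      exact this.mono_left nhdsWithin_le_nhds
    · filter_upwards [self_mem_nhdsWithin] with t ht
      exact Set.mem_Ioi.mpr (sub_pos.mpr (Set.mem_Iio.mp ht))
  have hlim := (h.comp hfl).const_mul (2 ^ s)
  rw [mul_zero] at hlim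
  refine squeeze_zero' ?_ ?_ hlim
  · filter_upwards [self_mem_nhdsWithin] with t ht
    have : 0 < 1 - t := sub_pos.mpr ht
    positivity
  · filter_upwards [self_mem_nhdsWithin, hfl.eventually_ge_atTop 1] with t ht hN
    have ht' : 0 < 1 - t := sub_pos.mpr ht
    simp only [Function.comp]
    set N := ⌊(1 - t)⁻¹⌋₊ with hNdef
    have hN1 : (1 : ℝ) ≤ N := by exact_mod_cast hN
    have h1 : (N : ℝ) ≤ (1 - t)⁻¹ := Nat.floor_le (by positivity)
    have h2 : (1 - t)⁻¹ < N + 1 := Nat.lt_floor_add_one _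
    have h3 : 1 - 1 / (N : ℝ) ≤ t := by
      have : 1 - t ≤ 1 / (N : ℝ) := by
        rw [le_div_iff₀ (by positivity), mul_comm, ← le_div_iff₀ ht', one_div]
        exact h1
      linarith
    have h4 : ((1 - t) ^ s)⁻¹ ≤ 2 ^ s * (N : ℝ) ^ s := by
      rw [← Real.inv_rpow ht'.le, ← Real.mul_rpow (by norm_num) (by positivity)]
      exact Real.rpow_le_rpow (by positivity) (by linarith) hs.le
    have h5 : μ.real (Set.Ico t 1) ≤ μ.real (Set.Ico (1 - 1 / (N : ℝ)) 1) :=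
      measureReal_mono (Set.Ico_subset_Ico_left h3)
    calc μ.real (Set.Ico t 1) / (1 - t) ^ s = ((1 - t) ^ s)⁻¹ * μ.real (Set.Ico t 1) := by
          rw [inv_mul_eq_div]
      _ ≤ 2 ^ s * (N : ℝ) ^ s * μ.real (Set.Ico (1 - 1 / (N : ℝ)) 1) := by gcongr
      _ = _ := by ring

/-- For a finite measure the Carleson bound away from `1` is automatic. -/
lemma exists_carleson_of_tendsto {s : ℝ} (hs : 0 < s) (μ : Measure ℝ) [IsFiniteMeasure μ]
    (h : Filter.Tendsto (fun t : ℝ => μ.real (Set.Ico t 1) / (1 - t) ^ s)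
      (nhdsWithin 1 (Set.Iio 1)) (nhds 0)) :
    ∃ C : ℝ, 0 < C ∧ ∀ t ∈ Set.Ico (0 : ℝ) 1, μ.real (Set.Ico t 1) ≤ C * (1 - t) ^ s := by
  obtain ⟨l, hl, hl'⟩ := (mem_nhdsLT_iff_exists_Ioo_subset).mp
    (h.eventually (gt_mem_nhds one_pos))
  have hl0 : 0 < 1 - l := sub_pos.mpr hl
  have hp : 0 < (1 - l) ^ s := by positivity
  refine ⟨1 + μ.real Set.univ / (1 - l) ^ s, by positivity, fun t ht => ?_⟩
  have ht' : 0 < 1 - t := sub_pos.mpr ht.2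
  have hts : 0 < (1 - t) ^ s := by positivity
  have hu : 0 ≤ μ.real Set.univ / (1 - l) ^ s := by positivity
  rcases lt_or_ge l t with hlt | hlt
  · have h1 : μ.real (Set.Ico t 1) / (1 - t) ^ s < 1 := hl' ⟨hlt, ht.2⟩
    rw [div_lt_one hts] at h1
    nlinarith
  · have h1 : (1 - l) ^ s ≤ (1 - t) ^ s := by gcongr
    have h2 : μ.real (Set.Ico t 1) ≤ μ.real Set.univ := measureReal_mono (Set.subset_univ _)
    have h3 : μ.real Set.univ ≤ μ.real Set.univ / (1 - l) ^ s * (1 - t) ^ s := by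
      rw [div_mul_eq_mul_div, le_div_iff₀ hp]
      gcongr
    nlinarith

/-- For `θ > 0`, `−1 < α < 1`, `−1 < β < 1` and a finite positive Borel
measure `μ` on `[0,1)`: `μ` is a vanishing `[1 + (β−α)/2]`-Carleson measure if and only if
the coordinate expression of the Hilbert-type operator `H_μ : F²_{θ,α} → F²_{θ,β}` on
`ℓ²(ℕ; ℂ)` is a compact continuous linear operator. -/
theorem hilbert_type_measure_operator_compact_iff_vanishing_carleson
    (θ α β : ℝ) (hθ : 0 < θ) (hα₁ : -1 < α) (hα₂ : α < 1) (hβ₁ : -1 < β) (hβ₂ : β < 1)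
    (μ : Measure ℝ) [IsFiniteMeasure μ] (hsupp : μ (Set.Ico (0 : ℝ) 1)ᶜ = 0) :
    ((∃ C₁ : ℝ, 0 < C₁ ∧ ∀ t ∈ Set.Ico (0 : ℝ) 1,
        μ (Set.Ico t 1) ≤ ENNReal.ofReal (C₁ * (1 - t) ^ (1 + (β - α) / 2))) ∧
      Filter.Tendsto (fun t : ℝ => (μ (Set.Ico t 1)).toReal / (1 - t) ^ (1 + (β - α) / 2))
        (nhdsWithin 1 (Set.Iio 1)) (nhds 0)) ↔
    (∃ T : lp (fun _ : ℕ => ℂ) 2 →L[ℂ] lp (fun _ : ℕ => ℂ) 2,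
      IsCompactOperator T ∧
      ∀ (x : lp (fun _ : ℕ => ℂ) 2) (n : ℕ),
        T x n = ∑' k : ℕ, (((∫ t in Set.Ico (0 : ℝ) 1, t ^ (k + n) ∂μ) *
            ((n : ℝ) + θ) ^ (β / 2) * ((k : ℝ) + θ) ^ (-(α / 2)) : ℝ) : ℂ) * x k) := by
  have hs0 : 0 < 1 + (β - α) / 2 := by linarith
  have hs2 : 1 + (β - α) / 2 < 2 := by linarith
  constructor
  · rintro ⟨⟨C₁, hC₁, hcar⟩, hvan⟩
    have hmom0 : ∀ m : ℕ, 0 ≤ ∫ t in Set.Ico (0 : ℝ) 1, t ^ m ∂μ := fun m =>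
      setIntegral_nonneg measurableSet_Ico fun t ht => pow_nonneg ht.1 m
    refine exists_compact_operator hθ hα₁ hα₂ hβ₁ hβ₂
      (fun n k => (∫ t in Set.Ico (0 : ℝ) 1, t ^ (k + n) ∂μ) *
            ((n : ℝ) + θ) ^ (β / 2) * ((k : ℝ) + θ) ^ (-(α / 2))) (fun n k => ?_) ?_ ?_
    · have := hmom0 (k + n)
      positivity
    · obtain ⟨D, hD, hDμ⟩ := exists_moment_le hs2
      have hb := hDμ μ C₁ hC₁.le fun t ht => by
        have : 0 < 1 - t := sub_pos.mpr ht.2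
        exact ENNReal.toReal_le_of_le_ofReal (by positivity) (hcar t ht)
      refine ⟨C₁ * D, by positivity, fun n k => ?_⟩
      have h1 := hb (k + n)
      push_cast at h1
      rw [add_comm (k : ℝ) n] at h1
      calc _ ≤ (C₁ * D * ((n : ℝ) + k + 1) ^ (-(1 + (β - α) / 2))) *
            ((n : ℝ) + θ) ^ (β / 2) * ((k : ℝ) + θ) ^ (-(α / 2)) := by gcongr
        _ = _ := by ring
    · intro ε hε
      obtain ⟨N, hN⟩ := moment_eventually_le hs0 hs2 μ hvan hε
      refine ⟨N, fun n k hn => ?_⟩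
      have h1 := hN (k + n) (by omega)
      push_cast at h1
      rw [add_comm (k : ℝ) n] at h1
      calc _ ≤ (ε * ((n : ℝ) + k + 1) ^ (-(1 + (β - α) / 2))) *
            ((n : ℝ) + θ) ^ (β / 2) * ((k : ℝ) + θ) ^ (-(α / 2)) := by gcongr
        _ = _ := by ring
  · rintro ⟨T, hT, hTA⟩
    have hvan := tendsto_of_tendsto_nat hs0 μ (tendsto_tail_of_compact hθ μ T hT hTA)
    obtain ⟨C, hC, hcar⟩ := exists_carleson_of_tendsto hs0 μ hvan
    refine ⟨⟨C, hC, fun t ht => ?_⟩, hvan⟩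
    rw [← ofReal_measureReal]
    exact ENNReal.ofReal_le_ofReal (hcar t ht)
end

section
/- Let θ > 0 and −1 < α < 1, −1 < β < 1, and let μ be a positive Borel measure on [0,1). If μ is a vanishing [1 + (β−α)/2]-Carleson measure on [0,1), then μ[n] · (n + 2θ)^{1+(β−α)/2} → 0 as n → ∞. -/
/-!
Write `s = 1 + (β - α) / 2 > 0`, `N = n + 2θ`, and `F h = μ [1 - h, 1)`.  On `[0,1)` one has
`t ^ n ≤ exp (-n (1 - t)) ≤ exp (2θ) * exp (-N (1 - t))`, so it suffices to bound the exponential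
moments.  Writing `exp (-N (1 - t)) = ∫ u in (N (1 - t), ∞), exp (-u)` and applying Tonelli's
theorem (`lintegral_exp_le`) gives
`N ^ s * ∫ exp (-N (1 - t)) dμ ≤ ∫ u in (0, ∞), exp (-u) * u ^ s * (F (u / N) / (u / N) ^ s)`.
The Carleson condition dominates the integrand by `C * exp (-u) * u ^ s`, which is integrable with
integral `C * Γ(s + 1)`, and the vanishing condition makes it tend to `0` pointwise as `N → ∞`;
dominated convergence concludes (`tendsto_exp_moment`).
-/

open MeasureTheory Filter Topology

lemma lintegral_exp_Ioi (a : ℝ) :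
    ∫⁻ u in Set.Ioi a, ENNReal.ofReal (Real.exp (-u)) = ENNReal.ofReal (Real.exp (-a)) := by
  rw [← ofReal_integral_eq_lintegral_ofReal (integrableOn_exp_neg_Ioi a)
    (Eventually.of_forall fun u => (Real.exp_pos _).le), integral_exp_neg_Ioi]

/-- Tonelli's theorem turns the exponential moment of a measure carried by `(-∞, 1)` into an
integral of its tails near `1`. -/
lemma lintegral_exp_le (ν : Measure ℝ) [IsFiniteMeasure ν] (hν : ∀ᵐ t ∂ν, t < 1)
    {N : ℝ} (hN : 0 < N) :
    ∫⁻ t, ENNReal.ofReal (Real.exp (-(N * (1 - t)))) ∂ν ≤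
      ∫⁻ u in Set.Ioi (0 : ℝ), ENNReal.ofReal (Real.exp (-u)) * ν (Set.Ici (1 - u / N)) := by
  have hmeas : MeasurableSet {p : ℝ × ℝ | N * (1 - p.1) ≤ p.2} :=
    measurableSet_le (by fun_prop) (by fun_prop)
  calc ∫⁻ t, ENNReal.ofReal (Real.exp (-(N * (1 - t)))) ∂ν
      ≤ ∫⁻ t, (∫⁻ u in Set.Ioi (0 : ℝ), {p : ℝ × ℝ | N * (1 - p.1) ≤ p.2}.indicator
          (fun p => ENNReal.ofReal (Real.exp (-p.2))) (t, u)) ∂ν := by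
        refine lintegral_mono_ae ?_
        filter_upwards [hν] with t ht
        have h0 : 0 ≤ N * (1 - t) := mul_nonneg hN.le (by linarith)
        rw [← lintegral_exp_Ioi, ← lintegral_indicator measurableSet_Ioi,
          ← lintegral_indicator measurableSet_Ioi]
        refine lintegral_mono fun u => ?_
        by_cases hu : N * (1 - t) < u
        · have hu0 : 0 < u := h0.trans_lt hu
          simp [Set.indicator, hu, hu0, hu.le]
        · simp [Set.indicator, hu]
    _ = ∫⁻ u in Set.Ioi (0 : ℝ), ∫⁻ t, {p : ℝ × ℝ | N * (1 - p.1) ≤ p.2}.indicator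
          (fun p => ENNReal.ofReal (Real.exp (-p.2))) (t, u) ∂ν := by
        refine lintegral_lintegral_swap ?_
        exact (Measurable.indicator (by fun_prop) hmeas).aemeasurable
    _ = _ := by
        refine lintegral_congr fun u => ?_
        rw [← lintegral_indicator_const measurableSet_Ici]
        refine lintegral_congr fun t => ?_
        have : N * (1 - t) ≤ u ↔ 1 - u / N ≤ t := by
          rw [sub_le_comm, le_div_iff₀ hN, mul_comm]
        simp [Set.indicator, this]

/-- If the tails `ν [1 - h, ∞)` are `O(h ^ s)` for all `h > 0` and `o(h ^ s)` as `h → 0⁺`, then the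
exponential moments of `ν` at rate `N` are `o(N ^ (-s))`. -/
lemma tendsto_exp_moment (ν : Measure ℝ) [IsFiniteMeasure ν] (hν : ∀ᵐ t ∂ν, t < 1)
    {s C : ℝ} (hs : 0 < s)
    (hC : ∀ h : ℝ, 0 < h → (ν (Set.Ici (1 - h))).toReal ≤ C * h ^ s)
    (hlim : Tendsto (fun h : ℝ => (ν (Set.Ici (1 - h))).toReal / h ^ s) (𝓝[>] 0) (𝓝 0)) :
    Tendsto (fun N : ℝ => ENNReal.ofReal (N ^ s) *
      ∫⁻ t, ENNReal.ofReal (Real.exp (-(N * (1 - t)))) ∂ν) atTop (𝓝 0) := by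
  have key : Tendsto (fun N : ℝ => ∫⁻ u in Set.Ioi (0 : ℝ),
      ENNReal.ofReal (N ^ s) * (ENNReal.ofReal (Real.exp (-u)) * ν (Set.Ici (1 - u / N))))
      atTop (𝓝 (∫⁻ u in Set.Ioi (0 : ℝ), 0)) := by
    -- after rescaling, the integrand involves only the ratio `ν [1 - h, ∞) / h ^ s` at `h = u / N`
    have heq : ∀ N : ℝ, 0 < N → ∀ u : ℝ, 0 < u →
        ENNReal.ofReal (N ^ s) * (ENNReal.ofReal (Real.exp (-u)) * ν (Set.Ici (1 - u / N))) =
        ENNReal.ofReal (Real.exp (-u) * u ^ s *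
          ((ν (Set.Ici (1 - u / N))).toReal / (u / N) ^ s)) := by
      intro N hN u hu
      have hNs := Real.rpow_pos_of_pos hN s
      have hus := Real.rpow_pos_of_pos hu s
      rw [← ENNReal.ofReal_toReal (measure_ne_top ν (Set.Ici (1 - u / N))),
        ← ENNReal.ofReal_mul (Real.exp_pos _).le, ← ENNReal.ofReal_mul hNs.le,
        ENNReal.toReal_ofReal ENNReal.toReal_nonneg, Real.div_rpow hu.le hN.le]
      congr 1
      field_simp
    refine tendsto_lintegral_filter_of_dominated_convergence
      (fun u => ENNReal.ofReal (Real.exp (-u) * u ^ s * C)) ?_ ?_ ?_ ?_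
    · filter_upwards [eventually_gt_atTop 0] with N hN
      have hmono : Monotone fun u : ℝ => ν (Set.Ici (1 - u / N)) := by
        intro u v huv
        refine measure_mono (Set.Ici_subset_Ici.2 ?_)
        have : u / N ≤ v / N := by gcongr
        linarith
      exact ((Measurable.mul (by fun_prop) hmono.measurable).const_mul _)
    · filter_upwards [eventually_gt_atTop 0] with N hN
      filter_upwards [ae_restrict_mem measurableSet_Ioi] with u hu
      have hu : 0 < u := hu
      rw [heq N hN u hu]
      have := Real.rpow_pos_of_pos (div_pos hu hN) s
      gcongr
      exact (div_le_iff₀ this).2 (hC _ (div_pos hu hN))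
    · have hint : IntegrableOn (fun u : ℝ => Real.exp (-u) * u ^ s * C) (Set.Ioi 0) := by
        have := Real.GammaIntegral_convergent (s := s + 1) (by linarith)
        simp only [add_sub_cancel_right] at this
        exact this.mul_const C
      exact hint.lintegral_lt_top.ne
    · filter_upwards [ae_restrict_mem measurableSet_Ioi] with u hu
      have hu : 0 < u := hu
      have h1 : Tendsto (fun N : ℝ => u / N) atTop (𝓝[>] 0) := by
        refine tendsto_nhdsWithin_iff.2 ⟨tendsto_const_nhds.div_atTop tendsto_id, ?_⟩
        filter_upwards [eventually_gt_atTop 0] with N hN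
        exact div_pos hu hN
      have h2 := ENNReal.tendsto_ofReal ((hlim.comp h1).const_mul (Real.exp (-u) * u ^ s))
      rw [mul_zero, ENNReal.ofReal_zero] at h2
      refine h2.congr' ?_
      filter_upwards [eventually_gt_atTop 0] with N hN
      exact (heq N hN u hu).symm
  rw [lintegral_zero] at key
  refine tendsto_of_tendsto_of_tendsto_of_le_of_le' tendsto_const_nhds key
    (Eventually.of_forall fun _ => zero_le) ?_
  filter_upwards [eventually_gt_atTop 0] with N hN
  rw [lintegral_const_mul' _ _ ENNReal.ofReal_ne_top]
  exact mul_le_mul' le_rfl (lintegral_exp_le ν hν hN)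

/-- **Lemma 2.2, second part.** For `θ > 0`, `−1 < α < 1`, `−1 < β < 1` and a
positive Borel measure `μ` on `[0,1)`: if `μ` is a vanishing `[1 + (β−α)/2]`-Carleson
measure, then `μ[n] · (n + 2θ)^{1+(β−α)/2} → 0` as `n → ∞`. -/
theorem vanishing_carleson_measure_moment_estimate
    (θ α β : ℝ) (hθ : 0 < θ) (hα₁ : -1 < α) (hα₂ : α < 1) (hβ₁ : -1 < β) (hβ₂ : β < 1)
    (μ : Measure ℝ) (hsupp : μ (Set.Ico (0 : ℝ) 1)ᶜ = 0)
    (hcar : ∃ C₁ : ℝ, 0 < C₁ ∧ ∀ t ∈ Set.Ico (0 : ℝ) 1,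
      μ (Set.Ico t 1) ≤ ENNReal.ofReal (C₁ * (1 - t) ^ (1 + (β - α) / 2)))
    (hvan : Filter.Tendsto (fun t : ℝ => (μ (Set.Ico t 1)).toReal / (1 - t) ^ (1 + (β - α) / 2))
      (nhdsWithin 1 (Set.Iio 1)) (nhds 0)) :
    Filter.Tendsto
      (fun n : ℕ => (∫ t in Set.Ico (0 : ℝ) 1, t ^ n ∂μ) * ((n : ℝ) + 2 * θ) ^ (1 + (β - α) / 2))
      Filter.atTop (nhds 0) := by
  obtain ⟨C, hC0, hC⟩ := hcar
  have hs : 0 < 1 + (β - α) / 2 := by linarith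
  set s := 1 + (β - α) / 2
  have hfin : μ (Set.Ico 0 1) < ⊤ :=
    (hC 0 (by simp)).trans_lt ENNReal.ofReal_lt_top
  set ν := μ.restrict (Set.Ico 0 1) with hν
  have : IsFiniteMeasure ν := ⟨by simpa [hν] using hfin⟩
  have hmem : ∀ᵐ t ∂ν, t ∈ Set.Ico (0 : ℝ) 1 := ae_restrict_mem measurableSet_Ico
  have htail : ∀ h : ℝ, h ≤ 1 → ν (Set.Ici (1 - h)) = μ (Set.Ico (1 - h) 1) := by
    intro h h1
    rw [hν, Measure.restrict_apply measurableSet_Ici]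
    congr 1
    ext t
    simp only [Set.mem_inter_iff, Set.mem_Ici, Set.mem_Ico]
    constructor
    · rintro ⟨a, -, b⟩
      exact ⟨a, b⟩
    · rintro ⟨a, b⟩
      exact ⟨a, by linarith, b⟩
  have hbound : ∀ h : ℝ, 0 < h → (ν (Set.Ici (1 - h))).toReal ≤ C * h ^ s := by
    intro h h0
    refine ENNReal.toReal_le_of_le_ofReal (by positivity) ?_
    rcases le_total h 1 with h1 | h1
    · rw [htail h h1]
      simpa using hC (1 - h) ⟨by linarith, by linarith⟩
    -- for `h ≥ 1` the tail is at most the total mass, which is at most `C ≤ C * h ^ s`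
    · calc ν (Set.Ici (1 - h)) ≤ μ (Set.Ico 0 1) := by
            rw [hν, Measure.restrict_apply measurableSet_Ici]
            exact measure_mono Set.inter_subset_right
        _ ≤ ENNReal.ofReal C := by simpa using hC 0 (by simp)
        _ ≤ _ := by
            refine ENNReal.ofReal_le_ofReal (le_mul_of_one_le_right hC0.le ?_)
            exact Real.one_le_rpow h1 hs.le
  have hlim : Tendsto (fun h : ℝ => (ν (Set.Ici (1 - h))).toReal / h ^ s) (𝓝[>] 0) (𝓝 0) := by
    have h1 : Tendsto (fun h : ℝ => 1 - h) (𝓝[>] 0) (𝓝[<] 1) := by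
      refine tendsto_nhdsWithin_iff.2 ⟨?_, ?_⟩
      · have : Tendsto (fun h : ℝ => 1 - h) (𝓝 0) (𝓝 (1 - 0)) :=
          (continuous_const.sub continuous_id).tendsto 0
        rw [sub_zero] at this
        exact this.mono_left nhdsWithin_le_nhds
      · filter_upwards [self_mem_nhdsWithin] with h hh
        have : 0 < h := hh
        simpa using this
    refine (hvan.comp h1).congr' ?_
    filter_upwards [Ioc_mem_nhdsGT (zero_lt_one' ℝ)] with h hh
    simp [htail h hh.2]
  have hexp := tendsto_exp_moment ν (hmem.mono fun t ht => ht.2) hs hbound hlim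
  have hN : Tendsto (fun n : ℕ => (n : ℝ) + 2 * θ) atTop atTop :=
    tendsto_atTop_add_const_right _ _ tendsto_natCast_atTop_atTop
  have hreal := (ENNReal.tendsto_toReal ENNReal.zero_ne_top).comp (hexp.comp hN)
  have hfinal := hreal.const_mul (Real.exp (2 * θ))
  simp only [ENNReal.toReal_zero, mul_zero] at hfinal
  refine squeeze_zero (fun n => ?_) (fun n => ?_) hfinal
  · refine mul_nonneg (setIntegral_nonneg measurableSet_Ico fun t ht => pow_nonneg ht.1 n) ?_
    positivity
  · have hNpos : 0 < (n : ℝ) + 2 * θ := by positivity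
    have hint : Integrable (fun t : ℝ => Real.exp (-(((n : ℝ) + 2 * θ) * (1 - t)))) ν := by
      refine Integrable.of_bound (by fun_prop) 1 ?_
      filter_upwards [hmem] with t ht
      rw [Real.norm_eq_abs, abs_of_pos (Real.exp_pos _), Real.exp_le_one_iff]
      have := mul_nonneg hNpos.le (sub_nonneg.2 ht.2.le)
      linarith
    have hle : ∫ t, t ^ n ∂ν ≤ Real.exp (2 * θ) *
        ∫ t, Real.exp (-(((n : ℝ) + 2 * θ) * (1 - t))) ∂ν := by
      rw [← integral_const_mul]
      refine integral_mono_of_nonneg ?_ (hint.const_mul _) ?_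
      · filter_upwards [hmem] with t ht using pow_nonneg ht.1 n
      · filter_upwards [hmem] with t ht
        calc t ^ n ≤ Real.exp (-(1 - t)) ^ n := by
              refine pow_le_pow_left₀ ht.1 ?_ n
              have := Real.add_one_le_exp (-(1 - t))
              linarith
          _ = Real.exp (n * (-(1 - t))) := (Real.exp_nat_mul _ n).symm
          _ ≤ Real.exp (2 * θ + -(((n : ℝ) + 2 * θ) * (1 - t))) := by
              refine Real.exp_le_exp.2 ?_
              nlinarith [mul_nonneg hθ.le ht.1]
          _ = _ := Real.exp_add _ _
    simp only [Function.comp, ENNReal.toReal_mul]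
    rw [ENNReal.toReal_ofReal (by positivity), ← integral_eq_lintegral_of_nonneg_ae
      (Eventually.of_forall fun t => (Real.exp_pos _).le) hint.aestronglyMeasurable]
    calc _ ≤ (Real.exp (2 * θ) * ∫ t, Real.exp (-(((n : ℝ) + 2 * θ) * (1 - t))) ∂ν) *
          ((n : ℝ) + 2 * θ) ^ s := by gcongr
      _ = _ := by ring
end

section
/- Let 0 < λ < 1, p > 0, and G > −1. Then there exists a decreasing sequence (a_k)_{k≥0} of nonnegative real numbers with Σ_{k≥1} k^G a_k^p < ∞ such that the sequence b_n = Σ_{k≥0} a_k / (k+n+1)^λ (n ≥ 0) satisfies Σ_{n≥1} n^G b_n^p = ∞. (Consequently, for any Banach space X_p of holomorphic functions on the unit disk in which a power series with decreasing nonnegative coefficients (a_n) belongs to X_p exactly when Σ_{n≥1} n^G a_n^p < ∞, the Hilbert-type operator sending Σ a_k z^k to Σ_n (Σ_k a_k/(k+n+1)^λ) z^n is unbounded on X_p; thus λ ≥ 1 is necessary for boundedness.) -/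
/-!
Put `c = (G + 1) / p > 0` and `s = c + 1 - lam`, and take `a k = (k + 1) ^ (-s)`.
Since `s > c`, the series `∑ k ^ G * a k ^ p` converges; since `s + lam = c + 1 > 1`, every inner
series `∑ a k / (k + N + 1) ^ lam` converges as well, so its `tsum` is a genuine sum.
Keeping only the terms `k < N` of the inner series, each of which is at least
`N ^ (-s) / (2 * N) ^ lam`, gives `b N ≥ 2 ^ (-lam) * N ^ (1 - s - lam) = 2 ^ (-lam) * N ^ (-c)`.
Hence `N ^ G * b N ^ p` dominates a multiple of `N ^ (G - c * p) = 1 / N`, and the harmonic series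
diverges.
-/

theorem summable_add_one_rpow {e : ℝ} (he : e < -1) :
    Summable (fun k : ℕ => ((k : ℝ) + 1) ^ e) := by
  have h := (summable_nat_add_iff 1).2 (Real.summable_nat_rpow.2 he)
  simpa using h

theorem hilbert_type_unbounded_on_property_star_spaces
    (lam p G : ℝ) (hlam₁ : 0 < lam) (hlam₂ : lam < 1) (hp : 0 < p) (hG : -1 < G) :
    ∃ a : ℕ → ℝ, (∀ k : ℕ, 0 ≤ a k) ∧ Antitone a ∧
      Summable (fun k : ℕ => ((k : ℝ) + 1) ^ G * a (k + 1) ^ p) ∧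
      ¬ Summable (fun n : ℕ => ((n : ℝ) + 1) ^ G *
        (∑' k : ℕ, a k / ((k : ℝ) + (n + 1) + 1) ^ lam) ^ p) := by
  obtain ⟨c, hc⟩ : ∃ c : ℝ, c = (G + 1) / p := ⟨_, rfl⟩
  have hc0 : 0 < c := by rw [hc]; exact div_pos (by linarith) hp
  have hcp : c * p = G + 1 := by rw [hc]; field_simp
  obtain ⟨s, hs⟩ : ∃ s : ℝ, s = c + 1 - lam := ⟨_, rfl⟩
  have hs0 : 0 < s := by linarith
  have anti : Antitone (fun k : ℕ => ((k : ℝ) + 1) ^ (-s)) := by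
    intro i j hij
    have : (i : ℝ) ≤ j := by exact_mod_cast hij
    exact Real.rpow_le_rpow_of_nonpos (by positivity) (by linarith) (by linarith)
  refine ⟨fun k => ((k : ℝ) + 1) ^ (-s), fun k => by positivity, anti, ?_, ?_⟩
  · have he : G - s * p < -1 := by
      have : 0 < (1 - lam) * p := mul_pos (by linarith) hp
      have : s * p = c * p + (1 - lam) * p := by rw [hs]; ring
      linarith
    refine Summable.of_nonneg_of_le (fun k => by positivity) (fun k => ?_)
      (summable_add_one_rpow he)
    have hk : (0 : ℝ) < (k : ℝ) + 1 := by positivity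
    calc ((k : ℝ) + 1) ^ G * ((((k + 1 : ℕ) : ℝ) + 1) ^ (-s)) ^ p
        ≤ ((k : ℝ) + 1) ^ G * (((k : ℝ) + 1) ^ (-s)) ^ p := by
          gcongr ?_ * ?_ ^ p
          exact anti (Nat.le_succ k)
      _ = ((k : ℝ) + 1) ^ (G - s * p) := by
          rw [← Real.rpow_mul hk.le, ← Real.rpow_add hk]
          congr 1; ring
  · intro hsum
    have key : ∀ n : ℕ, (2 : ℝ) ^ (-lam) * ((n : ℝ) + 1) ^ (-c) ≤
        ∑' k : ℕ, ((k : ℝ) + 1) ^ (-s) / ((k : ℝ) + (n + 1) + 1) ^ lam := by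
      intro n
      have hn : (0 : ℝ) < (n : ℝ) + 1 := by positivity
      have hS : Summable
          (fun k : ℕ => ((k : ℝ) + 1) ^ (-s) / ((k : ℝ) + (n + 1) + 1) ^ lam) := by
        refine Summable.of_nonneg_of_le (fun k => by positivity) (fun k => ?_)
          (summable_add_one_rpow (e := -s - lam) (by linarith))
        rw [Real.rpow_sub (by positivity)]
        gcongr
        linarith
      refine le_trans ?_ (hS.sum_le_tsum (Finset.range (n + 1)) (fun k _ => by positivity))
      have hterm : ∀ k ∈ Finset.range (n + 1), ((n : ℝ) + 1) ^ (-s) / (2 * ((n : ℝ) + 1)) ^ lam ≤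
          ((k : ℝ) + 1) ^ (-s) / ((k : ℝ) + (n + 1) + 1) ^ lam := by
        intro k hk
        have hkn : k ≤ n := Nat.lt_succ_iff.1 (Finset.mem_range.1 hk)
        have hkn' : (k : ℝ) ≤ n := by exact_mod_cast hkn
        have h1 := anti hkn
        gcongr ?_ / ?_ ^ lam
        linarith
      refine le_trans (le_of_eq ?_) (Finset.card_nsmul_le_sum _ _ _ hterm)
      have hexp : -c = 1 + -s - lam := by rw [hs]; ring
      rw [Finset.card_range, nsmul_eq_mul, hexp, Real.rpow_sub hn, Real.rpow_add hn, Real.rpow_one,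
        Real.mul_rpow (by norm_num) hn.le, Real.rpow_neg (by norm_num)]
      push_cast
      field_simp
    have hharm : Summable (fun n : ℕ => ((2 : ℝ) ^ (-lam)) ^ p * ((n : ℝ) + 1) ^ (-1 : ℝ)) := by
      refine Summable.of_nonneg_of_le (fun n => by positivity) (fun n => ?_) hsum
      have hn : (0 : ℝ) < (n : ℝ) + 1 := by positivity
      calc ((2 : ℝ) ^ (-lam)) ^ p * ((n : ℝ) + 1) ^ (-1 : ℝ)
          = ((n : ℝ) + 1) ^ G * ((2 : ℝ) ^ (-lam) * ((n : ℝ) + 1) ^ (-c)) ^ p := by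
            have hexp : (-1 : ℝ) = G + -c * p := by linarith
            rw [Real.mul_rpow (by positivity) (by positivity), ← Real.rpow_mul hn.le, hexp,
              Real.rpow_add hn]
            ring
        _ ≤ _ := by
            gcongr
            exact key n
    rw [summable_mul_left_iff (by positivity)] at hharm
    have h2 : Summable (fun n : ℕ => ((n + 1 : ℕ) : ℝ) ^ (-1 : ℝ)) := by simpa using hharm
    have h3 := Real.summable_nat_rpow.1
      ((summable_nat_add_iff (f := fun n : ℕ => (n : ℝ) ^ (-1 : ℝ)) 1).1 h2)
    exact lt_irrefl _ h3
end
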